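/- arXiv:1801.07305 — 5 statements merged into one kernel-verified Lean document; each statement's English description precedes it below -/
import Mathlib

section
/- Let R ⊂ A be a Frobenius extension of rings and let M be a left A-module. Then the following three conditions are equivalent: (1) M is a Gorenstein projective left A-module; (2) the underlying left R-module M (via restriction of scalars) is Gorenstein projective; (3) both A ⊗_R M and Hom_R(A, M) are Gorenstein projective left A-modules. -/
universe u

section Frobenius

variable {R A : Type u} [Ring R] [Ring A]

/-- A ring extension `ι : R →+* A` (an injective ring homomorphism) is a Frobenius extension
if there is an `R`-`R`-bimodule homomorphism `τ : A → R` together with dual bases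
`x i`, `y i` in `A`. -/
def IsFrobeniusExtension (ι : R →+* A) : Prop :=
  Function.Injective ι ∧
  ∃ (τ : A →+ R) (n : ℕ) (x y : Fin n → A),
    (∀ (r : R) (a : A), τ (ι r * a) = r * τ a) ∧
    (∀ (a : A) (r : R), τ (a * ι r) = τ a * r) ∧
    (∀ a : A, ∑ i, x i * ι (τ (y i * a)) = a) ∧
    (∀ a : A, ∑ i, ι (τ (a * x i)) * y i = a)

/-- The extension of scalars `A ⊗_R N` of a left `R`-module `N` along `ι : R →+* A`,
realized as the quotient of the free left `A`-module on `N` by the bilinearity and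
balancing relations.  It is a left `A`-module. -/
abbrev ExtendedTensor (ι : R →+* A) (N : Type u) [AddCommGroup N] [Module R N] : Type u :=
  (N →₀ A) ⧸ Submodule.span A
    ({x : N →₀ A | ∃ n n' : N,
        x = Finsupp.single (n + n') 1 - Finsupp.single n 1 - Finsupp.single n' 1} ∪
     {x : N →₀ A | ∃ (r : R) (n : N),
        x = Finsupp.single (r • n) 1 - Finsupp.single n (ι r)})

/-- The coinduced module `Hom_R(A, N)` of a left `R`-module `N` along `ι : R →+* A`,
where `A` is a left `R`-module via `ι`.  It is a left `A`-module via `(a • f) b = f (b * a)`. -/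
abbrev CoinducedModule (ι : R →+* A) (N : Type u) [AddCommGroup N] [Module R N] : Type u :=
  @LinearMap R R _ _ (RingHom.id R) A N _ _ (Module.compHom A ι) _

noncomputable instance CoinducedModule.instModule (ι : R →+* A) (N : Type u)
    [AddCommGroup N] [Module R N] : Module A (CoinducedModule ι N) :=
  letI : Module R A := Module.compHom A ι
  { smul := fun a f =>
      { toFun := fun b => f (b * a)
        map_add' := fun b c => by
          show f ((b + c) * a) = f (b * a) + f (c * a)
          rw [add_mul]; exact map_add f _ _
        map_smul' := fun r b => by
          show f (ι r * b * a) = r • f (b * a)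
          rw [mul_assoc]
          exact map_smul f r (b * a) }
    one_smul := fun f => LinearMap.ext fun b => by show f (b * 1) = f b; rw [mul_one]
    mul_smul := fun a a' f => LinearMap.ext fun b => by
      show f (b * (a * a')) = f (b * a * a')
      rw [mul_assoc]
    smul_zero := fun a => LinearMap.ext fun b => rfl
    smul_add := fun a f g => LinearMap.ext fun b => rfl
    add_smul := fun a a' f => LinearMap.ext fun b => by
      show f (b * (a + a')) = f (b * a) + f (b * a')
      rw [mul_add, map_add]
    zero_smul := fun f => LinearMap.ext fun b => by show f (b * 0) = 0; rw [mul_zero, map_zero] }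

end Frobenius

/-- A left `R`-module `M` is Gorenstein projective if it is a syzygy of a totally acyclic
complex of projective modules: there is an acyclic complex `⋯ → P₁ → P₀ → P₋₁ → ⋯` of
projective `R`-modules which stays acyclic after applying `Hom_R(-, Q)` for every
projective `R`-module `Q`, with `M ≅ ker (P₀ → P₋₁)`. -/
def IsGorensteinProjective (R : Type u) [Ring R] (M : ModuleCat.{u} R) : Prop :=
  ∃ (P : ℤ → ModuleCat.{u} R) (f : ∀ i : ℤ, P (i + 1) →ₗ[R] P i),
    (∀ i, Module.Projective R (P i)) ∧
    (∀ i, (f i).comp (f (i + 1)) = 0) ∧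
    (∀ i, LinearMap.range (f (i + 1)) = LinearMap.ker (f i)) ∧
    (∀ Q : ModuleCat.{u} R, Module.Projective R Q →
      ∀ (i : ℤ) (g : P (i + 1) →ₗ[R] Q), g.comp (f (i + 1)) = 0 →
        ∃ h : P i →ₗ[R] Q, h.comp (f i) = g) ∧
    Nonempty (↥M ≃ₗ[R] ↥(LinearMap.ker (f (-1))))

namespace GPAux

open CategoryTheory CategoryTheory.Abelian

section Perp

variable {R : Type u} [Ring R]

/-- `Ext^{n+1}(M, Q)` vanishes. -/
def Van (R : Type u) [Ring R] (n : ℕ) (M Q : Type u) [AddCommGroup M] [Module R M]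
    [AddCommGroup Q] [Module R Q] : Prop :=
  ∀ x : Ext (ModuleCat.of R M) (ModuleCat.of R Q) (n + 1), x = 0

variable {K B L M N Q : Type u} [AddCommGroup K] [Module R K] [AddCommGroup B] [Module R B]
  [AddCommGroup L] [Module R L] [AddCommGroup M] [Module R M] [AddCommGroup N] [Module R N]
  [AddCommGroup Q] [Module R Q]

/-- Short complex attached to two linear maps. -/
abbrev scx (i : K →ₗ[R] B) (p : B →ₗ[R] L) (h : Function.Exact i p) :
    ShortComplex (ModuleCat.{u} R) :=
  ShortComplex.mk (ModuleCat.ofHom i) (ModuleCat.ofHom p) (by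
    ext x; exact h.apply_apply_eq_zero x)

lemma scx_exact {i : K →ₗ[R] B} {p : B →ₗ[R] L} (hi : Function.Injective i)
    (h : Function.Exact i p) (hp : Function.Surjective p) : (scx i p h).ShortExact :=
  ModuleCat.shortComplex_shortExact _ h hi hp

lemma extend_of_van {i : K →ₗ[R] B} {p : B →ₗ[R] L} (hi : Function.Injective i)
    (h : Function.Exact i p) (hp : Function.Surjective p) (hv : Van R 0 L Q)
    (g : K →ₗ[R] Q) : ∃ e : B →ₗ[R] Q, e.comp i = g := by
  obtain ⟨x, hx⟩ := Ext.contravariant_sequence_exact₁ (scx_exact hi h hp) (ModuleCat.of R Q)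
    (Ext.mk₀ (ModuleCat.ofHom g)) (n₁ := 1) rfl (hv _)
  obtain ⟨y, rfl⟩ := (Ext.mk₀_bijective _ _).2 x
  rw [Ext.mk₀_comp_mk₀] at hx
  have := (Ext.mk₀_bijective _ _).1 hx
  exact ⟨y.hom, by simpa using congrArg ModuleCat.Hom.hom this⟩

lemma van_of_projective (n : ℕ) [Module.Projective R M] : Van R n M Q := fun x => by
  have := (ModuleCat.of R M).projective_of_module_projective
  exact Ext.eq_zero_of_projective x

lemma van_zero_of_extend {i : K →ₗ[R] B} {p : B →ₗ[R] L} (hi : Function.Injective i)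
    (h : Function.Exact i p) (hp : Function.Surjective p) [Module.Projective R B]
    (hv : ∀ g : K →ₗ[R] Q, ∃ e : B →ₗ[R] Q, e.comp i = g) : Van R 0 L Q := by
  intro x
  obtain ⟨y, rfl⟩ := Ext.contravariant_sequence_exact₃ (scx_exact hi h hp) (ModuleCat.of R Q) x
    (van_of_projective (R := R) (M := B) (Q := Q) 0 _) (n₀ := 0) rfl
  obtain ⟨y, rfl⟩ := (Ext.mk₀_bijective _ _).2 y
  obtain ⟨e, he⟩ := hv y.hom
  have : y = (scx i p h).f ≫ ModuleCat.ofHom e := by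
    ext1; simpa using he.symm
  rw [this, ← Ext.mk₀_comp_mk₀, ShortComplex.ShortExact.extClass_comp_assoc]

lemma van_succ {i : K →ₗ[R] B} {p : B →ₗ[R] L} (hi : Function.Injective i)
    (h : Function.Exact i p) (hp : Function.Surjective p) [Module.Projective R B] (n : ℕ)
    (hv : Van R n K Q) : Van R (n + 1) L Q := by
  intro x
  obtain ⟨y, rfl⟩ := Ext.contravariant_sequence_exact₃ (scx_exact hi h hp) (ModuleCat.of R Q) x
    (van_of_projective (R := R) (M := B) (Q := Q) _ _) (n₀ := n + 1) (by omega)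
  rw [hv y, Ext.comp_zero]

lemma van_of_succ {i : K →ₗ[R] B} {p : B →ₗ[R] L} (hi : Function.Injective i)
    (h : Function.Exact i p) (hp : Function.Surjective p) [Module.Projective R B] (n : ℕ)
    (hv : Van R (n + 1) L Q) : Van R n K Q := by
  intro x
  obtain ⟨y, rfl⟩ := Ext.contravariant_sequence_exact₁ (scx_exact hi h hp) (ModuleCat.of R Q)
    x (n₁ := n + 1 + 1) (by omega) (hv _)
  rw [van_of_projective (R := R) (M := B) (Q := Q) _ y, Ext.comp_zero]

lemma van_ext {i : K →ₗ[R] B} {p : B →ₗ[R] L} (hi : Function.Injective i)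
    (h : Function.Exact i p) (hp : Function.Surjective p) (n : ℕ)
    (hK : Van R n K Q) (hL : Van R n L Q) : Van R n B Q := by
  intro x
  obtain ⟨y, rfl⟩ := Ext.contravariant_sequence_exact₂ (scx_exact hi h hp) (ModuleCat.of R Q)
    x (hK _)
  rw [hL y, Ext.comp_zero]

lemma van_retract (s : M →ₗ[R] N) (r : N →ₗ[R] M) (hrs : ∀ m, r (s m) = m) (n : ℕ)
    (h : Van R n N Q) : Van R n M Q := by
  intro x
  have h1 : ModuleCat.ofHom s ≫ ModuleCat.ofHom r = 𝟙 (ModuleCat.of R M) := by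
    ext m; exact hrs m
  rw [← Ext.mk₀_id_comp x, ← h1, ← Ext.mk₀_comp_mk₀_assoc,
    h ((Ext.mk₀ (ModuleCat.ofHom r)).comp x (zero_add _)), Ext.comp_zero]

/-- All higher Ext into projectives vanish. -/
def Perp (R : Type u) [Ring R] (M : Type u) [AddCommGroup M] [Module R M] : Prop :=
  ∀ (Q : Type u) [AddCommGroup Q] [Module R Q], Module.Projective R Q → ∀ n, Van R n M Q

/-- Coinductive description of Gorenstein projective modules. -/
def GW (R : Type u) [Ring R] (M : Type u) [AddCommGroup M] [Module R M] : Prop :=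
  ∃ X : ModuleCat.{u} R → Prop, X (ModuleCat.of R M) ∧ ∀ N, X N → Perp R N ∧
    ∃ P : ModuleCat.{u} R, Module.Projective R P ∧ ∃ i : N →ₗ[R] P, Function.Injective i ∧
      X (ModuleCat.of R (P ⧸ LinearMap.range i))

lemma GW.perp (h : GW R M) : Perp R M := by
  obtain ⟨X, hX, H⟩ := h
  exact (H _ hX).1

lemma GW.step (h : GW R M) : ∃ P : ModuleCat.{u} R, Module.Projective R P ∧
    ∃ i : M →ₗ[R] P, Function.Injective i ∧ GW R (P ⧸ LinearMap.range i) := by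
  obtain ⟨X, hX, H⟩ := h
  obtain ⟨P, hP, i, hi, h'⟩ := (H _ hX).2
  exact ⟨P, hP, i, hi, X, h', H⟩

lemma GW.coind (X : ModuleCat.{u} R → Prop) (H : ∀ N, X N → Perp R N ∧
    ∃ P : ModuleCat.{u} R, Module.Projective R P ∧ ∃ i : N →ₗ[R] P, Function.Injective i ∧
      X (ModuleCat.of R (P ⧸ LinearMap.range i))) (hM : X (ModuleCat.of R M)) : GW R M :=
  ⟨X, hM, H⟩

lemma GW.of_equiv (e : M ≃ₗ[R] N) (h : GW R N) : GW R M := by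
  refine GW.coind (fun T => ∃ T' : ModuleCat.{u} R, GW R T' ∧ Nonempty (T ≃ₗ[R] T')) ?_
    ⟨ModuleCat.of R N, h, ⟨e⟩⟩
  rintro T ⟨T', hT, ⟨e⟩⟩
  refine ⟨fun Q _ _ hQ n => van_retract e.toLinearMap e.symm.toLinearMap (by simp) n
    (hT.perp Q hQ n), ?_⟩
  obtain ⟨P, hP, i, hi, hL⟩ := hT.step
  refine ⟨P, hP, i.comp e.toLinearMap, hi.comp e.injective, ModuleCat.of R _, hL, ⟨?_⟩⟩
  exact Submodule.quotEquivOfEq _ _ (by rw [LinearMap.range_comp]; simp)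

/-- Extension closure. -/
lemma GW.ext {i : K →ₗ[R] B} {p : B →ₗ[R] L} (hi : Function.Injective i)
    (h : Function.Exact i p) (hp : Function.Surjective p) (hK : GW R K) (hL : GW R L) :
    GW R B := by
  refine GW.coind (fun T => ∃ (K L : ModuleCat.{u} R) (i : K →ₗ[R] T) (p : T →ₗ[R] L),
    Function.Injective i ∧ Function.Exact i p ∧ Function.Surjective p ∧ GW R K ∧ GW R L) ?_
    ⟨ModuleCat.of R K, ModuleCat.of R L, i, p, hi, h, hp, hK, hL⟩
  clear! K L B
  rintro B ⟨K, L, i, p, hi, h, hp, hK, hL⟩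
  refine ⟨fun Q _ _ hQ n => van_ext hi h hp n (hK.perp Q hQ n) (hL.perp Q hQ n), ?_⟩
  obtain ⟨P₁, hP₁, i₁, hi₁, h₁⟩ := hK.step
  obtain ⟨P₂, hP₂, i₂, hi₂, h₂⟩ := hL.step
  obtain ⟨u, hu⟩ := extend_of_van hi h hp (hL.perp P₁ hP₁ 0) i₁
  have hu' : ∀ k, u (i k) = i₁ k := fun k => LinearMap.congr_fun hu k
  have hpi : ∀ k, p (i k) = 0 := h.apply_apply_eq_zero
  let j : B →ₗ[R] P₁ × P₂ := u.prod (i₂.comp p)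
  have hj : ∀ b, j b = (u b, i₂ (p b)) := fun _ => rfl
  refine ⟨ModuleCat.of R (P₁ × P₂), inferInstanceAs (Module.Projective R (P₁ × P₂)), j, ?_,
    ModuleCat.of R (P₁ ⧸ LinearMap.range i₁), ModuleCat.of R (P₂ ⧸ LinearMap.range i₂),
    Submodule.mapQ (LinearMap.range i₁) (LinearMap.range j) (LinearMap.inl R P₁ P₂) ?_,
    Submodule.mapQ (LinearMap.range j) (LinearMap.range i₂) (LinearMap.snd R P₁ P₂) ?_,
    ?_, ?_, ?_, h₁, h₂⟩
  · rw [← LinearMap.ker_eq_bot, LinearMap.ker_eq_bot']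
    intro b hb
    rw [hj, Prod.mk_eq_zero] at hb
    have h2 : p b = 0 := hi₂ (by rw [hb.2, map_zero])
    obtain ⟨k, rfl⟩ := (h b).1 h2
    have h1 := hb.1
    rw [hu'] at h1
    rw [hi₁ (h1.trans (map_zero i₁).symm), map_zero]
  · rintro _ ⟨k, rfl⟩
    exact ⟨i k, by simp [hj, hu', hpi]⟩
  · rintro _ ⟨b, rfl⟩
    exact ⟨p b, rfl⟩
  · rw [← LinearMap.ker_eq_bot, LinearMap.ker_eq_bot']
    intro x hx
    obtain ⟨x, rfl⟩ := Submodule.Quotient.mk_surjective _ x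
    erw [Submodule.mapQ_apply, Submodule.Quotient.mk_eq_zero] at hx
    obtain ⟨b, hb⟩ := hx
    rw [hj] at hb
    have hb1 : u b = x := congrArg Prod.fst hb
    have hb2 : i₂ (p b) = 0 := congrArg Prod.snd hb
    have h2 : p b = 0 := hi₂ (by rw [hb2, map_zero])
    obtain ⟨k, rfl⟩ := (h b).1 h2
    erw [Submodule.Quotient.mk_eq_zero]
    exact ⟨k, by rw [← hu', hb1]⟩
  · intro x
    constructor
    · intro hx
      obtain ⟨⟨x, y⟩, rfl⟩ := Submodule.Quotient.mk_surjective _ x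
      erw [Submodule.mapQ_apply, Submodule.Quotient.mk_eq_zero] at hx
      obtain ⟨l, hl⟩ := hx
      obtain ⟨b, rfl⟩ := hp l
      refine ⟨Submodule.Quotient.mk (x - u b), ?_⟩
      erw [Submodule.mapQ_apply, Submodule.Quotient.eq]
      refine ⟨-b, ?_⟩
      have hl' : i₂ (p b) = y := hl
      rw [map_neg, hj, hl']
      ext <;> simp
    · rintro ⟨x, rfl⟩
      obtain ⟨x, rfl⟩ := Submodule.Quotient.mk_surjective _ x
      rfl
  · intro x
    obtain ⟨x, rfl⟩ := Submodule.Quotient.mk_surjective _ x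
    exact ⟨Submodule.Quotient.mk (0, x), rfl⟩


lemma GW.cok_aux {T G P : Type u} [AddCommGroup T] [Module R T] [AddCommGroup G] [Module R G]
    [AddCommGroup P] [Module R P] (s : T →ₗ[R] G) (r : G →ₗ[R] T) (hrs : ∀ m, r (s m) = m)
    (hG : GW R G) (i : G →ₗ[R] P) (hi : Function.Injective i)
    (hL : GW R (P ⧸ LinearMap.range i)) : GW R ((P ⧸ LinearMap.range (i.comp s)) × T) := by
  let a : G →ₗ[R] (P ⧸ LinearMap.range (i.comp s)) × T :=
    ((Submodule.mkQ _).comp i).prod r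
  let b : (P ⧸ LinearMap.range (i.comp s)) × T →ₗ[R] P ⧸ LinearMap.range i :=
    (Submodule.factor (LinearMap.range_comp_le_range s i)).comp (LinearMap.fst R _ _)
  have ha : ∀ g, a g = (Submodule.Quotient.mk (i g), r g) := fun _ => rfl
  have hb : ∀ p t, b (Submodule.Quotient.mk p, t) = Submodule.Quotient.mk p := fun _ _ => rfl
  refine GW.ext (i := a) (p := b) ?_ ?_ ?_ hG hL
  · rw [← LinearMap.ker_eq_bot, LinearMap.ker_eq_bot']
    intro g hg
    rw [ha, Prod.mk_eq_zero, Submodule.Quotient.mk_eq_zero] at hg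
    obtain ⟨⟨t, ht⟩, h2⟩ := hg
    have : s t = g := hi ht
    subst this
    rw [hrs] at h2
    rw [h2, map_zero]
  · rintro ⟨x, t⟩
    obtain ⟨x, rfl⟩ := Submodule.Quotient.mk_surjective _ x
    rw [hb, Submodule.Quotient.mk_eq_zero]
    constructor
    · rintro ⟨g, rfl⟩
      refine ⟨g - s (r g) + s t, ?_⟩
      rw [ha]
      ext
      · rw [Submodule.Quotient.eq]
        exact ⟨t - r g, by simp; abel⟩
      · simp [hrs]
    · rintro ⟨g, hg⟩
      rw [ha] at hg
      have := congrArg Prod.fst hg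
      rw [Submodule.Quotient.eq] at this
      obtain ⟨t', ht'⟩ := this
      refine ⟨g - s t', ?_⟩
      rw [map_sub]
      rw [LinearMap.comp_apply] at ht'
      rw [ht']; abel
  · intro x
    obtain ⟨x, rfl⟩ := Submodule.Quotient.mk_surjective _ x
    exact ⟨(Submodule.Quotient.mk x, 0), rfl⟩


/-- Closure under direct summands. -/
lemma GW.retract (s : M →ₗ[R] N) (r : N →ₗ[R] M) (hrs : ∀ m, r (s m) = m) (h : GW R N) :
    GW R M := by
  refine GW.coind (fun T => ∃ (G : ModuleCat.{u} R) (s : T →ₗ[R] G) (r : G →ₗ[R] T),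
    (∀ m, r (s m) = m) ∧ GW R G) ?_ ⟨ModuleCat.of R N, s, r, hrs, h⟩
  clear! M N
  rintro T ⟨G, s, r, hrs, hG⟩
  refine ⟨fun Q _ _ hQ n => van_retract s r hrs n (hG.perp Q hQ n), ?_⟩
  obtain ⟨P, hP, i, hi, hL⟩ := hG.step
  have hs : Function.Injective s := Function.LeftInverse.injective hrs
  refine ⟨P, hP, i.comp s, hi.comp hs,
    ModuleCat.of R ((P ⧸ LinearMap.range (i.comp s)) × T),
    LinearMap.inl R _ _, LinearMap.fst R _ _, fun _ => rfl, ?_⟩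
  exact GW.cok_aux s r hrs hG i hi hL

/-- The cokernel identification for an exact sequence. -/
noncomputable def cokEquiv {i : K →ₗ[R] B} {p : B →ₗ[R] L} (h : Function.Exact i p)
    (hp : Function.Surjective p) : (B ⧸ LinearMap.range i) ≃ₗ[R] L :=
  (Submodule.quotEquivOfEq _ _ (LinearMap.exact_iff.1 h).symm).trans
    (p.quotKerEquivOfSurjective hp)

lemma GW.cok {T G P L₁ L₂ : Type u} [AddCommGroup T] [Module R T] [AddCommGroup G] [Module R G]
    [AddCommGroup P] [Module R P] [AddCommGroup L₁] [Module R L₁] [AddCommGroup L₂] [Module R L₂]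
    (s : T →ₗ[R] G) (r : G →ₗ[R] T) (hrs : ∀ m, r (s m) = m)
    (hG : GW R G) (i : G →ₗ[R] P) (hi : Function.Injective i)
    (p₁ : P →ₗ[R] L₁) (h₁ : Function.Exact i p₁) (hp₁ : Function.Surjective p₁)
    (p₂ : P →ₗ[R] L₂) (h₂ : Function.Exact (i.comp s) p₂) (hp₂ : Function.Surjective p₂)
    (hL : GW R L₁) : GW R L₂ := by
  have := GW.cok_aux s r hrs hG i hi (GW.of_equiv (cokEquiv h₁ hp₁) hL)
  refine GW.of_equiv (cokEquiv h₂ hp₂).symm ?_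
  exact GW.retract (LinearMap.inl R _ _) (LinearMap.fst R _ _) (fun _ => rfl) this

lemma GW.of_GP (h : IsGorensteinProjective R (ModuleCat.of R M)) : GW R M := by
  obtain ⟨P, f, hP, hff, hex, hQ, ⟨e⟩⟩ := h
  have key : ∀ i, ∃ p : P (i + 1 + 1) →ₗ[R] LinearMap.ker (f i),
      Function.Surjective p ∧ ∀ x, (p x : P (i + 1)) = f (i + 1) x := by
    intro i
    refine ⟨(f (i + 1)).codRestrict _ (fun x => LinearMap.congr_fun (hff i) x), ?_,
      fun _ => rfl⟩
    rintro ⟨x, hx⟩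
    rw [← hex] at hx
    obtain ⟨y, rfl⟩ := hx
    exact ⟨y, rfl⟩
  have hperp : ∀ (n : ℕ) (i : ℤ) (Q : ModuleCat.{u} R), Module.Projective R Q →
      Van R n (LinearMap.ker (f i)) Q := by
    intro n
    induction n with
    | zero =>
      intro i Q hQ'
      obtain ⟨p, hp, hpf⟩ := key i
      obtain ⟨p', hp', hpf'⟩ := key (i + 1)
      refine van_zero_of_extend (i := (LinearMap.ker (f (i + 1))).subtype) (p := p)
        Subtype.val_injective ?_ hp ?_
      · intro x
        rw [Subtype.ext_iff, hpf]
        simp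
      · intro g
        obtain ⟨e, he⟩ := hQ Q hQ' (i + 1 + 1) (g.comp p') (by
          ext x
          have : p' (f (i + 1 + 1 + 1) x) = 0 := by
            rw [Subtype.ext_iff, hpf']
            exact LinearMap.congr_fun (hff _) x
          simp [this])
        have he' : ∀ x, e (f (i + 1 + 1) x) = g (p' x) := fun x => LinearMap.congr_fun he x
        refine ⟨e, ?_⟩
        ext x
        obtain ⟨y, rfl⟩ := hp' x
        simp [← he', hpf']
    | succ n ih =>
      intro i Q hQ'
      obtain ⟨p, hp, hpf⟩ := key i
      refine van_succ (i := (LinearMap.ker (f (i + 1))).subtype) (p := p)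
        Subtype.val_injective ?_ hp n (ih (i + 1) Q hQ')
      intro x
      rw [Subtype.ext_iff, hpf]
      simp
  refine GW.coind (fun T => ∃ i : ℤ, Nonempty (T ≃ₗ[R] LinearMap.ker (f i))) ?_ ⟨-1, ⟨e⟩⟩
  rintro T ⟨i, ⟨e⟩⟩
  refine ⟨fun Q _ _ hQ n => van_retract e.toLinearMap e.symm.toLinearMap (by simp) n
    (hperp n i (ModuleCat.of R Q) hQ), ?_⟩
  obtain ⟨j, rfl⟩ : ∃ j : ℤ, i = j + 1 := ⟨i - 1, by ring⟩
  refine ⟨P (j + 1 + 1), hP _, (Submodule.subtype _).comp e.toLinearMap,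
    Subtype.val_injective.comp e.injective, j, ⟨?_⟩⟩
  refine (Submodule.quotEquivOfEq _ (LinearMap.ker (f (j + 1))) ?_).trans
    ((f (j + 1)).quotKerEquivRange.trans (LinearEquiv.ofEq _ _ (hex j)))
  rw [LinearMap.range_comp]; simp

lemma exists_int_seq {α : Type*} (r : α → α → Prop) (hl : ∀ x, ∃ y, r y x)
    (hr : ∀ x, ∃ y, r x y) (x : α) : ∃ Z : ℤ → α, Z 0 = x ∧ ∀ i, r (Z (i + 1)) (Z i) := by
  choose l hl using hl
  choose t ht using hr
  let Z : ℤ → α := fun i => match i with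
    | Int.ofNat n => l^[n] x
    | Int.negSucc n => t^[n + 1] x
  refine ⟨Z, rfl, fun i => ?_⟩
  match i with
  | Int.ofNat n =>
    change r (l^[n + 1] x) (l^[n] x)
    rw [Function.iterate_succ_apply']; exact hl _
  | Int.negSucc 0 => exact ht x
  | Int.negSucc (n + 1) =>
    change r (t^[n + 1] x) (t^[n + 1 + 1] x)
    rw [Function.iterate_succ_apply' t (n + 1)]; exact ht _

lemma Perp.ker {i : K →ₗ[R] B} {p : B →ₗ[R] L} (hi : Function.Injective i)
    (h : Function.Exact i p) (hp : Function.Surjective p) [Module.Projective R B]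
    (hL : Perp R L) : Perp R K :=
  fun Q _ _ hQ n => van_of_succ hi h hp n (hL Q hQ (n + 1))

/-- States used to splice a complete resolution. -/
structure St (R : Type u) [Ring R] where
  Z : ModuleCat.{u} R
  P : ModuleCat.{u} R
  i : Z →ₗ[R] P
  inj : Function.Injective i
  proj : Module.Projective R P
  perp : Perp R Z
  cok : GW R (P ⧸ LinearMap.range i)

/-- Consecutive states. -/
def St.Rel (s t : St R) : Prop :=
  ∃ p : s.P →ₗ[R] t.Z, Function.Surjective p ∧ Function.Exact s.i p

lemma St.right (s : St R) : ∃ t, St.Rel s t := by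
  obtain ⟨P, hP, i, hi, h⟩ := s.cok.step
  refine ⟨⟨ModuleCat.of R _, P, i, hi, hP, s.cok.perp, h⟩, Submodule.mkQ _,
    Submodule.mkQ_surjective _, ?_⟩
  rw [LinearMap.exact_iff, Submodule.ker_mkQ]

lemma St.gw (s : St R) : GW R s.Z := by
  refine GW.coind (fun T => Nonempty (T ≃ₗ[R] s.Z) ∨ GW R T) ?_ (Or.inl ⟨LinearEquiv.refl _ _⟩)
  rintro T (⟨⟨e⟩⟩ | h)
  · refine ⟨fun Q _ _ hQ n => van_retract e.toLinearMap e.symm.toLinearMap (by simp) n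
      (s.perp Q hQ n), s.P, s.proj, s.i.comp e.toLinearMap, s.inj.comp e.injective, Or.inr ?_⟩
    refine GW.of_equiv (Submodule.quotEquivOfEq _ _ ?_) s.cok
    rw [LinearMap.range_comp]; simp
  · obtain ⟨P, hP, i, hi, h'⟩ := h.step
    exact ⟨h.perp, P, hP, i, hi, Or.inr h'⟩

lemma St.left (t : St R) : ∃ s, St.Rel s t := by
  let p : (t.Z →₀ R) →ₗ[R] t.Z := Finsupp.linearCombination R id
  have hp : Function.Surjective p := Finsupp.linearCombination_id_surjective R t.Z
  have hx : Function.Exact (LinearMap.ker p).subtype p := by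
    rw [LinearMap.exact_iff, Submodule.range_subtype]
  refine ⟨⟨ModuleCat.of R (LinearMap.ker p), ModuleCat.of R (t.Z →₀ R),
    (LinearMap.ker p).subtype, Subtype.val_injective,
    inferInstanceAs (Module.Projective R (t.Z →₀ R)),
    Perp.ker Subtype.val_injective hx hp t.perp, ?_⟩, p, hp, hx⟩
  refine GW.of_equiv ((Submodule.quotEquivOfEq _ _ ?_).trans (p.quotKerEquivOfSurjective hp)) t.gw
  exact Submodule.range_subtype _

lemma GW.toGP (h : GW R M) : IsGorensteinProjective R (ModuleCat.of R M) := by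
  obtain ⟨P, hP, i, hi, h'⟩ := h.step
  obtain ⟨Z, hZ, hr⟩ := exists_int_seq St.Rel St.left St.right
    (⟨ModuleCat.of R M, P, i, hi, hP, h.perp, h'⟩ : St R)
  choose p hp hex using hr
  refine ⟨fun i => (Z i).P, fun i => (Z i).i.comp (p i), fun i => (Z i).proj, ?_, ?_, ?_, ?_⟩
  · intro i
    ext x
    simp [(hex i).apply_apply_eq_zero]
  · intro i
    rw [LinearMap.range_comp, LinearMap.range_eq_top.2 (hp _), Submodule.map_top,
      LinearMap.ker_comp_of_ker_eq_bot _ (LinearMap.ker_eq_bot.2 (Z i).inj)]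
    exact (LinearMap.exact_iff.1 (hex i)).symm
  · intro Q hQ i g hg
    have hg' : ∀ z, g ((Z (i + 1)).i z) = 0 := by
      intro z
      obtain ⟨y, rfl⟩ := hp _ z
      exact LinearMap.congr_fun hg y
    -- factor `g` through `p i`
    have hle : LinearMap.ker (p i) ≤ LinearMap.ker g := by
      rw [LinearMap.exact_iff.1 (hex i)]
      rintro _ ⟨z, rfl⟩
      exact hg' z
    let g' : (Z i).Z →ₗ[R] Q := ((LinearMap.ker (p i)).liftQ g hle).comp
      ((p i).quotKerEquivOfSurjective (hp i)).symm.toLinearMap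
    have hg'' : ∀ x, g' (p i x) = g x := by
      intro x
      have : ((p i).quotKerEquivOfSurjective (hp i)).symm (p i x) = Submodule.Quotient.mk x := by
        rw [LinearEquiv.symm_apply_eq]; rfl
      simp only [g', LinearMap.comp_apply, LinearEquiv.coe_coe, this]
      rfl
    have hx : Function.Exact (Z i).i (Submodule.mkQ (LinearMap.range (Z i).i)) := by
      rw [LinearMap.exact_iff, Submodule.ker_mkQ]
    obtain ⟨e, he⟩ := extend_of_van (Z i).inj hx (Submodule.mkQ_surjective _)
      ((Z i).cok.perp Q hQ 0) g'
    refine ⟨e, ?_⟩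
    ext x
    rw [← hg'', ← he]
    rfl
  · have h1 : LinearMap.ker ((Z (-1)).i.comp (p (-1))) = LinearMap.range (Z (-1 + 1)).i := by
      rw [LinearMap.ker_comp_of_ker_eq_bot _ (LinearMap.ker_eq_bot.2 (Z _).inj)]
      exact LinearMap.exact_iff.1 (hex (-1))
    have h2 : ∀ s : St R, s = ⟨ModuleCat.of R M, P, i, hi, hP, h.perp, h'⟩ →
        Nonempty (M ≃ₗ[R] LinearMap.range s.i) := by
      rintro _ rfl
      exact ⟨LinearEquiv.ofInjective i hi⟩
    obtain ⟨e⟩ := h2 (Z (-1 + 1)) (by rw [show (-1 + 1 : ℤ) = 0 from rfl]; exact hZ)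
    exact ⟨e.trans (LinearEquiv.ofEq _ _ h1.symm)⟩

lemma GW_iff : GW R M ↔ IsGorensteinProjective R (ModuleCat.of R M) := ⟨GW.toGP, GW.of_GP⟩

end Perp

section Frob

variable {R A : Type u} [Ring R] [Ring A]

/-- Restriction of scalars. -/
def Res (_ι : R →+* A) (M : Type u) : Type u := M

instance (ι : R →+* A) (M : Type u) [h : AddCommGroup M] : AddCommGroup (Res ι M) := h
instance Res.instA (ι : R →+* A) (M : Type u) [AddCommGroup M] [h : Module A M] :
    Module A (Res ι M) := h
instance Res.instR (ι : R →+* A) (M : Type u) [AddCommGroup M] [Module A M] :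
    Module R (Res ι M) := Module.compHom M ι

/-- The identity map into the restriction. -/
def inn (ι : R →+* A) {M : Type u} [AddCommGroup M] (m : M) : Res ι M := m

/-- The identity map out of the restriction. -/
def out {ι : R →+* A} {M : Type u} [AddCommGroup M] [Module A M] : Res ι M →ₛₗ[ι] M where
  toFun m := m
  map_add' _ _ := rfl
  map_smul' _ _ := rfl

section
variable {ι : R →+* A} {M : Type u} [AddCommGroup M] [Module A M]
@[simp] lemma out_inn (m : M) : out (inn ι m) = m := rfl
@[simp] lemma inn_out (m : Res ι M) : inn ι (out m) = m := rfl
lemma inn_add (m m' : M) : inn ι (m + m') = inn ι m + inn ι m' := rfl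
lemma inn_zero : inn ι (0 : M) = 0 := rfl
lemma inn_smul (r : R) (m : M) : inn ι (ι r • m) = r • inn ι m := rfl
lemma inn_surj (m : Res ι M) : ∃ m', inn ι m' = m := ⟨out m, rfl⟩
lemma inn_inj {m m' : M} (h : inn ι m = inn ι m') : m = m' := h
end

variable {N₀ : Type u} [AddCommGroup N₀] [Module R N₀]

/-- A semilinear map as a map into the restriction. -/
def toRes {ι : R →+* A} {M : Type u} [AddCommGroup M] [Module A M] (g : N₀ →ₛₗ[ι] M) :
    N₀ →ₗ[R] Res ι M where
  toFun n := inn ι (g n)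
  map_add' n n' := by rw [map_add, inn_add]
  map_smul' r n := by rw [map_smulₛₗ, inn_smul]; rfl

lemma toRes_apply {ι : R →+* A} {M : Type u} [AddCommGroup M] [Module A M] (g : N₀ →ₛₗ[ι] M)
    (n : N₀) : toRes g n = inn ι (g n) := rfl

variable {ι : R →+* A}

section maps
variable {X Y : Type u} [AddCommGroup X] [Module A X] [AddCommGroup Y] [Module A Y]
  {N N' : Type u} [AddCommGroup N] [Module R N] [AddCommGroup N'] [Module R N']

/-- Restriction of a map. -/
def resMap (ι : R →+* A) (g : X →ₗ[A] Y) : Res ι X →ₗ[R] Res ι Y where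
  toFun x := inn ι (g (out x))
  map_add' x y := by rw [map_add, map_add, inn_add]
  map_smul' r x := by rw [map_smulₛₗ, map_smul, inn_smul]; rfl

@[simp] lemma resMap_inn (g : X →ₗ[A] Y) (x : X) : resMap ι g (inn ι x) = inn ι (g x) := rfl

/-- Constructor for elements of the coinduced module. -/
def mkC (φ : A →+ N) (h : ∀ r a, φ (ι r * a) = r • φ a) : CoinducedModule ι N :=
  letI : Module R A := Module.compHom A ι
  { toFun := φ, map_add' := φ.map_add, map_smul' := h }

/-- Evaluation. -/
def app (f : CoinducedModule ι N) (a : A) : N :=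
  letI : Module R A := Module.compHom A ι
  f a

@[simp] lemma app_mkC (φ : A →+ N) (h : ∀ r a, φ (ι r * a) = r • φ a) (a : A) :
    app (mkC (ι := ι) φ h) a = φ a := rfl

lemma C_ext {f g : CoinducedModule ι N} (h : ∀ a, app f a = app g a) : f = g :=
  letI : Module R A := Module.compHom A ι
  LinearMap.ext h

lemma app_map_smul (f : CoinducedModule ι N) (r : R) (a : A) :
    app f (ι r * a) = r • app f a :=
  letI : Module R A := Module.compHom A ι
  LinearMap.map_smul f r a

lemma app_map_add (f : CoinducedModule ι N) (a b : A) :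
    app f (a + b) = app f a + app f b :=
  letI : Module R A := Module.compHom A ι
  LinearMap.map_add f a b

@[simp] lemma app_add (f g : CoinducedModule ι N) (a : A) : app (f + g) a = app f a + app g a := rfl
@[simp] lemma app_zero (a : A) : app (0 : CoinducedModule ι N) a = 0 := rfl
@[simp] lemma app_smul (f : CoinducedModule ι N) (a b : A) : app (b • f) a = app f (a * b) := rfl

/-- `app` as an additive map in the function. -/
def appHom (a : A) : CoinducedModule ι N →+ N where
  toFun f := app f a
  map_add' _ _ := rfl
  map_zero' := rfl

lemma app_sum {κ : Type*} (s : Finset κ) (f : κ → CoinducedModule ι N) (a : A) :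
    app (∑ i ∈ s, f i) a = ∑ i ∈ s, app (f i) a := map_sum (appHom a) f s

/-- `app` as an additive map in the argument. -/
def argHom (f : CoinducedModule ι N) : A →+ N where
  toFun a := app f a
  map_add' := app_map_add f
  map_zero' := by
    letI : Module R A := Module.compHom A ι
    exact LinearMap.map_zero f

lemma app_map_sum {κ : Type*} (s : Finset κ) (f : CoinducedModule ι N) (g : κ → A) :
    app f (∑ i ∈ s, g i) = ∑ i ∈ s, app f (g i) := map_sum (argHom f) g s

/-- Coinduced map. -/
noncomputable def mapC (ι : R →+* A) (g : N →ₗ[R] N') : CoinducedModule ι N →ₗ[A] CoinducedModule ι N' where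
  toFun f := mkC (g.toAddMonoidHom.comp (argHom f)) (fun r a => by
    change g (app f _) = r • g (app f a)
    rw [app_map_smul, map_smul])
  map_add' f f' := C_ext fun a => g.map_add _ _
  map_smul' a f := rfl

@[simp] lemma app_mapC (g : N →ₗ[R] N') (f : CoinducedModule ι N) (a : A) :
    app (mapC ι g f) a = g (app f a) := rfl

/-- Transpose for coinduction as a right adjoint. -/
noncomputable def toC (g : Res ι X →ₗ[R] N) : X →ₗ[A] CoinducedModule ι N where
  toFun x := mkC ⟨⟨fun a => g (inn ι (a • x)), by rw [zero_smul, inn_zero, map_zero]⟩,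
      fun a b => by
        change g (inn ι ((a + b) • x)) = g (inn ι (a • x)) + g (inn ι (b • x))
        rw [add_smul, inn_add, map_add]⟩ (fun r a => by
    change g (inn ι ((ι r * a) • x)) = r • g (inn ι (a • x))
    rw [mul_smul, inn_smul, map_smul])
  map_add' x y := C_ext fun a => by
    change g (inn ι (a • (x + y))) = g (inn ι (a • x)) + g (inn ι (a • y))
    rw [smul_add, inn_add, map_add]
  map_smul' b x := C_ext fun a => by
    change g (inn ι (a • b • x)) = g (inn ι ((a * b) • x))
    rw [mul_smul]

lemma app_toC (g : Res ι X →ₗ[R] N) (x : X) (a : A) : app (toC g x) a = g (inn ι (a • x)) := rfl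

/-- Inverse transpose. -/
noncomputable def fromC (φ : X →ₗ[A] CoinducedModule ι N) : Res ι X →ₗ[R] N where
  toFun x := app (φ (out x)) 1
  map_add' x y := by rw [map_add, map_add, app_add]
  map_smul' r x := by
    rw [map_smulₛₗ, map_smul, app_smul, one_mul, RingHom.id_apply, ← app_map_smul, mul_one]

lemma fromC_inn (φ : X →ₗ[A] CoinducedModule ι N) (x : X) :
    fromC φ (inn ι x) = app (φ x) 1 := rfl

end maps

/-- Frobenius data. -/
structure FD (ι : R →+* A) where
  τ : A →+ R
  n : ℕ
  x : Fin n → A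
  y : Fin n → A
  left : ∀ (r : R) (a : A), τ (ι r * a) = r * τ a
  right : ∀ (a : A) (r : R), τ (a * ι r) = τ a * r
  xy : ∀ a : A, ∑ i, x i * ι (τ (y i * a)) = a
  yx : ∀ a : A, ∑ i, ι (τ (a * x i)) * y i = a

variable (D : FD ι)
  {X Y : Type u} [AddCommGroup X] [Module A X] [AddCommGroup Y] [Module A Y]
  {N N' : Type u} [AddCommGroup N] [Module R N] [AddCommGroup N'] [Module R N']

/-- Unit of the left adjunction. -/
noncomputable def eta : N →ₛₗ[ι] CoinducedModule ι N where
  toFun n := mkC ((AddMonoidHom.flip (smulAddHom R N) n).comp D.τ) (fun r a => by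
    change D.τ (ι r * a) • n = r • D.τ a • n
    rw [D.left, mul_smul])
  map_add' n m := C_ext fun a => smul_add (D.τ a) n m
  map_smul' r n := C_ext fun a => by
    change D.τ a • r • n = D.τ (a * ι r) • n
    rw [D.right, mul_smul]

lemma app_eta (n : N) (a : A) : app (eta D n) a = D.τ a • n := rfl

lemma sum_eta (f : CoinducedModule ι N) :
    ∑ i, D.x i • eta D (app f (D.y i)) = f := by
  refine C_ext fun a => ?_
  rw [app_sum]
  conv_rhs => rw [← D.yx a, app_map_sum]
  refine Finset.sum_congr rfl fun i _ => ?_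
  rw [app_smul, app_eta, app_map_smul]

/-- Transpose for coinduction as a left adjoint. -/
noncomputable def ofEta (g : N →ₛₗ[ι] X) : CoinducedModule ι N →ₗ[A] X where
  toFun f := ∑ i, D.x i • (g (app f (D.y i)))
  map_add' f f' := by
    rw [← Finset.sum_add_distrib]
    refine Finset.sum_congr rfl fun i _ => ?_
    rw [app_add, map_add, smul_add]
  map_smul' a f := by
    have h1 : ∀ i, (g (app (a • f) (D.y i))) =
        ∑ j, ι (D.τ (D.y i * (a * D.x j))) • (g (app f (D.y j))) := by
      intro i
      rw [app_smul, ← D.yx (D.y i * a), app_map_sum, map_sum]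
      refine Finset.sum_congr rfl fun j _ => ?_
      rw [app_map_smul, map_smulₛₗ, mul_assoc]
    simp_rw [h1, Finset.smul_sum]
    rw [Finset.sum_comm]
    refine Finset.sum_congr rfl fun j _ => ?_
    simp_rw [smul_smul]
    rw [← Finset.sum_smul, D.xy]
    rfl

lemma ofEta_apply (g : N →ₛₗ[ι] X) (f : CoinducedModule ι N) :
    ofEta D g f = ∑ i, D.x i • (g (app f (D.y i))) := rfl

lemma ofEta_eta (g : N →ₛₗ[ι] X) (n : N) : ofEta D g (eta D n) = g n := by
  rw [ofEta_apply]
  have : ∀ i, D.x i • (g (app (eta D n) (D.y i))) =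
      (D.x i * ι (D.τ (D.y i * 1))) • (g n) := by
    intro i
    rw [app_eta, map_smulₛₗ, mul_smul, mul_one]
  simp_rw [this]
  rw [← Finset.sum_smul, D.xy]
  exact one_smul A _

lemma hom_eta (φ : CoinducedModule ι N →ₗ[A] X) (g : N →ₛₗ[ι] X)
    (h : ∀ n, φ (eta D n) = g n) : ofEta D g = φ := by
  ext f
  rw [ofEta_apply]
  conv_rhs => rw [← sum_eta D f, map_sum]
  refine Finset.sum_congr rfl fun i _ => ?_
  rw [map_smul, h]

include D in
lemma mapC_exact_lift (g : N →ₗ[R] N') (f : CoinducedModule ι N')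
    (h : ∀ a, ∃ n, g n = app f a) : ∃ f', mapC ι g f' = f := by
  choose s hs using h
  refine ⟨∑ i, D.x i • eta D (s (D.y i)), C_ext fun a => ?_⟩
  rw [app_mapC, app_sum, map_sum]
  conv_rhs => rw [← D.yx a, app_map_sum]
  refine Finset.sum_congr rfl fun i _ => ?_
  rw [app_smul, app_eta, map_smul, hs, app_map_smul]

include D in
lemma projRes (P : Type u) [AddCommGroup P] [Module A P] [Module.Projective A P] :
    Module.Projective R (Res ι P) := by
  refine Module.Projective.of_lifting_property'' (fun f hf => ?_)
  have hs : Function.Surjective (mapC ι f) := fun g =>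
    mapC_exact_lift D f g (fun a => hf _)
  obtain ⟨φ, hφ⟩ := Module.projective_lifting_property (mapC ι f)
    (toC (LinearMap.id : Res ι P →ₗ[R] Res ι P)) hs
  refine ⟨fromC φ, ?_⟩
  ext x
  obtain ⟨x, rfl⟩ := inn_surj x
  rw [LinearMap.comp_apply, fromC_inn, ← app_mapC]
  have := LinearMap.congr_fun hφ x
  rw [LinearMap.comp_apply] at this
  rw [this, app_toC, one_smul]

include D in
lemma projC [Module.Projective R N] : Module.Projective A (CoinducedModule ι N) := by
  refine Module.Projective.of_lifting_property'' (fun f hf => ?_)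
  obtain ⟨φ, hφ⟩ := Module.projective_lifting_property (resMap ι f) (toRes (eta D) : N →ₗ[R] _) hf
  refine ⟨ofEta D (out.comp φ), ?_⟩
  rw [← hom_eta D (f.comp (ofEta D (out.comp φ))) (eta D), hom_eta D LinearMap.id (eta D)]
  · intro n; rfl
  · intro n
    rw [LinearMap.comp_apply, ofEta_eta]
    exact LinearMap.congr_fun hφ n

include D in
lemma GP_res (M : Type u) [AddCommGroup M] [Module A M]
    (h : IsGorensteinProjective A (ModuleCat.of A M)) :
    IsGorensteinProjective R (ModuleCat.of R (Res ι M)) := by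
  obtain ⟨P, f, hP, hff, hex, hQ, ⟨e⟩⟩ := h
  refine ⟨fun i => ModuleCat.of R (Res ι (P i)), fun i => resMap ι (f i), fun i => ?_,
    fun i => ?_, fun i => ?_, ?_, ⟨?_⟩⟩
  · have := hP i
    exact projRes D (P i)
  · ext x
    exact LinearMap.congr_fun (hff i) x
  · ext x
    exact SetLike.ext_iff.1 (hex i) x
  · intro Q hQ' i (g : Res ι (P (i + 1)) →ₗ[R] Q) hg
    obtain ⟨k, hk⟩ := hQ (ModuleCat.of A (CoinducedModule ι Q)) (projC D) i (toC g) (by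
      ext x
      refine C_ext fun a => ?_
      rw [LinearMap.comp_apply, app_toC, ← map_smul]
      exact LinearMap.congr_fun hg _)
    refine ⟨fromC k, ?_⟩
    refine LinearMap.ext fun x => ?_
    change app (k (f i x)) 1 = g x
    have h2 : ∀ x : P (i + 1), app (k (f i x)) 1 = g (inn ι x) := fun x => by
      have h3 : k (f i x) = toC (X := P (i + 1)) g x := LinearMap.congr_fun hk x
      rw [h3, app_toC, one_smul]
    exact h2 x
  · exact
    { toFun := fun m => ⟨(e m).1, (e m).2⟩
      invFun := fun m => e.symm ⟨m.1, m.2⟩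
      left_inv := fun m => e.symm_apply_apply m
      right_inv := fun m => by
        ext
        exact congrArg Subtype.val (e.apply_symm_apply ⟨m.1, m.2⟩)
      map_add' := fun m m' => by
        ext; exact congrArg Subtype.val (e.map_add m m')
      map_smul' := fun r m => by
        ext; exact congrArg Subtype.val (e.map_smul (ι r) m) }

include D in
lemma GP_C (h : IsGorensteinProjective R (ModuleCat.of R N)) :
    IsGorensteinProjective A (ModuleCat.of A (CoinducedModule ι N)) := by
  obtain ⟨P, f, hP, hff, hex, hQ, ⟨e⟩⟩ := h
  refine ⟨fun i => ModuleCat.of A (CoinducedModule ι (P i)), fun i => mapC ι (f i), fun i => ?_,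
    fun i => ?_, fun i => ?_, ?_, ?_⟩
  · have := hP i
    exact projC D
  · ext x
    exact C_ext fun a => LinearMap.congr_fun (hff i) (app x a)
  · ext x
    constructor
    · rintro ⟨y, rfl⟩
      exact C_ext fun a => LinearMap.congr_fun (hff i) (app y a)
    · intro hx
      refine mapC_exact_lift D (f (i + 1)) x (fun a => ?_)
      have : app x a ∈ LinearMap.ker (f i) := by
        have h2 : mapC ι (f i) x = 0 := hx
        rw [LinearMap.mem_ker, ← app_mapC, h2, app_zero]
      rw [← hex] at this
      exact this
  · intro Q hQ' i g hg
    have := hQ'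
    obtain ⟨k, hk⟩ := hQ (ModuleCat.of R (Res ι Q)) (projRes D Q) i
      (toRes (g.comp (eta D))) (by
        ext x
        have h2 : eta D (f (i + 1) x) = mapC ι (f (i + 1)) (eta D x) :=
          C_ext fun a => ((f (i + 1)).map_smul _ _).symm
        change inn ι (g (eta D (f (i + 1) x))) = 0
        rw [h2]
        exact LinearMap.congr_fun hg _)
    refine ⟨ofEta D (out.comp k), ?_⟩
    rw [← hom_eta D g (g.comp (eta D)) (fun _ => rfl)]
    symm
    refine hom_eta D _ _ (fun n => ?_)
    have h2 : mapC ι (f i) (eta D n) = eta D (f i n) :=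
      C_ext fun a => ((f i).map_smul _ _)
    have h3 := LinearMap.congr_fun hk n
    rw [LinearMap.comp_apply]
    dsimp only
    rw [h2, ofEta_eta]
    exact h3
  · let s : N →ₗ[R] P (-1 + 1) := (Submodule.subtype _).comp e.toLinearMap
    have hs : Function.Injective s := Subtype.val_injective.comp e.injective
    have hs' : LinearMap.range s = LinearMap.ker (f (-1)) := by
      rw [LinearMap.range_comp]; simp
    have hr : LinearMap.range (mapC ι s) = LinearMap.ker (mapC ι (f (-1))) := by
      ext x
      constructor
      · rintro ⟨y, rfl⟩
        exact C_ext fun a => (e (app y a)).2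
      · intro hx
        refine mapC_exact_lift D s x (fun a => ?_)
        have : app x a ∈ LinearMap.ker (f (-1)) := by
          have h2 : mapC ι (f (-1)) x = 0 := hx
          rw [LinearMap.mem_ker, ← app_mapC, h2, app_zero]
        rw [← hs'] at this
        exact this
    have hi : Function.Injective (mapC ι s) := fun x y hxy =>
      C_ext fun a => hs (congrArg (fun z => app z a) hxy)
    exact ⟨(LinearEquiv.ofInjective _ hi).trans (LinearEquiv.ofEq _ _ hr)⟩

include D in
lemma van_of_res (n : ℕ) : ∀ (M : ModuleCat.{u} A),
    (∀ (Q : ModuleCat.{u} R), Module.Projective R Q → Van R n (Res ι M) Q) →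
    ∀ (Q : ModuleCat.{u} A), Module.Projective A Q → Van A n M Q := by
  have key : ∀ M : ModuleCat.{u} A, ∃ (K B : ModuleCat.{u} A) (i : K →ₗ[A] B) (p : B →ₗ[A] M),
      Function.Injective i ∧ Function.Exact i p ∧ Function.Surjective p ∧
        Module.Projective A B := by
    intro M
    let p : (M →₀ A) →ₗ[A] M := Finsupp.linearCombination A id
    refine ⟨ModuleCat.of A (LinearMap.ker p), ModuleCat.of A (M →₀ A),
      (LinearMap.ker p).subtype, p, Subtype.val_injective, ?_,
      Finsupp.linearCombination_id_surjective A M,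
      inferInstanceAs (Module.Projective A (M →₀ A))⟩
    rw [LinearMap.exact_iff]; exact (Submodule.range_subtype _).symm
  induction n with
  | zero =>
    intro M hM Q hQ
    obtain ⟨K, B, i, p, hi, hx, hp, hB⟩ := key M
    refine van_zero_of_extend hi hx hp (fun g => ?_)
    let q : CoinducedModule ι (Res ι Q) →ₗ[A] Q := ofEta D out
    have hq : Function.Surjective q := fun z => ⟨_, ofEta_eta D out (inn ι z)⟩
    obtain ⟨s, hs⟩ := Module.projective_lifting_property q LinearMap.id hq
    obtain ⟨k, hk⟩ := extend_of_van (i := resMap ι i) (p := resMap ι p) hi hx hp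
      (hM (ModuleCat.of R (Res ι Q)) (projRes D Q)) (fromC (s.comp g))
    refine ⟨q.comp (toC k), ?_⟩
    have h3 : (toC k).comp i = s.comp g := by
      ext x
      refine C_ext fun a => ?_
      rw [LinearMap.comp_apply, app_toC, ← map_smul]
      refine (LinearMap.congr_fun hk (inn ι (a • x))).trans ?_
      rw [fromC_inn, map_smul, app_smul, one_mul]
    rw [LinearMap.comp_assoc, h3, ← LinearMap.comp_assoc, hs, LinearMap.id_comp]
  | succ n ih =>
    intro M hM Q hQ
    obtain ⟨K, B, i, p, hi, hx, hp, hB⟩ := key M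
    have := projRes D (ι := ι) B
    refine van_succ hi hx hp n (ih K (fun Q' hQ' => ?_) Q hQ)
    exact van_of_succ (i := resMap ι i) (p := resMap ι p) hi hx hp n (hM Q' hQ')

lemma resMap_exact {X Y Z : Type u} [AddCommGroup X] [Module A X] [AddCommGroup Y] [Module A Y]
    [AddCommGroup Z] [Module A Z] {f : X →ₗ[A] Y} {g : Y →ₗ[A] Z} (h : Function.Exact f g) :
    Function.Exact (resMap ι f) (resMap ι g) := fun y => h y

lemma resMap_inj {f : X →ₗ[A] Y} (h : Function.Injective f) :
    Function.Injective (resMap ι f) := fun _ _ hxy => h hxy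

lemma resMap_surj {f : X →ₗ[A] Y} (h : Function.Surjective f) :
    Function.Surjective (resMap ι f) := fun y => h y

include D in
lemma GW_res {X : Type u} [AddCommGroup X] [Module A X] (h : GW A X) : GW R (Res ι X) :=
  GW_iff.2 (GP_res D X (GW_iff.1 h))

include D in
lemma GW_C (h : GW R N) : GW A (CoinducedModule ι N) :=
  GW_iff.2 (GP_C D (GW_iff.1 h))

include D in
lemma GW_res_cok {T G P : Type u} [AddCommGroup T] [Module A T] [AddCommGroup G] [Module A G]
    [AddCommGroup P] [Module A P] (s : T →ₗ[A] G) (r : Res ι G →ₗ[R] Res ι T)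
    (hrs : ∀ m, r (resMap ι s m) = m) (hG : GW A G) (i : G →ₗ[A] P) (hi : Function.Injective i)
    (hL : GW A (P ⧸ LinearMap.range i)) : GW R (Res ι (P ⧸ LinearMap.range (i.comp s))) := by
  have h1 : Function.Exact i (Submodule.mkQ (LinearMap.range i)) := by
    rw [LinearMap.exact_iff, Submodule.ker_mkQ]
  have h2 : Function.Exact (i.comp s) (Submodule.mkQ (LinearMap.range (i.comp s))) := by
    rw [LinearMap.exact_iff, Submodule.ker_mkQ]
  have h3 : Function.Exact ((resMap ι i).comp (resMap ι s))
      (resMap ι (Submodule.mkQ (LinearMap.range (i.comp s)))) := resMap_exact (ι := ι) h2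
  exact GW.cok (resMap ι s) r hrs (GW_res D hG) (resMap ι i) (resMap_inj hi)
    (resMap ι (Submodule.mkQ (LinearMap.range i))) (resMap_exact h1)
    (resMap_surj (Submodule.mkQ_surjective _))
    (resMap ι (Submodule.mkQ (LinearMap.range (i.comp s)))) h3
    (resMap_surj (Submodule.mkQ_surjective _)) (GW_res D hL)

include D in
lemma GW_of_res_perp (T : Type u) [AddCommGroup T] [Module A T] (hT : GW R (Res ι T)) :
    Perp A T := fun Q _ _ hQ n =>
  van_of_res D n (ModuleCat.of A T) (fun Q' hQ' => hT.perp Q' hQ' n) (ModuleCat.of A Q) hQ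

include D in
lemma GW_of_res_step (T : Type u) [AddCommGroup T] [Module A T] (hT : GW R (Res ι T)) :
    ∃ P : ModuleCat.{u} A, Module.Projective A P ∧ ∃ i : T →ₗ[A] P, Function.Injective i ∧
      GW R (Res ι (P ⧸ LinearMap.range i)) := by
  obtain ⟨P, hP, i, hi, hL⟩ := (GW_C D hT).step
  have hrs : ∀ m, fromC (LinearMap.id : CoinducedModule ι (Res ι T) →ₗ[A] _)
      (resMap ι (toC (LinearMap.id : Res ι T →ₗ[R] Res ι T)) m) = m := fun m => by
    obtain ⟨m, rfl⟩ := inn_surj m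
    rw [resMap_inn, fromC_inn, LinearMap.id_apply, app_toC, one_smul, LinearMap.id_apply]
  have hs : Function.Injective (toC (LinearMap.id : Res ι T →ₗ[R] Res ι T)) := fun x y hxy => by
    have := (hrs (inn ι x)).symm.trans ((by rw [resMap_inn, resMap_inn, hxy] :
      _ = fromC (LinearMap.id : CoinducedModule ι (Res ι T) →ₗ[A] _)
      (resMap ι (toC (LinearMap.id : Res ι T →ₗ[R] Res ι T)) (inn ι y))).trans (hrs (inn ι y)))
    exact inn_inj this
  exact ⟨P, hP, i.comp (toC LinearMap.id), hi.comp hs,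
    GW_res_cok D _ _ hrs (GW_C D hT) i hi hL⟩

include D in
lemma GW_of_res (M : Type u) [AddCommGroup M] [Module A M] (h : GW R (Res ι M)) : GW A M :=
  GW.coind (fun T => GW R (Res ι T))
    (fun T hT => ⟨GW_of_res_perp D T hT, GW_of_res_step D T hT⟩) h

/-- The relations defining the tensor product. -/
abbrev rels (ι : R →+* A) (N : Type u) [AddCommGroup N] [Module R N] : Set (N →₀ A) :=
    ({x : N →₀ A | ∃ n n' : N,
        x = Finsupp.single (n + n') 1 - Finsupp.single n 1 - Finsupp.single n' 1} ∪
     {x : N →₀ A | ∃ (r : R) (n : N),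
        x = Finsupp.single (r • n) 1 - Finsupp.single n (ι r)})

/-- Unit of the tensor product. -/
noncomputable def tmk : N →ₛₗ[ι] ExtendedTensor ι N where
  toFun n := (Submodule.Quotient.mk (Finsupp.single n 1) : ExtendedTensor ι N)
  map_add' n n' := by
    refine (Submodule.Quotient.eq _).2 ?_
    refine Submodule.subset_span (Or.inl ⟨n, n', ?_⟩)
    rw [sub_sub]
  map_smul' r n := by
    refine (Submodule.Quotient.eq _).2 ?_
    refine Submodule.subset_span (Or.inr ⟨r, n, ?_⟩)
    simp

/-- The comparison isomorphism. -/
noncomputable def tensorEquiv : ExtendedTensor ι N ≃ₗ[A] CoinducedModule ι N :=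
  LinearEquiv.ofLinearMap
    (Submodule.liftQ (Submodule.span A (rels ι N))
      (Finsupp.linearCombination A (fun n => eta D n)) (by
      rw [Submodule.span_le]
      rintro _ (⟨n, n', rfl⟩ | ⟨r, n, rfl⟩)
      · simp only [SetLike.mem_coe, LinearMap.mem_ker, map_sub,
          Finsupp.linearCombination_single, one_smul]
        rw [map_add, sub_sub]
        exact sub_self _
      · simp only [SetLike.mem_coe, LinearMap.mem_ker, map_sub,
          Finsupp.linearCombination_single, one_smul]
        rw [map_smulₛₗ]
        exact sub_self _))
    (ofEta D tmk)
    (by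
      refine (hom_eta D _ (eta D) (fun n => ?_)).symm.trans
        (hom_eta D LinearMap.id (eta D) (fun _ => rfl))
      rw [LinearMap.comp_apply, ofEta_eta]
      refine (Finsupp.linearCombination_single A 1 n).trans ?_
      exact one_smul A _)
    (by
      refine Submodule.linearMap_qext _ (Finsupp.lhom_ext' fun n => LinearMap.ext_ring ?_)
      change ofEta D tmk (Finsupp.linearCombination A _ (Finsupp.single n 1)) = _
      rw [Finsupp.linearCombination_single, one_smul, ofEta_eta]
      rfl)

end Frob
end GPAux

section Statement

variable {R A : Type u} [Ring R] [Ring A]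

theorem stmt0 (ι : R →+* A) (hF : IsFrobeniusExtension ι)
    (M : Type u) [AddCommGroup M] [Module A M] :
    (IsGorensteinProjective A (ModuleCat.of A M) ↔
      IsGorensteinProjective R (@ModuleCat.of R _ M _ (Module.compHom M ι))) ∧
    (IsGorensteinProjective R (@ModuleCat.of R _ M _ (Module.compHom M ι)) ↔
      (IsGorensteinProjective A
          (ModuleCat.of A (@ExtendedTensor R A _ _ ι M _ (Module.compHom M ι))) ∧
        IsGorensteinProjective A
          (ModuleCat.of A (@CoinducedModule R A _ _ ι M _ (Module.compHom M ι))))) := by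
  obtain ⟨-, τ, n, x, y, h1, h2, h3, h4⟩ := hF
  let D : GPAux.FD ι := ⟨τ, n, x, y, h1, h2, h3, h4⟩
  change (IsGorensteinProjective A (ModuleCat.of A M) ↔
      IsGorensteinProjective R (ModuleCat.of R (GPAux.Res ι M))) ∧
    (IsGorensteinProjective R (ModuleCat.of R (GPAux.Res ι M)) ↔
      (IsGorensteinProjective A (ModuleCat.of A (ExtendedTensor ι (GPAux.Res ι M))) ∧
        IsGorensteinProjective A (ModuleCat.of A (CoinducedModule ι (GPAux.Res ι M)))))
  refine ⟨⟨GPAux.GP_res D M, fun h => (GPAux.GW_of_res D M (GPAux.GW.of_GP h)).toGP⟩,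
    fun h => ?_, fun h => ?_⟩
  · have hC := GPAux.GP_C D h
    exact ⟨((GPAux.GW.of_GP hC).of_equiv (GPAux.tensorEquiv D)).toGP, hC⟩
  · have hC := GPAux.GW.of_GP (GPAux.GP_res D _ h.2)
    refine (GPAux.GW.retract
      (GPAux.resMap ι (GPAux.toC (LinearMap.id : GPAux.Res ι M →ₗ[R] GPAux.Res ι M)))
      (GPAux.fromC LinearMap.id) (fun m => ?_) hC).toGP
    obtain ⟨m, rfl⟩ := GPAux.inn_surj m
    rw [GPAux.resMap_inn, GPAux.fromC_inn, LinearMap.id_apply, GPAux.app_toC, one_smul,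
      LinearMap.id_apply]

end Statement
end

section
/- Let R ⊂ A be a Frobenius extension of rings and let M be a left A-module. If M is a Gorenstein projective left A-module, then the underlying left R-module M (via restriction of scalars) is Gorenstein projective. -/
universe u

section Helpers

variable {R A : Type u} [Ring R] [Ring A]

theorem frob_projective (ι : R →+* A) (hF : IsFrobeniusExtension ι) [Module R A]
    (hRA : ∀ (r : R) (a : A), r • a = ι r * a)
    (P : Type u) [AddCommGroup P] [Module A P] [Module R P] [IsScalarTower R A P]
    [hP : Module.Projective A P] : Module.Projective R P := by
  obtain ⟨-, τ, n, x, y, h1, h2, h3, h4⟩ := hF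
  have hA : Module.Projective R A := by
    let s : A →ₗ[R] (Fin n → R) :=
      { toFun := fun a i => τ (a * x i)
        map_add' := fun a b => by ext i; simp [add_mul]
        map_smul' := fun r a => by ext i; simp [hRA, mul_assoc, h1] }
    let t : (Fin n → R) →ₗ[R] A :=
      { toFun := fun v => ∑ i, ι (v i) * y i
        map_add' := fun a b => by simp [add_mul, Finset.sum_add_distrib]
        map_smul' := fun r a => by simp [hRA, mul_assoc, Finset.mul_sum] }
    exact Module.Projective.of_split s t (by ext a; exact h4 a)
  haveI : IsScalarTower R A A := ⟨fun r a b => by simp [hRA, mul_assoc]⟩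
  obtain ⟨s, hs⟩ := Module.projective_def'.1 hP
  have hfs : Module.Projective R (P →₀ A) := by
    classical
    exact Module.Projective.of_equiv (finsuppLequivDFinsupp (ι := P) (M := A) R).symm
  exact Module.Projective.of_split (s.restrictScalars R)
    ((Finsupp.linearCombination A (id : P → P)).restrictScalars R)
    (by ext p; exact LinearMap.congr_fun hs p)

theorem frob_extend (ι : R →+* A) (hF : IsFrobeniusExtension ι) [Module R A]
    (hRA : ∀ (r : R) (a : A), r • a = ι r * a)
    (P₀ P₁ P₂ : Type u) [AddCommGroup P₀] [Module A P₀] [Module R P₀] [IsScalarTower R A P₀]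
    [AddCommGroup P₁] [Module A P₁] [Module R P₁] [IsScalarTower R A P₁]
    [AddCommGroup P₂] [Module A P₂]
    (f : P₁ →ₗ[A] P₀) (f' : P₂ →ₗ[A] P₁)
    (H : ∀ Q : ModuleCat.{u} A, Module.Projective A Q → ∀ g : P₁ →ₗ[A] Q, g.comp f' = 0 →
      ∃ h : P₀ →ₗ[A] Q, h.comp f = g)
    (Q : Type u) [AddCommGroup Q] [Module R Q] (hQ : Module.Projective R Q)
    (g : P₁ →ₗ[R] Q) (hg : ∀ p, g (f' p) = 0) :
    ∃ h : P₀ →ₗ[R] Q, ∀ p, h (f p) = g p := by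
  obtain ⟨-, τ, n, x, y, h1, h2, h3, h4⟩ := hF
  obtain ⟨s, hs⟩ := Module.projective_def'.1 hQ
  haveI : IsScalarTower R A A := ⟨fun r a b => by simp [hRA, mul_assoc]⟩
  have hsm : ∀ (r : R) (p : P₁), ι r • p = r • p := fun r p => by
    have : ι r = r • (1 : A) := by simp [hRA]
    rw [this, smul_assoc, one_smul]
  let τ' : A →ₗ[R] R :=
    { toFun := τ, map_add' := τ.map_add, map_smul' := fun r a => by simp [hRA, h1] }
  let ι' : R →ₗ[R] A :=
    { toFun := ι, map_add' := ι.map_add, map_smul' := fun r a => by simp [hRA] }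
  let T : (Q →₀ A) →ₗ[R] (Q →₀ R) := Finsupp.mapRange.linearMap τ'
  let I : (Q →₀ R) →ₗ[R] (Q →₀ A) := Finsupp.mapRange.linearMap ι'
  have hI : ∀ (v : Q →₀ R) q, I v q = ι (v q) := fun v q => rfl
  have hT : ∀ (v : Q →₀ A) q, T v q = τ (v q) := fun v q => rfl
  let G : P₁ →ₗ[A] (Q →₀ A) :=
    { toFun := fun p => ∑ i, x i • I (s (g (y i • p)))
      map_add' := fun a b => by simp [Finset.sum_add_distrib]
      map_smul' := fun a p => by
        have e : ∀ i, y i • a • p = ∑ j, τ (y i * a * x j) • y j • p := fun i => by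
          rw [← mul_smul]
          conv_lhs => rw [← h4 (y i * a)]
          rw [Finset.sum_smul]
          exact Finset.sum_congr rfl fun j _ => by rw [mul_smul, hsm]
        ext q
        simp only [e, map_sum, map_smul, Finsupp.coe_finsetSum, Finset.sum_apply,
          Finsupp.smul_apply, Finset.smul_sum, RingHom.id_apply, smul_eq_mul, hRA, hI]
        rw [Finset.sum_comm]
        refine Finset.sum_congr rfl fun j _ => ?_
        rw [← mul_assoc]
        conv_rhs => rw [← h3 (a * x j), Finset.sum_mul]
        exact Finset.sum_congr rfl fun i _ => by simp only [mul_assoc] }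
  have hG : ∀ p, G p = ∑ i, x i • I (s (g (y i • p))) := fun p => rfl
  obtain ⟨h', hh'⟩ := H (ModuleCat.of A (Q →₀ A))
    (inferInstanceAs (Module.Projective A (Q →₀ A))) G (by
      ext1 p
      change G (f' p) = 0
      rw [hG]
      refine Finset.sum_eq_zero fun i _ => ?_
      rw [← map_smul f', hg]; simp)
  let h'' : P₀ →ₗ[A] (Q →₀ A) := h'
  have hh : ∀ p, h'' (f p) = G p := fun p => LinearMap.congr_fun hh' p
  refine ⟨(Finsupp.linearCombination R (id : Q → Q)) ∘ₗ T ∘ₗ h''.restrictScalars R, fun p => ?_⟩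
  have key : T (G p) = s (g p) := by
    have e : p = ∑ i, τ (x i) • y i • p := by
      conv_lhs => rw [← one_smul A p, ← h4 1]
      rw [Finset.sum_smul]
      exact Finset.sum_congr rfl fun j _ => by rw [mul_smul, hsm, one_mul]
    conv_rhs => rw [e]
    ext q
    rw [hT, hG]
    simp [hI, h2]
  change Finsupp.linearCombination R (id : Q → Q) (T (h'' (f p))) = g p
  rw [hh, key]
  exact LinearMap.congr_fun hs (g p)

end Helpers

section Statement

variable {R A : Type u} [Ring R] [Ring A]

theorem stmt1 (ι : R →+* A) (hF : IsFrobeniusExtension ι)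
    (M : Type u) [AddCommGroup M] [Module A M]
    (hM : IsGorensteinProjective A (ModuleCat.of A M)) :
    IsGorensteinProjective R (@ModuleCat.of R _ M _ (Module.compHom M ι)) := by
  obtain ⟨P, f, hP, hc, he, hH, ⟨e⟩⟩ := hM
  letI : Module R A := Module.compHom A ι
  have hRA : ∀ (r : R) (a : A), r • a = ι r * a := fun _ _ => rfl
  letI : Module R M := Module.compHom M ι
  letI (i : ℤ) : Module R (P i) := Module.compHom (P i) ι
  haveI (i : ℤ) : IsScalarTower R A (P i) := ⟨fun r a p => mul_smul (ι r) a p⟩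
  let F : ∀ i : ℤ, P (i + 1) →ₗ[R] P i := fun i => (f i).restrictScalars R
  refine ⟨fun i => ModuleCat.of R (P i), F, fun i => ?_, fun i => ?_, fun i => ?_, ?_, ?_⟩
  · haveI := hP i
    exact frob_projective ι hF hRA (P i)
  · ext p
    exact LinearMap.congr_fun (hc i) p
  · ext p
    exact SetLike.ext_iff.1 (he i) p
  · intro Q hQ i g hg
    obtain ⟨h, hh⟩ := frob_extend ι hF hRA (P i) (P (i + 1)) (P (i + 1 + 1)) (f i) (f (i + 1))
      (fun Q hQ g hg => hH Q hQ i g hg) Q hQ g (fun p => LinearMap.congr_fun hg p)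
    exact ⟨h, LinearMap.ext hh⟩
  · exact ⟨{ toFun := fun m => ⟨(e m).1, (e m).2⟩
             invFun := fun p => e.symm ⟨p.1, p.2⟩
             left_inv := fun m => e.symm_apply_apply m
             right_inv := fun p => Subtype.ext (congrArg Subtype.val (e.apply_symm_apply ⟨p.1, p.2⟩))
             map_add' := fun a b => Subtype.ext (congrArg Subtype.val (e.map_add a b))
             map_smul' := fun r a => Subtype.ext (congrArg Subtype.val (e.map_smul (ι r) a)) }⟩

end Statement
end

section
/- Let R ⊂ A be a Frobenius extension of rings and let M be a left A-module. If the underlying left R-module M (via restriction of scalars) is Gorenstein projective, then the left A-modules A ⊗_R M and Hom_R(A, M) are Gorenstein projective. -/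
universe u

section Helpers

variable {R A : Type u} [Ring R] [Ring A]

/-- Evaluation of a coinduced element. -/
def cEv (ι : R →+* A) {N : Type u} [AddCommGroup N] [Module R N]
    (f : CoinducedModule ι N) (b : A) : N := f.toFun b

/-- Constructor of coinduced elements. -/
def cMk (ι : R →+* A) {N : Type u} [AddCommGroup N] [Module R N]
    (f : A → N) (h1 : ∀ a b, f (a + b) = f a + f b) (h2 : ∀ r a, f (ι r * a) = r • f a) :
    CoinducedModule ι N :=
  letI : Module R A := Module.compHom A ι
  { toFun := f, map_add' := h1, map_smul' := h2 }

section ev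
variable (ι : R →+* A) {N : Type u} [AddCommGroup N] [Module R N]

theorem cEv_ext {f g : CoinducedModule ι N} (h : ∀ b, cEv ι f b = cEv ι g b) : f = g :=
  letI : Module R A := Module.compHom A ι
  LinearMap.ext h

theorem cEv_add (f g : CoinducedModule ι N) (b : A) :
    cEv ι (f + g) b = cEv ι f b + cEv ι g b := rfl

theorem cEv_zero (b : A) : cEv ι (0 : CoinducedModule ι N) b = 0 := rfl

theorem cEv_smul (a : A) (f : CoinducedModule ι N) (b : A) :
    cEv ι (a • f) b = cEv ι f (b * a) := rfl

theorem cEv_map_add (f : CoinducedModule ι N) (b c : A) :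
    cEv ι f (b + c) = cEv ι f b + cEv ι f c := f.map_add' b c

theorem cEv_map_smul (f : CoinducedModule ι N) (r : R) (c : A) :
    cEv ι f (ι r * c) = r • cEv ι f c :=
  letI : Module R A := Module.compHom A ι
  f.map_smul' r c

theorem cEv_map_sum (f : CoinducedModule ι N) {n : ℕ} (s : Fin n → A) :
    cEv ι f (∑ i, s i) = ∑ i, cEv ι f (s i) :=
  map_sum (AddMonoidHom.mk' (cEv ι f) (cEv_map_add ι f)) s _

theorem cEv_sum {n : ℕ} (s : Fin n → CoinducedModule ι N) (b : A) :
    cEv ι (∑ i, s i) b = ∑ i, cEv ι (s i) b :=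
  map_sum (AddMonoidHom.mk' (fun f : CoinducedModule ι N => cEv ι f b)
    (fun f g => cEv_add ι f g b)) s _

end ev

/-- Functoriality of coinduction. -/
def cMap (ι : R →+* A) {N N' : Type u} [AddCommGroup N] [Module R N]
    [AddCommGroup N'] [Module R N'] (f : N →ₗ[R] N') :
    CoinducedModule ι N →ₗ[A] CoinducedModule ι N' where
  toFun φ := cMk ι (fun b => f (cEv ι φ b)) (fun a b => by rw [cEv_map_add, map_add])
    (fun r a => by rw [cEv_map_smul, map_smul])
  map_add' φ ψ := cEv_ext ι fun b => by
    change f (cEv ι (φ + ψ) b) = f (cEv ι φ b) + f (cEv ι ψ b)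
    rw [cEv_add, map_add]
  map_smul' a φ := cEv_ext ι fun b => rfl

theorem cEv_cMap (ι : R →+* A) {N N' : Type u} [AddCommGroup N] [Module R N]
    [AddCommGroup N'] [Module R N'] (f : N →ₗ[R] N') (φ : CoinducedModule ι N) (b : A) :
    cEv ι (cMap ι f φ) b = f (cEv ι φ b) := rfl

/-- Frobenius data. -/
structure FrobData (ι : R →+* A) (n : ℕ) where
  τ : A →+ R
  x : Fin n → A
  y : Fin n → A
  left : ∀ (r : R) (a : A), τ (ι r * a) = r * τ a
  right : ∀ (a : A) (r : R), τ (a * ι r) = τ a * r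
  dual1 : ∀ a : A, ∑ i, x i * ι (τ (y i * a)) = a
  dual2 : ∀ a : A, ∑ i, ι (τ (a * x i)) * y i = a

namespace FrobData

variable {ι : R →+* A} {n : ℕ}

section one
variable {N : Type u} [AddCommGroup N] [Module R N]

/-- The unit map. -/
def eta (D : FrobData ι n) (m : N) : CoinducedModule ι N :=
  cMk ι (fun b => D.τ b • m) (fun a b => by rw [map_add, add_smul])
    (fun r a => by rw [D.left, mul_smul])

theorem cEv_eta (D : FrobData ι n) (m : N) (b : A) : cEv ι (D.eta m) b = D.τ b • m := rfl

theorem eta_add (D : FrobData ι n) (m m' : N) : D.eta (m + m') = D.eta m + D.eta m' :=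
  cEv_ext ι fun b => by rw [cEv_add]; simp only [cEv_eta, smul_add]

theorem eta_smul (D : FrobData ι n) (r : R) (m : N) : D.eta (r • m) = ι r • D.eta m :=
  cEv_ext ι fun b => by rw [cEv_smul]; simp only [cEv_eta, D.right, mul_smul]

theorem expand (D : FrobData ι n) (f : CoinducedModule ι N) : ∑ i, D.x i • D.eta (cEv ι f (D.y i)) = f :=
  cEv_ext ι fun b => by
    rw [cEv_sum]
    conv_rhs => rw [← D.dual2 b, cEv_map_sum]
    refine Finset.sum_congr rfl fun i _ => ?_
    rw [cEv_smul, cEv_eta, cEv_map_smul]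

theorem hom_ext (D : FrobData ι n) {Q : Type u} [AddCommGroup Q] [Module A Q]
    {g h : CoinducedModule ι N →ₗ[A] Q} (H : ∀ m, g (D.eta m) = h (D.eta m)) : g = h :=
  LinearMap.ext fun f => by
    rw [← D.expand f, map_sum, map_sum]
    simp only [map_smul, H]

/-- The universal property. -/
def lift (D : FrobData ι n) {Q : Type u} [AddCommGroup Q] [Module A Q] (g : N →+ Q)
    (hg : ∀ (r : R) m, g (r • m) = ι r • g m) : CoinducedModule ι N →ₗ[A] Q where
  toFun f := ∑ i, D.x i • g (cEv ι f (D.y i))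
  map_add' f f' := by simp only [cEv_add, map_add, smul_add, Finset.sum_add_distrib]
  map_smul' a f := by
    simp only [cEv_smul, RingHom.id_apply]
    have h1 : ∀ i, g (cEv ι f (D.y i * a)) =
        ∑ j, ι (D.τ (D.y i * (a * D.x j))) • g (cEv ι f (D.y j)) := fun i => by
      conv_lhs => rw [← D.dual2 (D.y i * a), cEv_map_sum, map_sum]
      refine Finset.sum_congr rfl fun j _ => ?_
      rw [cEv_map_smul, hg, mul_assoc]
    simp only [h1, Finset.smul_sum, smul_smul]
    rw [Finset.sum_comm]
    refine Finset.sum_congr rfl fun j _ => ?_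
    rw [← Finset.sum_smul, D.dual1]

theorem lift_eta (D : FrobData ι n) {Q : Type u} [AddCommGroup Q] [Module A Q] (g : N →+ Q)
    (hg : ∀ (r : R) m, g (r • m) = ι r • g m) (m : N) : D.lift g hg (D.eta m) = g m := by
  change ∑ i, D.x i • g (cEv ι (D.eta m) (D.y i)) = g m
  simp only [cEv_eta, hg, smul_smul]
  rw [← Finset.sum_smul]
  have := D.dual1 1
  simp only [mul_one] at this
  rw [this, one_smul]

end one

theorem cMap_eta (D : FrobData ι n) {N N' : Type u} [AddCommGroup N] [Module R N]
    [AddCommGroup N'] [Module R N'] (f : N →ₗ[R] N') (m : N) :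
    cMap ι f (D.eta m) = D.eta (f m) :=
  cEv_ext ι fun b => by rw [cEv_cMap, cEv_eta, cEv_eta, map_smul]

theorem projective (D : FrobData ι n) {P : Type u} [AddCommGroup P] [Module R P] [Module.Projective R P] :
    Module.Projective A (CoinducedModule ι P) := by
  letI : Module R (CoinducedModule ι P →₀ A) := Module.compHom _ ι
  letI i2 : Module R (CoinducedModule ι P) :=
    Module.compHom (CoinducedModule ι P) ι
  let p := Finsupp.linearCombination A (id : CoinducedModule ι P → CoinducedModule ι P)
  have hp : Function.Surjective p := fun f => ⟨Finsupp.single f 1, by simp [p]⟩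
  let p' : @LinearMap R R _ _ (RingHom.id R) (CoinducedModule ι P →₀ A)
      (CoinducedModule ι P) _ _ _ i2 :=
    { toFun := p, map_add' := p.map_add, map_smul' := fun r m => p.map_smul (ι r) m }
  let e : @LinearMap R R _ _ (RingHom.id R) P (CoinducedModule ι P) _ _ _ i2 :=
    { toFun := D.eta, map_add' := D.eta_add, map_smul' := D.eta_smul }
  obtain ⟨h, hh⟩ := Module.projective_lifting_property p' e hp
  let h0 : P →+ (CoinducedModule ι P →₀ A) := h.toAddMonoidHom
  have hs : ∀ (r : R) m, h0 (r • m) = ι r • h0 m := fun r m => h.map_smul r m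
  refine ⟨D.lift h0 hs, fun f => ?_⟩
  have : p.comp (D.lift h0 hs) = LinearMap.id := by
    apply D.hom_ext
    intro m
    rw [LinearMap.comp_apply, D.lift_eta]
    exact LinearMap.congr_fun hh m
  exact LinearMap.congr_fun this f

theorem res_projective (D : FrobData ι n) {Q : Type u} [AddCommGroup Q] [Module A Q] [Module.Projective A Q] :
    @Module.Projective R _ Q _ (Module.compHom Q ι) := by
  classical
  letI : Module R Q := Module.compHom Q ι
  letI : Module R A := Module.compHom A ι
  have hA : Module.Projective R A := by
    let s : A →ₗ[R] (Fin n → R) :=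
      { toFun := fun a i => D.τ (a * D.x i)
        map_add' := fun a b => by funext i; simp [add_mul]
        map_smul' := fun r a => by
          funext i
          change D.τ (ι r * a * D.x i) = r * D.τ (a * D.x i)
          rw [mul_assoc, D.left] }
    let t : (Fin n → R) →ₗ[R] A :=
      { toFun := fun v => ∑ i, ι (v i) * D.y i
        map_add' := fun v w => by simp [add_mul, Finset.sum_add_distrib]
        map_smul' := fun r v => by
          change ∑ i, ι (r * v i) * D.y i = ι r * ∑ i, ι (v i) * D.y i
          simp [Finset.mul_sum, mul_assoc] }
    exact Module.Projective.of_split s t (LinearMap.ext fun a => D.dual2 a)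
  obtain ⟨s, hs⟩ := (inferInstance : Module.Projective A Q)
  let p := Finsupp.linearCombination A (id : Q → Q)
  let s' : Q →ₗ[R] (Q →₀ A) :=
    { toFun := s, map_add' := s.map_add, map_smul' := fun r m => s.map_smul (ι r) m }
  let p' : (Q →₀ A) →ₗ[R] Q :=
    { toFun := p, map_add' := p.map_add, map_smul' := fun r m => p.map_smul (ι r) m }
  have : Module.Projective R (Q →₀ A) :=
    Module.Projective.of_equiv (finsuppLequivDFinsupp (ι := Q) (M := A) R).symm
  exact Module.Projective.of_split s' p' (LinearMap.ext fun a => hs a)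

/-- The comparison isomorphism. -/
theorem tensorIso (D : FrobData ι n) {N : Type u} [AddCommGroup N] [Module R N] :
    Nonempty (ExtendedTensor ι N ≃ₗ[A] CoinducedModule ι N) := by
  let S := Submodule.span A
    ({x : N →₀ A | ∃ n n' : N,
        x = Finsupp.single (n + n') 1 - Finsupp.single n 1 - Finsupp.single n' 1} ∪
     {x : N →₀ A | ∃ (r : R) (n : N),
        x = Finsupp.single (r • n) 1 - Finsupp.single n (ι r)})
  let q : (N →₀ A) →ₗ[A] ExtendedTensor ι N := S.mkQ
  let c : (N →₀ A) →ₗ[A] CoinducedModule ι N := Finsupp.linearCombination A D.eta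
  have hc : S ≤ LinearMap.ker c := by
    refine Submodule.span_le.2 ?_
    rintro z (⟨m, m', rfl⟩ | ⟨r, m, rfl⟩)
    · simp [c, D.eta_add]
    · simp [c, D.eta_smul]
  let F : ExtendedTensor ι N →ₗ[A] CoinducedModule ι N := S.liftQ c hc
  let g : N →+ ExtendedTensor ι N := AddMonoidHom.mk' (fun m => q (Finsupp.single m 1))
    (fun m m' => by
      rw [← map_add]
      refine (Submodule.Quotient.eq S).2 (Submodule.subset_span (Or.inl ⟨m, m', ?_⟩))
      abel)
  have hg : ∀ (r : R) m, g (r • m) = ι r • g m := fun r m => by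
    change q _ = ι r • q _
    rw [← map_smul]
    refine (Submodule.Quotient.eq S).2 (Submodule.subset_span (Or.inr ⟨r, m, ?_⟩))
    simp
  have hF : ∀ m, F (g m) = D.eta m := fun m => by
    change c (Finsupp.single m 1) = _
    simp [c]
  refine ⟨LinearEquiv.ofLinearMap F (D.lift g hg) ?_ ?_⟩
  · apply D.hom_ext
    intro m
    rw [LinearMap.comp_apply, D.lift_eta, hF]; rfl
  · refine Submodule.linearMap_qext S (Finsupp.lhom_ext' fun m => LinearMap.ext_ring ?_)
    change D.lift g hg (F (g m)) = g m
    rw [hF, D.lift_eta]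

/-- Coinduction preserves Gorenstein projectivity. -/
theorem gproj (D : FrobData ι n) {N : Type u} [AddCommGroup N] [Module R N]
    (h : IsGorensteinProjective R (ModuleCat.of R N))
    (X : Type u) [AddCommGroup X] [Module A X] (e : X ≃ₗ[A] CoinducedModule ι N) :
    IsGorensteinProjective A (ModuleCat.of A X) := by
  obtain ⟨P, f, hP, hcomp, hex, htot, ⟨k⟩⟩ := h
  refine ⟨fun i => ModuleCat.of A (CoinducedModule ι (P i)), fun i => cMap ι (f i),
    fun i => ?_, fun i => ?_, fun i => ?_, ?_, ?_⟩
  · haveI := hP i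
    exact D.projective
  · refine LinearMap.ext fun φ => cEv_ext ι fun b => ?_
    exact LinearMap.congr_fun (hcomp i) (cEv ι φ b)
  · apply le_antisymm
    · rintro _ ⟨φ, rfl⟩
      refine cEv_ext ι fun b => ?_
      exact LinearMap.congr_fun (hcomp i) (cEv ι φ b)
    · intro φ hφ
      have h1 : ∀ j, ∃ p, f (i + 1) p = cEv ι φ (D.y j) := fun j => by
        have : cEv ι φ (D.y j) ∈ LinearMap.ker (f i) :=
          congrArg (fun ψ => cEv ι ψ (D.y j)) (LinearMap.mem_ker.1 hφ)
        rw [← hex i] at this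
        exact this
      choose p hp using h1
      refine ⟨∑ j, D.x j • D.eta (p j), ?_⟩
      refine Eq.trans ?_ (D.expand φ)
      refine (map_sum (cMap ι (f (i+1))) _ _).trans ?_
      refine Finset.sum_congr rfl fun j _ => ?_
      refine (map_smul (cMap ι (f (i+1))) _ _).trans ?_
      rw [D.cMap_eta, hp]
  · intro Q hQ i g hg
    letI : Module R Q := Module.compHom Q ι
    have hQR : Module.Projective R Q := D.res_projective
    let g0 : P (i + 1) →ₗ[R] Q :=
      { toFun := fun m => g (D.eta m)
        map_add' := fun m m' => by rw [D.eta_add]; exact map_add g _ _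
        map_smul' := fun r m => by rw [D.eta_smul]; exact map_smul g _ _ }
    obtain ⟨h, hh⟩ := htot (ModuleCat.of R Q) hQR i g0 (LinearMap.ext fun m => by
      change g (D.eta (f (i + 1) m)) = 0
      rw [← D.cMap_eta]
      exact LinearMap.congr_fun hg (D.eta m))
    let h0 : P i →+ Q := h.toAddMonoidHom
    have hs : ∀ (r : R) m, h0 (r • m) = ι r • h0 m := fun r m => h.map_smul r m
    refine ⟨D.lift h0 hs, ?_⟩
    apply D.hom_ext
    intro m
    refine (congrArg (D.lift h0 hs)
      (D.cMap_eta (f i) m)).trans ?_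
    rw [D.lift_eta]
    exact LinearMap.congr_fun hh m
  · let j : N →ₗ[R] P (-1 + 1) := (LinearMap.ker (f (-1))).subtype.comp k.toLinearMap
    have hj : Function.Injective j := Subtype.val_injective.comp k.injective
    let J : CoinducedModule ι N →ₗ[A] CoinducedModule ι (P (-1 + 1)) := cMap ι j
    have hJ : Function.Injective J := fun φ ψ hh => cEv_ext ι fun b =>
      hj (congrArg (fun χ => cEv ι χ b) hh)
    have hr : LinearMap.range J = LinearMap.ker (cMap ι (f (-1))) := by
      apply le_antisymm
      · rintro _ ⟨φ, rfl⟩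
        exact cEv_ext ι fun b => (k (cEv ι φ b)).2
      · intro φ hφ
        have h0 : ∀ b, cEv ι φ b ∈ LinearMap.ker (f (-1)) := fun b =>
          congrArg (fun ψ => cEv ι ψ b) (LinearMap.mem_ker.1 hφ)
        have h1 : ∀ b, ∃ m, j m = cEv ι φ b := fun b =>
          ⟨k.symm ⟨_, h0 b⟩, congrArg Subtype.val (k.apply_symm_apply ⟨_, h0 b⟩)⟩
        choose m hm using h1
        refine ⟨cMk ι m (fun a b => hj ?_) (fun r a => hj ?_), cEv_ext ι hm⟩
        · rw [map_add, hm, hm, hm, cEv_map_add]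
        · rw [map_smul, hm, hm, cEv_map_smul]
    exact ⟨e.trans ((LinearEquiv.ofInjective J hJ).trans (LinearEquiv.ofEq _ _ hr))⟩

end FrobData

end Helpers

section Statement

variable {R A : Type u} [Ring R] [Ring A]

theorem stmt2 (ι : R →+* A) (hF : IsFrobeniusExtension ι)
    (M : Type u) [AddCommGroup M] [Module A M]
    (hM : IsGorensteinProjective R (@ModuleCat.of R _ M _ (Module.compHom M ι))) :
    IsGorensteinProjective A
        (ModuleCat.of A (@ExtendedTensor R A _ _ ι M _ (Module.compHom M ι))) ∧
      IsGorensteinProjective A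
        (ModuleCat.of A (@CoinducedModule R A _ _ ι M _ (Module.compHom M ι))) := by
  obtain ⟨-, τ, n, x, y, h1, h2, h3, h4⟩ := hF
  let D : FrobData ι n := ⟨τ, x, y, h1, h2, h3, h4⟩
  letI : Module R M := Module.compHom M ι
  obtain ⟨e⟩ := D.tensorIso (N := M)
  exact ⟨D.gproj hM _ e, D.gproj hM _ (LinearEquiv.refl A (CoinducedModule ι M))⟩

end Statement
end

section
/- Let R ⊂ A be a Frobenius extension of rings and let M be a left A-module. If the left A-modules A ⊗_R M and Hom_R(A, M) are both Gorenstein projective, then M is a Gorenstein projective left A-module. -/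
universe u

namespace FrobGP

open CategoryTheory CategoryTheory.Abelian CategoryTheory.Limits

section Basic

variable {A : Type u} [Ring A]

/-- Short exact sequences of modules. -/
def Ses {X Y Z : ModuleCat.{u} A} (f : X ⟶ Y) (g : Y ⟶ Z) : Prop :=
  ∃ w : f ≫ g = 0, (ShortComplex.mk f g w).ShortExact

theorem Ses.mk' {X Y Z : ModuleCat.{u} A} {f : X ⟶ Y} {g : Y ⟶ Z}
    (hf : Function.Injective f) (he : Function.Exact f g) (hg : Function.Surjective g) :
    Ses f g := by
  have w : f ≫ g = 0 := by
    ext x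
    exact he.apply_apply_eq_zero x
  exact ⟨w, ModuleCat.shortComplex_shortExact _ he hf hg⟩

theorem Ses.inj {X Y Z : ModuleCat.{u} A} {f : X ⟶ Y} {g : Y ⟶ Z} (h : Ses f g) :
    Function.Injective f := by
  obtain ⟨w, h⟩ := h
  exact h.moduleCat_injective_f

theorem Ses.surj {X Y Z : ModuleCat.{u} A} {f : X ⟶ Y} {g : Y ⟶ Z} (h : Ses f g) :
    Function.Surjective g := by
  obtain ⟨w, h⟩ := h
  exact h.moduleCat_surjective_g

theorem Ses.exact {X Y Z : ModuleCat.{u} A} {f : X ⟶ Y} {g : Y ⟶ Z} (h : Ses f g) :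
    Function.Exact f g := by
  obtain ⟨w, h⟩ := h
  exact (ShortComplex.ShortExact.moduleCat_exact_iff_function_exact _).1 h.exact

theorem Ses.desc {X Y Z N : ModuleCat.{u} A} {f : X ⟶ Y} {g : Y ⟶ Z} (h : Ses f g)
    (k : Y ⟶ N) (hk : f ≫ k = 0) : ∃ d : Z ⟶ N, g ≫ d = k := by
  obtain ⟨w, h⟩ := h
  have := h.epi_g
  exact ⟨h.exact.desc k hk, h.exact.g_desc k hk⟩

/-- Vanishing of a given Ext group. -/
abbrev Van (X N : ModuleCat.{u} A) (n : ℕ) : Prop := ∀ e : Ext.{u} X N n, e = 0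

theorem Van.of_retract {X Y N : ModuleCat.{u} A} {n : ℕ} (s : X ⟶ Y) (r : Y ⟶ X)
    (h : s ≫ r = 𝟙 X) (hY : Van Y N n) : Van X N n := by
  intro e
  rw [← Ext.mk₀_id_comp e, ← h, ← Ext.mk₀_comp_mk₀_assoc, hY (Ext.comp _ e _), Ext.comp_zero]

theorem Van.of_retract' {X N N' : ModuleCat.{u} A} {n : ℕ} (s : N ⟶ N') (r : N' ⟶ N)
    (h : s ≫ r = 𝟙 N) (hY : Van X N' n) : Van X N n := by
  intro e
  rw [← Ext.comp_mk₀_id e, ← h, ← Ext.mk₀_comp_mk₀,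
    ← Ext.comp_assoc_of_third_deg_zero, hY (Ext.comp e _ _), Ext.zero_comp]

theorem Van.middle {X Y Z N : ModuleCat.{u} A} {n : ℕ} {f : X ⟶ Y} {g : Y ⟶ Z}
    (h : Ses f g) (hX : Van X N n) (hZ : Van Z N n) : Van Y N n := by
  obtain ⟨w, h⟩ := h
  intro e
  obtain ⟨e', rfl⟩ := Ext.contravariant_sequence_exact₂ h N e (hX _)
  rw [hZ e', Ext.comp_zero]

theorem Van.extend {X Y Z N : ModuleCat.{u} A} {f : X ⟶ Y} {g : Y ⟶ Z}
    (h : Ses f g) (hZ : Van Z N 1) (a : X ⟶ N) : ∃ b : Y ⟶ N, f ≫ b = a := by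
  obtain ⟨w, h⟩ := h
  obtain ⟨e', he⟩ := Ext.contravariant_sequence_exact₁ h N (Ext.mk₀ a) (n₁ := 1) rfl (hZ _)
  obtain ⟨b, rfl⟩ := (Ext.mk₀_bijective _ _).2 e'
  refine ⟨b, ?_⟩
  rw [Ext.mk₀_comp_mk₀] at he
  exact (Ext.mk₀_bijective _ _).1 he

theorem Van.one_of_extend {X Y Z N : ModuleCat.{u} A} {f : X ⟶ Y} {g : Y ⟶ Z}
    (h : Ses f g) (hY : Projective Y) (H : ∀ a : X ⟶ N, ∃ b : Y ⟶ N, f ≫ b = a) :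
    Van Z N 1 := by
  obtain ⟨w, h⟩ := h
  intro e
  obtain ⟨e', rfl⟩ := Ext.contravariant_sequence_exact₃ h N e
    (Ext.eq_zero_of_projective _) (n₀ := 0) rfl
  obtain ⟨a, rfl⟩ := (Ext.mk₀_bijective _ _).2 e'
  obtain ⟨b, rfl⟩ := H a
  rw [← Ext.mk₀_comp_mk₀, h.extClass_comp_assoc]

theorem Van.shift {X Y Z N : ModuleCat.{u} A} {n : ℕ} {f : X ⟶ Y} {g : Y ⟶ Z}
    (h : Ses f g) (hY : Projective Y) : Van Z N (n + 2) ↔ Van X N (n + 1) := by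
  obtain ⟨w, h⟩ := h
  constructor
  · intro H e
    obtain ⟨e', rfl⟩ := Ext.contravariant_sequence_exact₁ h N e (n₁ := n + 2) (by lia) (H _)
    rw [Ext.eq_zero_of_projective e', Ext.comp_zero]
  · intro H e
    obtain ⟨e', rfl⟩ := Ext.contravariant_sequence_exact₃ h N e
      (Ext.eq_zero_of_projective _) (n₀ := n + 1) (by lia)
    rw [H e', Ext.comp_zero]

/-- Ext-orthogonality to all projectives in positive degrees. -/
def Perp (X : ModuleCat.{u} A) : Prop :=
  ∀ (n : ℕ) (Q : ModuleCat.{u} A), Projective Q → Van X Q (n + 1)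

/-- A coinductive class of Gorenstein projectives. -/
def Good (C : ModuleCat.{u} A → Prop) : Prop :=
  ∀ X, C X → Perp X ∧ ∃ (P X' : ModuleCat.{u} A) (f : X ⟶ P) (g : P ⟶ X'),
    Ses f g ∧ Projective P ∧ C X'

/-- Gorenstein projectives, coinductively. -/
def GP (X : ModuleCat.{u} A) : Prop := ∃ C, Good C ∧ C X

theorem GP.good : Good (GP (A := A)) := by
  rintro X ⟨C, hC, hX⟩
  obtain ⟨h1, P, X', f, g, h, hP, h'⟩ := hC X hX
  exact ⟨h1, P, X', f, g, h, hP, C, hC, h'⟩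

theorem GP.perp {X : ModuleCat.{u} A} (h : GP X) : Perp X := (GP.good X h).1

theorem exists_cover (X : ModuleCat.{u} A) : ∃ (K P : ModuleCat.{u} A) (f : K ⟶ P) (g : P ⟶ X),
    Ses f g ∧ Projective P := by
  refine ⟨_, _, kernel.ι (Projective.π X), Projective.π X, ⟨kernel.condition _, ?_⟩, inferInstance⟩
  exact { exact := ShortComplex.exact_of_f_is_kernel _ (kernelIsKernel _) }

theorem Perp.of_retract {X Y : ModuleCat.{u} A} (s : X ⟶ Y) (r : Y ⟶ X)
    (h : s ≫ r = 𝟙 X) (hY : Perp Y) : Perp X :=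
  fun n Q hQ => Van.of_retract s r h (hY n Q hQ)

theorem GP.syzygy {K P X : ModuleCat.{u} A} {f : K ⟶ P} {g : P ⟶ X}
    (h : Ses f g) (hP : Projective P) (hX : GP X) : GP K := by
  refine ⟨fun Y => Y = K ∨ GP Y, ?_, Or.inl rfl⟩
  rintro Y (rfl | hY)
  · exact ⟨fun n Q hQ => (Van.shift h hP).1 (hX.perp (n + 1) Q hQ), P, X, f, g, h, hP, Or.inr hX⟩
  · obtain ⟨h1, P, X', f, g, h, hP, h'⟩ := GP.good Y hY
    exact ⟨h1, P, X', f, g, h, hP, Or.inr h'⟩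

/-- Extension closure. -/
theorem GP.extension {X Y Z : ModuleCat.{u} A} {f : X ⟶ Y} {g : Y ⟶ Z}
    (h : Ses f g) (hX : GP X) (hZ : GP Z) : GP Y := by
  refine ⟨fun Y => ∃ (X Z : ModuleCat.{u} A) (f : X ⟶ Y) (g : Y ⟶ Z), Ses f g ∧ GP X ∧ GP Z,
    ?_, X, Z, f, g, h, hX, hZ⟩
  clear h hX hZ f g X Y Z
  rintro Y ⟨X, Z, f, g, h, hX, hZ⟩
  obtain ⟨pX, P, X', i, p, hi, hP, hX'⟩ := GP.good X hX
  obtain ⟨pZ, Q, Z', j, q, hj, hQ, hZ'⟩ := GP.good Z hZ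
  refine ⟨fun n Q hQ => Van.middle h (pX n Q hQ) (pZ n Q hQ), ?_⟩
  obtain ⟨φ, hφ⟩ := Van.extend h (pZ 0 P hP) i
  have hφ' : ∀ x, φ (f x) = i x := fun x => by rw [← hφ]; rfl
  let k : Y →ₗ[A] (P × Q) := φ.hom.prod (j.hom ∘ₗ g.hom)
  have hk : ∀ y, k y = (φ y, j (g y)) := fun y => rfl
  let C : ModuleCat.{u} A := ModuleCat.of A ((P × Q) ⧸ LinearMap.range k)
  let a0 : P ⟶ C := ModuleCat.ofHom ((LinearMap.range k).mkQ ∘ₗ LinearMap.inl A P Q)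
  have ha0 : i ≫ a0 = 0 := by
    ext y
    refine (Submodule.Quotient.mk_eq_zero _).2 ⟨f y, ?_⟩
    rw [hk, hφ', (h.exact (f y)).2 ⟨y, rfl⟩, map_zero]
    rfl
  obtain ⟨a, ha⟩ := hi.desc a0 ha0
  have ha' : ∀ x : P, a (p x) = (LinearMap.range k).mkQ (x, 0) := fun x => by
    rw [← ModuleCat.comp_apply, ha]; rfl
  let b0 : (P × Q) →ₗ[A] Z' := q.hom ∘ₗ LinearMap.snd A P Q
  have hb0 : LinearMap.range k ≤ LinearMap.ker b0 := by
    rintro _ ⟨y, rfl⟩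
    exact (hj.exact (j (g y))).2 ⟨_, rfl⟩
  let b : C ⟶ Z' := ModuleCat.ofHom ((LinearMap.range k).liftQ b0 hb0)
  have hb' : ∀ x : P × Q, b ((LinearMap.range k).mkQ x) = q x.2 := fun x => rfl
  refine ⟨ModuleCat.of A (P × Q), C, ModuleCat.ofHom k, ModuleCat.ofHom (LinearMap.range k).mkQ,
    Ses.mk' ?_ ?_ ?_, ?_, X', Z', a, b, Ses.mk' ?_ ?_ ?_, hX', hZ'⟩
  · refine (injective_iff_map_eq_zero k).2 fun y hy => ?_
    rw [hk, Prod.mk_eq_zero] at hy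
    have h2 : g y = 0 := hj.inj (by rw [hy.2, map_zero])
    obtain ⟨x, rfl⟩ := (h.exact y).1 h2
    have : x = 0 := hi.inj (by rw [← hφ', hy.1, map_zero])
    rw [this, map_zero]
  · exact LinearMap.exact_map_mkQ_range k
  · exact Submodule.mkQ_surjective _
  · have := (IsProjective.iff_projective P).2 hP
    have := (IsProjective.iff_projective Q).2 hQ
    exact (IsProjective.iff_projective (P × Q)).1 inferInstance
  · refine (injective_iff_map_eq_zero a.hom).2 fun x' hx => ?_
    obtain ⟨x, rfl⟩ := hi.surj x'
    replace hx : a (p x) = 0 := hx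
    rw [ha'] at hx
    obtain ⟨y, hy⟩ := (Submodule.Quotient.mk_eq_zero _).1 hx
    rw [hk, Prod.mk.injEq] at hy
    have h2 : g y = 0 := hj.inj (by rw [hy.2, map_zero])
    obtain ⟨z, rfl⟩ := (h.exact y).1 h2
    rw [← hy.1, hφ']
    exact (hi.exact _).2 ⟨z, rfl⟩
  · intro c
    constructor
    · obtain ⟨⟨x, y⟩, rfl⟩ := Submodule.mkQ_surjective _ c
      intro hc
      rw [hb'] at hc
      obtain ⟨z, hz⟩ := (hj.exact y).1 hc
      obtain ⟨w, rfl⟩ := h.surj z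
      refine ⟨p (x - φ w), ?_⟩
      rw [ha']
      refine (Submodule.Quotient.eq _).2 ⟨-w, ?_⟩
      rw [map_neg, hk, ← hz]
      ext <;> simp
    · rintro ⟨x', rfl⟩
      obtain ⟨x, rfl⟩ := hi.surj x'
      rw [ha', hb', map_zero]
  · intro z
    obtain ⟨y, rfl⟩ := hj.surj z
    exact ⟨(LinearMap.range k).mkQ (0, y), hb' _⟩

/-- Closure under retracts. -/
theorem GP.of_retract {X Y : ModuleCat.{u} A} (s : X ⟶ Y) (r : Y ⟶ X)
    (h : s ≫ r = 𝟙 X) (hY : GP Y) : GP X := by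
  refine ⟨fun X => ∃ (Y : ModuleCat.{u} A) (s : X ⟶ Y) (r : Y ⟶ X), s ≫ r = 𝟙 X ∧ GP Y,
    ?_, Y, s, r, h, hY⟩
  clear h hY s r X Y
  rintro C ⟨G, s, r, h, hG⟩
  refine ⟨Perp.of_retract s r h hG.perp, ?_⟩
  have hsr : ∀ c, r (s c) = c := fun c => by rw [← ModuleCat.comp_apply, h]; rfl
  obtain ⟨-, P, G', i, q, hi, hP, hG'⟩ := GP.good G hG
  let k : C ⟶ P := s ≫ i
  have hk : ∀ c, k c = i (s c) := fun c => rfl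
  let N := LinearMap.range k.hom
  let K : ModuleCat.{u} A := ModuleCat.of A (P ⧸ N)
  have hses : Ses k (ModuleCat.ofHom N.mkQ : P ⟶ K) := by
    refine Ses.mk' ?_ (LinearMap.exact_map_mkQ_range k.hom) (Submodule.mkQ_surjective _)
    intro c c' hc
    have h3 : s c = s c' := hi.inj hc
    rw [← hsr c, ← hsr c', h3]
  let f : G ⟶ ModuleCat.of A (K × C) := ModuleCat.ofHom ((N.mkQ ∘ₗ i.hom).prod r.hom)
  have hf : ∀ x, f x = (N.mkQ (i x), r x) := fun x => rfl
  let g0 : K →ₗ[A] G' := N.liftQ q.hom (by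
    rintro _ ⟨y, rfl⟩
    exact (hi.exact (i (s y))).2 ⟨_, rfl⟩)
  let g : ModuleCat.of A (K × C) ⟶ G' := ModuleCat.ofHom (g0 ∘ₗ LinearMap.fst A K C)
  have hg : ∀ x c, g (N.mkQ x, c) = q x := fun x c => rfl
  have hfg : Ses f g := by
    refine Ses.mk' ?_ ?_ ?_
    · refine (injective_iff_map_eq_zero f.hom).2 fun y hy => ?_
      replace hy : f y = 0 := hy
      rw [hf, Prod.mk_eq_zero] at hy
      obtain ⟨c, hc⟩ := (Submodule.Quotient.mk_eq_zero _).1 hy.1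
      have : s c = y := hi.inj hc
      subst this
      have h2 := hy.2
      rw [hsr] at h2
      rw [h2, map_zero]
    · rintro ⟨c, d⟩
      obtain ⟨x, rfl⟩ := Submodule.mkQ_surjective _ c
      constructor
      · intro hc
        rw [hg] at hc
        obtain ⟨z, rfl⟩ := (hi.exact x).1 hc
        refine ⟨z + s (d - r z), ?_⟩
        rw [hf]
        refine Prod.ext ?_ ?_
        · refine (Submodule.Quotient.eq _).2 ⟨d - r z, ?_⟩
          change i (s (d - r z)) = _
          rw [map_add i.hom]
          abel
        · change r (z + s (d - r z)) = d
          rw [map_add, hsr]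
          abel
      · rintro ⟨z, hz⟩
        rw [← hz, hf, hg]
        exact (hi.exact _).2 ⟨_, rfl⟩
    · intro z
      obtain ⟨y, rfl⟩ := hi.surj z
      exact ⟨(N.mkQ y, 0), hg _ _⟩
  exact ⟨P, K, k, _, hses, hP, _, ModuleCat.ofHom (LinearMap.inl A K C),
    ModuleCat.ofHom (LinearMap.fst A K C), by ext x; rfl, GP.extension hfg hG hG'⟩

end Basic
end FrobGP

namespace FrobGP

open CategoryTheory CategoryTheory.Abelian CategoryTheory.Limits

section Functors

variable {A B : Type u} [Ring A] [Ring B]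

/-- Functors sending short exact sequences to short exact sequences. -/
def ExF (F : ModuleCat.{u} A ⥤ ModuleCat.{u} B) : Prop :=
  ∀ (X Y Z : ModuleCat.{u} A) (f : X ⟶ Y) (g : Y ⟶ Z), Ses f g → Ses (F.map f) (F.map g)

theorem exF_of_adj (F : ModuleCat.{u} A ⥤ ModuleCat.{u} B) (hl : F.IsLeftAdjoint)
    (hr : F.IsRightAdjoint) : ExF F := by
  rintro X Y Z f g ⟨w, h⟩
  have : PreservesLimitsOfSize.{0, 0} F := inferInstance
  have : PreservesColimitsOfSize.{0, 0} F := inferInstance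
  have : PreservesFiniteLimits F := inferInstance
  have : PreservesFiniteColimits F := inferInstance
  have : F.PreservesZeroMorphisms := inferInstance
  have h2 := h.map_of_exact F
  exact ⟨_, h2⟩

variable {F : ModuleCat.{u} A ⥤ ModuleCat.{u} B} {G : ModuleCat.{u} B ⥤ ModuleCat.{u} A}

theorem van_adj (adj : F ⊣ G) (hF : ExF F) (hP : ∀ P, Projective P → Projective (F.obj P))
    (n : ℕ) (X : ModuleCat.{u} A) (N : ModuleCat.{u} B) :
    Van (F.obj X) N (n + 1) ↔ Van X (G.obj N) (n + 1) := by
  induction n generalizing X with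
  | zero =>
    obtain ⟨K, P, f, g, h, hPr⟩ := exists_cover X
    have h' := hF _ _ _ _ _ h
    constructor
    · intro H
      refine Van.one_of_extend h hPr fun a => ?_
      obtain ⟨b, hb⟩ := Van.extend h' H ((adj.homEquiv _ _).symm a)
      refine ⟨adj.homEquiv _ _ b, ?_⟩
      rw [← adj.homEquiv_naturality_left, hb, Equiv.apply_symm_apply]
    · intro H
      refine Van.one_of_extend h' (hP _ hPr) fun a => ?_
      obtain ⟨b, hb⟩ := Van.extend h H (adj.homEquiv _ _ a)
      refine ⟨(adj.homEquiv _ _).symm b, ?_⟩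
      rw [← adj.homEquiv_naturality_left_symm, hb, Equiv.symm_apply_apply]
  | succ n ih =>
    obtain ⟨K, P, f, g, h, hPr⟩ := exists_cover X
    rw [Van.shift h hPr, Van.shift (hF _ _ _ _ _ h) (hP _ hPr), ih]

theorem GP.map (adj : F ⊣ G) (hF : ExF F) (hP : ∀ P, Projective P → Projective (F.obj P))
    (hQ : ∀ P, Projective P → Projective (G.obj P)) {X : ModuleCat.{u} A} (hX : GP X) :
    GP (F.obj X) := by
  refine ⟨fun Y => ∃ X, GP X ∧ Y = F.obj X, ?_, X, hX, rfl⟩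
  rintro _ ⟨X, hX, rfl⟩
  obtain ⟨h1, P, X', f, g, h, hPr, hX'⟩ := GP.good X hX
  exact ⟨fun n Q h => (van_adj adj hF hP n X Q).2 (h1 n _ (hQ Q h)), F.obj P, F.obj X',
    F.map f, F.map g, hF _ _ _ _ _ h, hP _ hPr, X', hX', rfl⟩

/-- The third isomorphism sequence. -/
theorem exists_tri {X Y P Z : ModuleCat.{u} A} (i : X ⟶ Y) (hi : Function.Injective i)
    {j : Y ⟶ P} {q : P ⟶ Z} (h : Ses j q) :
    ∃ (D C : ModuleCat.{u} A) (d : Y ⟶ D) (c : P ⟶ C) (a : D ⟶ C) (b : C ⟶ Z),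
      Ses i d ∧ Ses (i ≫ j) c ∧ Ses a b := by
  let N := LinearMap.range i.hom
  let N' := LinearMap.range (i ≫ j).hom
  let D : ModuleCat.{u} A := ModuleCat.of A (Y ⧸ N)
  let C : ModuleCat.{u} A := ModuleCat.of A (P ⧸ N')
  let d : Y ⟶ D := ModuleCat.ofHom N.mkQ
  let c : P ⟶ C := ModuleCat.ofHom N'.mkQ
  have hd : Ses i d :=
    Ses.mk' hi (LinearMap.exact_map_mkQ_range i.hom) (Submodule.mkQ_surjective _)
  have hc : Ses (i ≫ j) c :=
    Ses.mk' (h.inj.comp hi) (LinearMap.exact_map_mkQ_range (i ≫ j).hom)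
      (Submodule.mkQ_surjective _)
  obtain ⟨a, ha⟩ := hd.desc (j ≫ c) (by
    rw [← Category.assoc]
    exact hc.1)
  obtain ⟨b, hb⟩ := hc.desc q (by
    rw [Category.assoc, h.1, comp_zero])
  have ha' : ∀ y, a (d y) = c (j y) := fun y => by
    rw [← ModuleCat.comp_apply, ha]; rfl
  have hb' : ∀ y, b (c y) = q y := fun y => by
    rw [← ModuleCat.comp_apply, hb]
  refine ⟨D, C, d, c, a, b, hd, hc, Ses.mk' ?_ ?_ ?_⟩
  · refine (injective_iff_map_eq_zero a.hom).2 fun y hy => ?_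
    obtain ⟨y, rfl⟩ := hd.surj y
    replace hy : a (d y) = 0 := hy
    rw [ha'] at hy
    obtain ⟨x, hx⟩ := (hc.exact _).1 hy
    have : i x = y := h.inj hx
    exact (hd.exact _).2 ⟨x, this⟩
  · intro z
    obtain ⟨z, rfl⟩ := hc.surj z
    rw [hb']
    constructor
    · intro hz
      obtain ⟨y, rfl⟩ := (h.exact z).1 hz
      exact ⟨d y, ha' y⟩
    · rintro ⟨w, hw⟩
      obtain ⟨w, rfl⟩ := hd.surj w
      rw [ha'] at hw
      rw [← hb', ← hw, hb']
      exact (h.exact _).2 ⟨_, rfl⟩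
  · intro z
    obtain ⟨y, rfl⟩ := h.surj z
    exact ⟨c y, hb' y⟩

/-- The abstract main theorem. -/
theorem main_abstract (adj : F ⊣ G) (adj' : G ⊣ F) [F.Faithful] (M : ModuleCat.{u} A)
    (hM : GP (G.obj (F.obj M))) : GP M := by
  have hFl := adj.isLeftAdjoint
  have hFr := adj'.isRightAdjoint
  have hGl := adj'.isLeftAdjoint
  have hGr := adj.isRightAdjoint
  have hF := exF_of_adj F hFl hFr
  have hG := exF_of_adj G hGl hGr
  have hFP : ∀ P, Projective P → Projective (F.obj P) := fun P h => adj.map_projective P h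
  have hGP : ∀ P, Projective P → Projective (G.obj P) := fun P h => adj'.map_projective P h
  have hret : GP (F.obj M) :=
    GP.of_retract (F.map (adj.unit.app M)) (adj.counit.app (F.obj M))
      (adj.left_triangle_components M) (GP.map adj hF hFP hGP hM)
  refine ⟨fun X => GP (F.obj X), ?_, hret⟩
  intro X hX
  constructor
  · intro n Q hQ
    have he : Epi (adj'.counit.app Q) := inferInstance
    refine Van.of_retract' (Projective.factorThru (𝟙 Q) (adj'.counit.app Q)) (adj'.counit.app Q)
      (Projective.factorThru_comp _ _) ?_
    exact (van_adj adj hF hFP n X (F.obj Q)).1 (hX.perp n _ (hFP _ hQ))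
  · have hGX : GP (G.obj (F.obj X)) := GP.map adj' hG hGP hFP hX
    obtain ⟨-, P, Y, j, q, hjq, hP, hY⟩ := GP.good _ hGX
    have hm : Mono (adj.unit.app X) := inferInstance
    obtain ⟨D, C, d, c, a, b, hd, hc, hab⟩ := exists_tri (adj.unit.app X)
      ((ModuleCat.mono_iff_injective _).1 hm) hjq
    refine ⟨P, C, _, c, hc, hP, ?_⟩
    refine GP.extension (hF _ _ _ _ _ hab) ?_ (GP.map adj hF hFP hGP hY)
    have hd' := hF _ _ _ _ _ hd
    -- the section
    let e : F.obj (G.obj (F.obj X)) ⟶ F.obj (G.obj (F.obj X)) :=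
      𝟙 _ - adj.counit.app (F.obj X) ≫ F.map (adj.unit.app X)
    obtain ⟨t, ht⟩ := hd'.desc e (by
      rw [Preadditive.comp_sub, ← Category.assoc]
      erw [adj.left_triangle_components X, Category.id_comp, Category.comp_id]
      exact sub_self _)
    refine GP.of_retract t (F.map d) ?_ (GP.map adj hF hFP hGP hGX)
    have hep : Epi (F.map d) := (ModuleCat.epi_iff_surjective _).2 hd'.surj
    rw [← cancel_epi (F.map d), ← Category.assoc, ht, Preadditive.sub_comp, Category.assoc,
      hd'.1, comp_zero, sub_zero]
    exact (Category.id_comp _).trans (Category.comp_id _).symm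

end Functors
end FrobGP

namespace FrobGP

open CategoryTheory CategoryTheory.Abelian CategoryTheory.Limits

section Frob

variable {R A : Type u} [Ring R] [Ring A] (ι : R →+* A)

theorem coext_map_smul (N : ModuleCat.{u} R) (f : (ModuleCat.coextendScalars ι).obj N)
    (r : R) (a : A) : f (ι r * a) = r • f a :=
  (ModuleCat.CoextendScalars.equiv ι N f).map_smul r a

/-- Build an element of the coextension. -/
noncomputable def mkCo (N : ModuleCat.{u} R) (f : A →+ N) (hf : ∀ (r : R) (a : A), f (ι r * a) = r • f a) :
    (ModuleCat.coextendScalars ι).obj N :=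
  (ModuleCat.CoextendScalars.equiv ι N).symm
    { toFun := fun a : A => f a
      map_add' := fun a b : A => f.map_add a b
      map_smul' := fun r (a : A) => hf r a }

theorem mkCo_apply (N : ModuleCat.{u} R) (f : A →+ N)
    (hf : ∀ (r : R) (a : A), f (ι r * a) = r • f a) (a : A) : mkCo ι N f hf a = f a := rfl

theorem co_ext {N : ModuleCat.{u} R} {f g : (ModuleCat.coextendScalars ι).obj N}
    (h : ∀ a : A, f a = g a) : f = g :=
  ModuleCat.CoextendScalars.ext (LinearMap.ext h)

theorem co_add {N : ModuleCat.{u} R} (f g : (ModuleCat.coextendScalars ι).obj N) (a : A) :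
    (f + g) a = f a + g a := rfl

/-- unit -/
noncomputable def unitMap (τ : A →+ R) (h1 : ∀ (r : R) (a : A), τ (ι r * a) = r * τ a)
    (h2 : ∀ (a : A) (r : R), τ (a * ι r) = τ a * r) (N : ModuleCat.{u} R) :
    N ⟶ (ModuleCat.restrictScalars ι).obj ((ModuleCat.coextendScalars ι).obj N) :=
  ModuleCat.ofHom (Y := (ModuleCat.restrictScalars ι).obj ((ModuleCat.coextendScalars ι).obj N))
  { toFun := fun n => mkCo ι N
      { toFun := fun a => τ a • n
        map_zero' := by rw [map_zero, zero_smul]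
        map_add' := fun a b => by rw [map_add, add_smul] }
      (fun r a => by
        change τ (ι r * a) • n = r • τ a • n
        rw [h1, mul_smul])
    map_add' := fun n m => co_ext ι fun a => smul_add (τ a) n m
    map_smul' := fun r n => co_ext ι fun a => by
      change τ a • r • n = τ (a * ι r) • n
      rw [h2, mul_smul] }

/-- Evaluation with values in the `A`-module. -/
noncomputable def evX (X : ModuleCat.{u} A)
    (f : (ModuleCat.coextendScalars ι).obj ((ModuleCat.restrictScalars ι).obj X)) :
    A →+ X where
  toFun a := f a
  map_zero' := (ModuleCat.CoextendScalars.equiv ι _ f).map_zero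
  map_add' a b := (ModuleCat.CoextendScalars.equiv ι _ f).map_add a b

theorem evX_smul (X : ModuleCat.{u} A)
    (f : (ModuleCat.coextendScalars ι).obj ((ModuleCat.restrictScalars ι).obj X))
    (r : R) (a : A) : evX ι X f (ι r * a) = ι r • evX ι X f a :=
  coext_map_smul ι _ f r a

/-- counit -/
noncomputable def counitMap (τ : A →+ R) (n : ℕ) (x y : Fin n → A)
    (h3 : ∀ a : A, ∑ i, x i * ι (τ (y i * a)) = a)
    (h4 : ∀ a : A, ∑ i, ι (τ (a * x i)) * y i = a) (X : ModuleCat.{u} A) :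
    (ModuleCat.coextendScalars ι).obj ((ModuleCat.restrictScalars ι).obj X) ⟶ X :=
  ModuleCat.ofHom
    (X := (ModuleCat.coextendScalars ι).obj ((ModuleCat.restrictScalars ι).obj X))
  { toFun := fun f => ∑ i, x i • evX ι X f (y i)
    map_add' := fun f g => by
      rw [← Finset.sum_add_distrib]
      exact Finset.sum_congr rfl fun i _ => smul_add (x i) (evX ι X f (y i)) (evX ι X g (y i))
    map_smul' := fun a f => by
      change ∑ i, x i • evX ι X f (y i * a) = a • ∑ i, x i • evX ι X f (y i)
      have key : ∀ i, evX ι X f (y i * a) =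
          ∑ j, ι (τ (y i * a * x j)) • evX ι X f (y j) := by
        intro i
        conv_lhs => rw [← h4 (y i * a)]
        rw [map_sum]
        exact Finset.sum_congr rfl fun j _ => evX_smul ι X f _ _
      simp_rw [key, Finset.smul_sum]
      rw [Finset.sum_comm]
      refine Finset.sum_congr rfl fun j _ => ?_
      simp_rw [smul_smul]
      rw [← Finset.sum_smul]
      congr 1
      conv_rhs => rw [← h3 (a * x j)]
      simp_rw [mul_assoc] }

theorem exists_adj (hF : IsFrobeniusExtension ι) :
    Nonempty (ModuleCat.coextendScalars.{u, u, u} ι ⊣ ModuleCat.restrictScalars.{u, u, u} ι) := by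
  obtain ⟨-, τ, n, x, y, h1, h2, h3, h4⟩ := hF
  refine ⟨Adjunction.mkOfUnitCounit
    { unit := { app := fun N => unitMap ι τ h1 h2 N, naturality := ?_ }
      counit := { app := fun X => counitMap ι τ n x y h3 h4 X, naturality := ?_ }
      left_triangle := ?_
      right_triangle := ?_ }⟩
  · intro N N' f
    ext m
    refine co_ext ι fun a => ?_
    exact (f.hom.map_smul (τ a) m).symm
  · intro X X' g
    ext f
    change ∑ i, x i • g.hom (evX ι X f (y i)) = g.hom (∑ i, x i • evX ι X f (y i))
    rw [map_sum]
    exact Finset.sum_congr rfl fun i _ => (g.hom.map_smul (x i) (evX ι X f (y i))).symm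
  · ext N f
    change (ModuleCat.coextendScalars ι).obj N at f
    refine co_ext ι fun a => ?_
    have : ∀ (s : Finset (Fin n)) (φ : Fin n → (ModuleCat.coextendScalars ι).obj N),
        (∑ i ∈ s, φ i) a = ∑ i ∈ s, φ i a := fun s φ => by
      refine (congrArg (fun z => z a) (map_sum (ModuleCat.CoextendScalars.equiv ι N) φ s)).trans ?_
      exact LinearMap.sum_apply _ _ _
    refine (this _ _).trans ?_
    change ∑ i, τ (a * x i) • f (y i) = f a
    conv_rhs => rw [← h4 a]
    refine Eq.symm ((map_sum (ModuleCat.CoextendScalars.equiv ι _ f) _ _).trans ?_)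
    exact Finset.sum_congr rfl fun j _ => coext_map_smul ι _ f _ _
  · ext X m
    change X at m
    change ∑ i, x i • ι (τ (y i)) • m = m
    simp_rw [smul_smul]
    rw [← Finset.sum_smul]
    have := h3 1
    simp_rw [mul_one] at this
    rw [this, one_smul]

theorem main_frob (hF : IsFrobeniusExtension ι) (M : ModuleCat.{u} A)
    (hM : GP ((ModuleCat.coextendScalars.{u, u, u} ι).obj
      ((ModuleCat.restrictScalars.{u, u, u} ι).obj M))) : GP M := by
  obtain ⟨adj'⟩ := exists_adj ι hF
  exact main_abstract (ModuleCat.restrictCoextendScalarsAdj.{u, u, u} ι) adj' M hM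

end Frob
end FrobGP

namespace FrobGP

open CategoryTheory CategoryTheory.Abelian CategoryTheory.Limits

section Compare

variable {A : Type u} [Ring A]

theorem gp_of_isGorensteinProjective {M : ModuleCat.{u} A} (h : IsGorensteinProjective A M) :
    GP M := by
  obtain ⟨P, f, hP, -, hex, hQ, ⟨e⟩⟩ := h
  have hP' : ∀ i, Projective (P i) := fun i => (IsProjective.iff_projective (P i)).1 (hP i)
  have hz : ∀ i x, f i (f (i + 1) x) = 0 := fun i x => by
    have : f (i + 1) x ∈ LinearMap.ker (f i) := by rw [← hex i]; exact ⟨x, rfl⟩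
    exact this
  -- the cycles
  let Z : ℤ → ModuleCat.{u} A := fun i => ModuleCat.of A (LinearMap.ker (f i))
  let a : ∀ i, Z i ⟶ P (i + 1) := fun i => ModuleCat.ofHom (LinearMap.ker (f i)).subtype
  let b : ∀ i, P (i + 1 + 1) ⟶ Z i := fun i =>
    ModuleCat.ofHom (LinearMap.codRestrict _ (f (i + 1)) (hz i))
  have hses : ∀ i, Ses (a (i + 1)) (b i) := by
    intro i
    refine Ses.mk' Subtype.val_injective ?_ ?_
    · intro x
      constructor
      · intro hx
        exact ⟨⟨x, congrArg Subtype.val hx⟩, rfl⟩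
      · rintro ⟨x, rfl⟩
        exact Subtype.ext x.2
    · rintro ⟨x, hx⟩
      have hx' := hx
      rw [← hex i] at hx'
      obtain ⟨y, hy⟩ := hx'
      exact ⟨y, Subtype.ext hy⟩
  have hvan : ∀ (n : ℕ) (i : ℤ) (Q : ModuleCat.{u} A), Projective Q → Van (Z i) Q (n + 1) := by
    intro n
    induction n with
    | zero =>
      intro i Q hQp
      refine Van.one_of_extend (hses i) (hP' _) fun g => ?_
      obtain ⟨h, hh⟩ := hQ Q ((IsProjective.iff_projective Q).2 hQp) (i + 1 + 1)
        (g.hom ∘ₗ (b (i + 1)).hom) (by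
          ext x
          change g ((b (i + 1)) (f (i + 1 + 1 + 1) x)) = 0
          have : (b (i + 1)) (f (i + 1 + 1 + 1) x) = 0 := Subtype.ext (hz _ _)
          rw [this, map_zero])
      refine ⟨ModuleCat.ofHom h, ?_⟩
      ext z
      obtain ⟨y, rfl⟩ := (hses (i + 1)).surj z
      exact LinearMap.congr_fun hh y
    | succ n ih =>
      intro i Q hQp
      exact (Van.shift (hses i) (hP' _)).2 (ih _ _ hQp)
  have hZ : ∀ i, GP (Z i) := by
    intro i
    refine ⟨fun X => ∃ i, X = Z i, ?_, i, rfl⟩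
    rintro _ ⟨i, rfl⟩
    refine ⟨fun n Q h => hvan n i Q h, ?_⟩
    obtain ⟨j, rfl⟩ : ∃ j, i = j + 1 := ⟨i - 1, by lia⟩
    exact ⟨_, _, a (j + 1), b j, hses j, hP' _, j, rfl⟩
  refine GP.of_retract (ModuleCat.ofHom e.toLinearMap : M ⟶ Z (-1))
    (ModuleCat.ofHom e.symm.toLinearMap) ?_ (hZ (-1))
  ext x
  exact e.symm_apply_apply x

/-- Being linked by a short exact sequence with projective middle term. -/
def Rel (U V : ModuleCat.{u} A) : Prop :=
  ∃ (P : ModuleCat.{u} A) (f : U ⟶ P) (g : P ⟶ V), Ses f g ∧ Projective P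

theorem exists_chain {S : Type*} (r : S → S → Prop) (hl : ∀ s, ∃ t, r t s) (hr : ∀ s, ∃ t, r s t)
    (s : S) : ∃ Z : ℤ → S, Z 1 = s ∧ ∀ i, r (Z (i + 1)) (Z i) := by
  choose l hl using hl
  choose ρ hr using hr
  let Z : ℤ → S := fun i => match i with
    | Int.ofNat 0 => ρ s
    | Int.ofNat (n + 1) => l^[n] s
    | Int.negSucc n => ρ^[n + 2] s
  refine ⟨Z, rfl, ?_⟩
  rintro ((_ | n) | (_ | n))
  · exact hr s
  · change r (l^[n + 1] s) (l^[n] s)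
    rw [Function.iterate_succ_apply']
    exact hl _
  · change r (ρ s) (ρ (ρ s))
    exact hr _
  · change r (ρ^[n + 2] s) (ρ^[n + 1 + 2] s)
    rw [show n + 1 + 2 = (n + 2) + 1 by lia, Function.iterate_succ_apply' ρ (n + 2)]
    exact hr _

theorem GP.isGorensteinProjective {M : ModuleCat.{u} A} (h : GP M) :
    IsGorensteinProjective A M := by
  obtain ⟨Z, hZ1, hZ⟩ := exists_chain (S := {X : ModuleCat.{u} A // GP X})
    (fun U V => Rel U.1 V.1)
    (fun s => by
      obtain ⟨K, P, f, g, h, hP⟩ := exists_cover s.1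
      exact ⟨⟨K, GP.syzygy h hP s.2⟩, P, f, g, h, hP⟩)
    (fun s => by
      obtain ⟨-, P, X', f, g, h, hP, hX'⟩ := GP.good s.1 s.2
      exact ⟨⟨X', hX'⟩, P, f, g, h, hP⟩)
    ⟨M, h⟩
  choose P a b hab hP using hZ
  have hker : ∀ i x, (a i).hom ((b (i + 1)).hom x) = 0 ↔ (b (i + 1)).hom x = 0 := fun i x =>
    map_eq_zero_iff (a i).hom (hab i).inj
  refine ⟨P, fun i => (a i).hom ∘ₗ (b (i + 1)).hom,
    fun i => (IsProjective.iff_projective (P i)).2 (hP i), ?_, ?_, ?_, ?_⟩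
  · intro i
    ext x
    refine (hker i _).2 ?_
    exact ((hab (i + 1)).exact _).2 ⟨_, rfl⟩
  · intro i
    ext x
    constructor
    · rintro ⟨y, rfl⟩
      refine (hker i _).2 ?_
      exact ((hab (i + 1)).exact _).2 ⟨_, rfl⟩
    · intro hx
      obtain ⟨z, rfl⟩ := ((hab (i + 1)).exact x).1 ((hker i x).1 hx)
      obtain ⟨w, rfl⟩ := (hab (i + 1 + 1)).surj z
      exact ⟨w, rfl⟩
  · intro Q hQ i g hg
    have h0 : a (i + 1) ≫ ModuleCat.ofHom g = 0 := by
      ext z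
      obtain ⟨w, rfl⟩ := (hab (i + 1 + 1)).surj z
      exact LinearMap.congr_fun hg w
    obtain ⟨k, hk⟩ := (hab (i + 1)).desc _ h0
    obtain ⟨h', hh'⟩ := Van.extend (hab i)
      ((Z i).2.perp 0 Q ((IsProjective.iff_projective Q).1 hQ)) k
    refine ⟨h'.hom, ?_⟩
    ext x
    have h1 : ∀ y, h' (a i y) = k y := fun y => by rw [← ModuleCat.comp_apply, hh']
    have h2 : ∀ y, k (b (i + 1) y) = g y := fun y => by
      rw [← ModuleCat.comp_apply, hk]; rfl
    exact (h1 _).trans (h2 x)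
  · let α : (Z (-1 + 1 + 1)).1 ⟶ P (-1 + 1) := a (-1 + 1)
    have hα : Ses α (b (-1 + 1)) := hab (-1 + 1)
    have h1 : (-1 + 1 + 1 : ℤ) = 1 := by norm_num
    have hM : (Z (-1 + 1 + 1)).1 = M := by
      rw [h1, hZ1]
    rw [← hM]
    refine ⟨(LinearEquiv.ofInjective α.hom hα.inj).trans (LinearEquiv.ofEq _ _ ?_)⟩
    ext x
    exact (hα.exact x).symm.trans (hker (-1) x).symm

end Compare
end FrobGP

section Statement

variable {R A : Type u} [Ring R] [Ring A]

theorem stmt3 (ι : R →+* A) (hF : IsFrobeniusExtension ι)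
    (M : Type u) [AddCommGroup M] [Module A M]
    (ht : IsGorensteinProjective A
      (ModuleCat.of A (@ExtendedTensor R A _ _ ι M _ (Module.compHom M ι))))
    (hh : IsGorensteinProjective A
      (ModuleCat.of A (@CoinducedModule R A _ _ ι M _ (Module.compHom M ι)))) :
    IsGorensteinProjective A (ModuleCat.of A M) := by
  apply FrobGP.GP.isGorensteinProjective
  apply FrobGP.main_frob ι hF
  exact FrobGP.gp_of_isGorensteinProjective hh

end Statement
end

section
/- Let R ⊂ A be a Frobenius extension of rings and let M be a left A-module. Then the following three conditions are equivalent: (1) M is a Gorenstein injective left A-module; (2) the underlying left R-module M (via restriction of scalars) is Gorenstein injective; (3) both A ⊗_R M and Hom_R(A, M) are Gorenstein injective left A-modules. -/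
universe u

/-- A left `R`-module `M` is Gorenstein injective if it is a cosyzygy of a totally acyclic
complex of injective modules: there is an acyclic complex `⋯ → I₁ → I₀ → I₋₁ → ⋯` of
injective `R`-modules which stays acyclic after applying `Hom_R(Q, -)` for every
injective `R`-module `Q`, with `M ≅ ker (I₀ → I₋₁)`. -/
def IsGorensteinInjective (R : Type u) [Ring R] (M : ModuleCat.{u} R) : Prop :=
  ∃ (I : ℤ → ModuleCat.{u} R) (f : ∀ i : ℤ, I (i + 1) →ₗ[R] I i),
    (∀ i, Module.Injective R (I i)) ∧
    (∀ i, (f i).comp (f (i + 1)) = 0) ∧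
    (∀ i, LinearMap.range (f (i + 1)) = LinearMap.ker (f i)) ∧
    (∀ Q : ModuleCat.{u} R, Module.Injective R Q →
      ∀ (i : ℤ) (g : Q →ₗ[R] I (i + 1)), (f i).comp g = 0 →
        ∃ h : Q →ₗ[R] I (i + 1 + 1), (f (i + 1)).comp h = g) ∧
    Nonempty (↥M ≃ₗ[R] ↥(LinearMap.ker (f (-1))))

namespace FrobGI

section General

variable {R : Type u} [Ring R]

/-- Short exact sequences. -/
structure SES {K N C : Type u} [AddCommGroup K] [AddCommGroup N] [AddCommGroup C]
    [Module R K] [Module R N] [Module R C] (f : K →ₗ[R] N) (g : N →ₗ[R] C) : Prop where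
  inj : ∀ k, f k = 0 → k = 0
  surj : Function.Surjective g
  zero : ∀ k, g (f k) = 0
  ex : ∀ n, g n = 0 → ∃ k, f k = n

theorem SES.injective {K N C : Type u} [AddCommGroup K] [AddCommGroup N] [AddCommGroup C]
    [Module R K] [Module R N] [Module R C] {f : K →ₗ[R] N} {g : N →ₗ[R] C} (h : SES f g) :
    Function.Injective f :=
  (injective_iff_map_eq_zero f).2 h.inj

theorem factor_surj {N C Z : Type u} [AddCommGroup Z] [AddCommGroup N] [AddCommGroup C]
    [Module R Z] [Module R N] [Module R C] (g : N →ₗ[R] C) (hg : Function.Surjective g)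
    (h : N →ₗ[R] Z) (hk : ∀ n, g n = 0 → h n = 0) : ∃ k : C →ₗ[R] Z, ∀ n, k (g n) = h n := by
  have hle : LinearMap.ker g ≤ LinearMap.ker h := fun n hn => hk n hn
  refine ⟨((LinearMap.ker g).liftQ h hle).comp
    (g.quotKerEquivOfSurjective hg).symm.toLinearMap, fun n => ?_⟩
  have : (g.quotKerEquivOfSurjective hg).symm (g n) = Submodule.Quotient.mk n := by
    rw [LinearEquiv.symm_apply_eq]; rfl
  simp [this]

theorem factor_inj {K N Z : Type u} [AddCommGroup Z] [AddCommGroup N] [AddCommGroup K]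
    [Module R Z] [Module R N] [Module R K] (f : K →ₗ[R] N) (hf : Function.Injective f)
    (h : Z →ₗ[R] N) (hk : ∀ z, ∃ k, f k = h z) : ∃ k : Z →ₗ[R] K, ∀ z, f (k z) = h z := by
  choose k hk using hk
  exact ⟨{ toFun := k
           map_add' := fun a b => hf (by simp [hk])
           map_smul' := fun a b => hf (by simp [hk]) }, hk⟩

/-- Vanishing of `Ext^1(Q, N)` for injective `Q`. -/
def E1 (R : Type u) [Ring R] (N : Type u) [AddCommGroup N] [Module R N] : Prop :=
  ∀ (X Y Q : Type u) [AddCommGroup X] [AddCommGroup Y] [AddCommGroup Q]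
    [Module R X] [Module R Y] [Module R Q] (f : N →ₗ[R] X) (g : X →ₗ[R] Y), SES f g →
    Module.Injective R Q → ∀ u : Q →ₗ[R] Y, ∃ v : Q →ₗ[R] X, ∀ q, g (v q) = u q

theorem E1_of_ses {N I C : Type u} [AddCommGroup N] [AddCommGroup I] [AddCommGroup C]
    [Module R N] [Module R I] [Module R C] (f : N →ₗ[R] I) (g : I →ₗ[R] C) (h : SES f g)
    (hI : Module.Injective R I)
    (hl : ∀ (Q : Type u) [AddCommGroup Q] [Module R Q], Module.Injective R Q →
      ∀ u : Q →ₗ[R] C, ∃ v : Q →ₗ[R] I, ∀ q, g (v q) = u q) : E1 R N := by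
  intro X Y Q _ _ _ _ _ _ a b hab hQ u
  obtain ⟨s, hs⟩ := hI.out a hab.injective f
  obtain ⟨t, ht⟩ := factor_surj b hab.surj (g.comp s) (by
    intro x hx
    obtain ⟨n, rfl⟩ := hab.ex x hx
    simp [hs, h.zero])
  obtain ⟨v, hv⟩ := hl Q hQ (t.comp u)
  -- `X` embeds in `Y × I`
  obtain ⟨w, hw⟩ := factor_inj (b.prod s) (by
    rw [injective_iff_map_eq_zero]
    intro x hx
    have h1 : b x = 0 := congrArg Prod.fst hx
    have h2 : s x = 0 := congrArg Prod.snd hx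
    obtain ⟨n, rfl⟩ := hab.ex x h1
    rw [hs] at h2
    rw [h.inj n h2, map_zero]) (u.prod v) (by
    intro q
    obtain ⟨x, hx⟩ := hab.surj (u q)
    have : g (v q - s x) = 0 := by
      rw [map_sub, hv, LinearMap.comp_apply, ← hx, ht, LinearMap.comp_apply, sub_self]
    obtain ⟨n, hn⟩ := h.ex _ this
    refine ⟨x + a n, Prod.ext ?_ ?_⟩
    · show b (x + a n) = u q
      rw [map_add, hab.zero, hx, add_zero]
    · show s (x + a n) = v q
      rw [map_add, hs, hn]; abel)
  exact ⟨w, fun q => congrArg Prod.fst (hw q)⟩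

def Rel (R : Type u) [Ring R] (K C : Type u) [AddCommGroup K] [AddCommGroup C]
    [Module R K] [Module R C] : Prop :=
  ∃ (I : ModuleCat.{u} R) (f : K →ₗ[R] I) (g : I →ₗ[R] C), Module.Injective R I ∧ SES f g

structure Closed (P : ModuleCat.{u} R → Prop) : Prop where
  a : ∀ N, P N → E1 R N
  b : ∀ N, P N → ∃ K, P K ∧ Rel R K N
  c : ∀ N, P N → ∃ C, P C ∧ Rel R N C

def GI (R : Type u) [Ring R] (N : Type u) [AddCommGroup N] [Module R N] : Prop :=
  ∃ P : ModuleCat.{u} R → Prop, Closed P ∧ P (ModuleCat.of R N)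

theorem GI.closed : Closed (fun N : ModuleCat.{u} R => GI R N) where
  a := fun N ⟨P, h, hN⟩ => h.a _ hN
  b := fun N ⟨P, h, hN⟩ => by
    obtain ⟨K, hK, r⟩ := h.b _ hN
    exact ⟨K, ⟨P, h, hK⟩, r⟩
  c := fun N ⟨P, h, hN⟩ => by
    obtain ⟨K, hK, r⟩ := h.c _ hN
    exact ⟨K, ⟨P, h, hK⟩, r⟩

theorem prod_injective {I J : Type u} [AddCommGroup I] [AddCommGroup J] [Module R I] [Module R J]
    (hI : Module.Injective R I) (hJ : Module.Injective R J) : Module.Injective R (I × J) := by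
  constructor
  intro X Y _ _ _ _ f hf g
  obtain ⟨h1, e1⟩ := hI.out f hf ((LinearMap.fst R I J).comp g)
  obtain ⟨h2, e2⟩ := hJ.out f hf ((LinearMap.snd R I J).comp g)
  exact ⟨h1.prod h2, fun x => Prod.ext (e1 x) (e2 x)⟩

inductive Cl {R : Type u} [Ring R] : ModuleCat.{u} R → Prop
  | base (N : ModuleCat.{u} R) : GI R N → Cl N
  | ext (N' N N'' : ModuleCat.{u} R) (f : N' →ₗ[R] N) (g : N →ₗ[R] N'') :
      SES f g → Cl N' → Cl N'' → Cl N
  | retr (M N : ModuleCat.{u} R) (i : M →ₗ[R] N) (r : N →ₗ[R] M) :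
      (∀ m, r (i m) = m) → Cl N → Cl M

theorem E1_ext {N' N N'' : Type u} [AddCommGroup N'] [AddCommGroup N] [AddCommGroup N'']
    [Module R N'] [Module R N] [Module R N''] {f : N' →ₗ[R] N} {g : N →ₗ[R] N''} (h : SES f g)
    (h' : E1 R N') (h'' : E1 R N'') : E1 R N := by
  intro X Y Q _ _ _ _ _ _ a b hab hQ u
  let W : Submodule R X := LinearMap.range (a.comp f)
  obtain ⟨a', ha'⟩ := factor_surj g h.surj (W.mkQ.comp a) (by
    intro n hn
    obtain ⟨k, rfl⟩ := h.ex n hn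
    simp [W])
  obtain ⟨b', hb'⟩ := factor_surj W.mkQ W.mkQ_surjective b (by
    intro x hx
    rw [Submodule.mkQ_apply, Submodule.Quotient.mk_eq_zero] at hx
    obtain ⟨k, rfl⟩ := hx
    exact hab.zero _)
  have s1 : SES a' b' := by
    refine ⟨?_, ?_, ?_, ?_⟩
    · intro k hk
      obtain ⟨n, rfl⟩ := h.surj k
      rw [ha', LinearMap.comp_apply, Submodule.mkQ_apply, Submodule.Quotient.mk_eq_zero] at hk
      obtain ⟨k, hk⟩ := hk
      rw [← hab.injective hk, h.zero]
    · intro y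
      obtain ⟨x, rfl⟩ := hab.surj y
      exact ⟨_, hb' x⟩
    · intro k
      obtain ⟨n, rfl⟩ := h.surj k
      rw [ha', LinearMap.comp_apply, hb', hab.zero]
    · intro x hx
      obtain ⟨x, rfl⟩ := W.mkQ_surjective x
      rw [hb'] at hx
      obtain ⟨n, rfl⟩ := hab.ex x hx
      exact ⟨g n, ha' n⟩
  have s2 : SES (a.comp f) W.mkQ := by
    refine ⟨fun k hk => h.inj _ (hab.inj _ hk), W.mkQ_surjective, fun k => ?_, fun x hx => ?_⟩
    · rw [Submodule.mkQ_apply, Submodule.Quotient.mk_eq_zero]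
      exact ⟨k, rfl⟩
    · rw [Submodule.mkQ_apply, Submodule.Quotient.mk_eq_zero] at hx
      exact hx
  obtain ⟨v, hv⟩ := h'' _ _ Q a' b' s1 hQ u
  obtain ⟨w, hw⟩ := h' _ _ Q _ _ s2 hQ v
  exact ⟨w, fun q => by rw [← hb', hw, hv]⟩

theorem E1_retr {M N : Type u} [AddCommGroup M] [AddCommGroup N]
    [Module R M] [Module R N] (i : M →ₗ[R] N) (r : N →ₗ[R] M) (hir : ∀ m, r (i m) = m)
    (h : E1 R N) : E1 R M := by
  intro X Y Q _ _ _ _ _ _ a b hab hQ u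
  let p : N →ₗ[R] LinearMap.ker r := (LinearMap.id - i.comp r).codRestrict _ (by
    intro n; simp [hir])
  have hp : ∀ n, (p n : N) = n - i (r n) := fun n => rfl
  obtain ⟨v, hv⟩ := h (X × LinearMap.ker r) Y Q ((a.comp r).prod p)
    (b.comp (LinearMap.fst R _ _)) (by
      refine ⟨?_, ?_, ?_, ?_⟩
      · intro n hn
        have h1 : a (r n) = 0 := congrArg Prod.fst hn
        have h2 : (p n : N) = 0 := congrArg (fun z => (z.2 : N)) hn
        rw [hp, hab.inj _ h1, map_zero, sub_zero] at h2
        exact h2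
      · intro y
        obtain ⟨x, rfl⟩ := hab.surj y
        exact ⟨(x, 0), rfl⟩
      · intro n
        exact hab.zero _
      · rintro ⟨x, n, hn⟩ hx
        obtain ⟨m, rfl⟩ := hab.ex x hx
        have hn' : r n = 0 := hn
        refine ⟨i m + n, Prod.ext ?_ (Subtype.ext ?_)⟩
        · show a (r (i m + n)) = a m
          rw [map_add, hir, hn', add_zero]
        · show i m + n - i (r (i m + n)) = n
          rw [map_add, hir, hn', add_zero]; abel) hQ u
  exact ⟨(LinearMap.fst R _ _).comp v, hv⟩

theorem Cl.good (N : ModuleCat.{u} R) (h : Cl N) :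
    E1 R N ∧ (∃ K : ModuleCat.{u} R, Cl K ∧ Rel R K N) ∧
    (∃ C : ModuleCat.{u} R, Cl C ∧ Rel R N C) := by
  induction h with
  | base N h =>
    refine ⟨GI.closed.a N h, ?_, ?_⟩
    · obtain ⟨K, hK, r⟩ := GI.closed.b N h
      exact ⟨K, .base K hK, r⟩
    · obtain ⟨K, hK, r⟩ := GI.closed.c N h
      exact ⟨K, .base K hK, r⟩
  | ext N' N N'' f g h _ _ h1 h2 =>
    obtain ⟨e1, ⟨K1, cK1, I1, a1, b1, i1, s1⟩, ⟨C1, cC1, J1, c1, d1, j1, t1⟩⟩ := h1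
    obtain ⟨e2, ⟨K2, cK2, I2, a2, b2, i2, s2⟩, ⟨C2, cC2, J2, c2, d2, j2, t2⟩⟩ := h2
    refine ⟨E1_ext h e1 e2, ?_, ?_⟩
    · obtain ⟨t, ht⟩ := e1 _ _ I2 f g h i2 b2
      let p : (I1 × I2) →ₗ[R] N := (f.comp b1).coprod t
      have hp : ∀ z, p z = f (b1 z.1) + t z.2 := fun z => rfl
      have hz : ∀ z : LinearMap.ker p, f (b1 z.1.1) + t z.1.2 = 0 := fun z => z.2
      have psurj : Function.Surjective p := by
        intro n
        obtain ⟨y, hy⟩ := s2.surj (g n)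
        obtain ⟨n', hn'⟩ := h.ex (n - t y) (by rw [map_sub, ht, hy, sub_self])
        obtain ⟨x, rfl⟩ := s1.surj n'
        exact ⟨(x, y), by rw [hp]; simp [hn']⟩
      obtain ⟨k, hk⟩ := factor_inj a2 s2.injective
        ((LinearMap.snd R I1 I2).comp (LinearMap.ker p).subtype) (by
          intro z
          apply s2.ex
          have := congrArg g (hz z)
          rw [map_add, h.zero, ht, zero_add, map_zero] at this
          exact this)
      let l : K1 →ₗ[R] LinearMap.ker p := ((LinearMap.inl R I1 I2).comp a1).codRestrict _ (by
        intro k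
        show f (b1 (a1 k)) + t 0 = 0
        rw [s1.zero, map_zero, map_zero, add_zero])
      refine ⟨ModuleCat.of R (LinearMap.ker p), Cl.ext K1 _ K2 l k ?_ cK1 cK2,
        ModuleCat.of R (I1 × I2), (LinearMap.ker p).subtype, p, prod_injective i1 i2, ?_⟩
      · refine ⟨?_, ?_, ?_, ?_⟩
        · intro z hz'
          apply s1.inj
          exact congrArg (fun w => w.1.1) hz'
        · intro k2
          obtain ⟨n', hn'⟩ := h.ex (t (a2 k2)) (by rw [ht, s2.zero])
          obtain ⟨x, rfl⟩ := s1.surj n'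
          refine ⟨⟨(-x, a2 k2), ?_⟩, s2.injective ?_⟩
          · show f (b1 (-x)) + t (a2 k2) = 0
            rw [map_neg, map_neg, hn', neg_add_cancel]
          · rw [hk]; rfl
        · intro z
          apply s2.inj
          rw [hk]; rfl
        · intro z hz'
          have h0 : z.1.2 = 0 := by
            have := hk z
            rw [hz', map_zero] at this
            exact this.symm
          have := hz z
          rw [h0, map_zero, add_zero] at this
          obtain ⟨k1, hk1⟩ := s1.ex _ (h.inj _ this)
          exact ⟨k1, Subtype.ext (Prod.ext hk1 h0.symm)⟩
      · exact ⟨fun z hz => Subtype.ext hz, psurj, fun z => z.2, fun z hz => ⟨⟨z, hz⟩, rfl⟩⟩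
    · obtain ⟨s, hs⟩ := j1.out f h.injective c1
      let p : N →ₗ[R] (J1 × J2) := s.prod (c2.comp g)
      have pinj : ∀ n, p n = 0 → n = 0 := by
        intro n hn
        have h1 : s n = 0 := congrArg Prod.fst hn
        have h2 : c2 (g n) = 0 := congrArg Prod.snd hn
        obtain ⟨n', rfl⟩ := h.ex n (t2.inj _ h2)
        rw [hs] at h1
        rw [t1.inj _ h1, map_zero]
      let W := LinearMap.range p
      have hW : ∀ z, W.mkQ z = 0 ↔ ∃ n, p n = z := by
        intro z
        rw [Submodule.mkQ_apply, Submodule.Quotient.mk_eq_zero]; rfl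
      obtain ⟨k, hk⟩ := factor_surj d1 t1.surj (W.mkQ.comp (LinearMap.inl R J1 J2)) (by
        intro x hx
        obtain ⟨n', rfl⟩ := t1.ex x hx
        rw [LinearMap.comp_apply, hW]
        refine ⟨f n', Prod.ext (hs n') ?_⟩
        show c2 (g (f n')) = 0
        rw [h.zero, map_zero])
      obtain ⟨l, hl⟩ := factor_surj W.mkQ W.mkQ_surjective (d2.comp (LinearMap.snd R J1 J2)) (by
        intro z hz
        obtain ⟨n, rfl⟩ := (hW z).1 hz
        exact t2.zero _)
      refine ⟨ModuleCat.of R ((J1 × J2) ⧸ W), Cl.ext C1 _ C2 k l ?_ cC1 cC2,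
        ModuleCat.of R (J1 × J2), p, W.mkQ, prod_injective j1 j2, ?_⟩
      · refine ⟨?_, ?_, ?_, ?_⟩
        · intro z hz
          obtain ⟨x, rfl⟩ := t1.surj z
          rw [hk, LinearMap.comp_apply, hW] at hz
          obtain ⟨n, hn⟩ := hz
          have h1 : s n = x := congrArg Prod.fst hn
          have h2 : c2 (g n) = 0 := congrArg Prod.snd hn
          obtain ⟨n', rfl⟩ := h.ex n (t2.inj _ h2)
          rw [← h1, hs, t1.zero]
        · intro z
          obtain ⟨y, rfl⟩ := t2.surj z
          exact ⟨W.mkQ (0, y), by rw [hl]; rfl⟩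
        · intro z
          obtain ⟨x, rfl⟩ := t1.surj z
          rw [hk, LinearMap.comp_apply, hl]
          exact map_zero d2
        · intro z hz
          obtain ⟨⟨x, y⟩, rfl⟩ := W.mkQ_surjective z
          rw [hl] at hz
          obtain ⟨n2, hn2⟩ := t2.ex y hz
          obtain ⟨n, rfl⟩ := h.surj n2
          refine ⟨d1 (x - s n), ?_⟩
          rw [hk, LinearMap.comp_apply, ← sub_eq_zero, ← map_sub, hW]
          refine ⟨-n, Prod.ext ?_ ?_⟩
          · show s (-n) = (x - s n) - x
            rw [map_neg]; abel
          · show c2 (g (-n)) = 0 - y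
            rw [map_neg, map_neg, hn2, zero_sub]
      · exact ⟨pinj, W.mkQ_surjective, fun z => (hW _).2 ⟨z, rfl⟩, fun z hz => (hW z).1 hz⟩
  | retr M N i r hir cN h =>
    obtain ⟨e1, ⟨K, cK, I, a, b, iI, s⟩, ⟨C, cC, J, c, d, iJ, t⟩⟩ := h
    let q : N →ₗ[R] LinearMap.ker r := (LinearMap.id - i.comp r).codRestrict _ (by
      intro n; simp [hir])
    have cM' : Cl (ModuleCat.of R (LinearMap.ker r)) :=
      Cl.retr _ N (LinearMap.ker r).subtype q (by
        rintro ⟨n, hn⟩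
        have hn' : r n = 0 := hn
        apply Subtype.ext
        show n - i (r n) = n
        rw [hn', map_zero, sub_zero]) cN
    refine ⟨E1_retr i r hir e1, ?_, ?_⟩
    · let p : I →ₗ[R] M := r.comp b
      let l : K →ₗ[R] LinearMap.ker p := a.codRestrict _ (by
        intro k
        show r (b (a k)) = 0
        rw [s.zero, map_zero])
      let k : LinearMap.ker p →ₗ[R] LinearMap.ker r :=
        (b.comp (LinearMap.ker p).subtype).codRestrict _ (fun z => z.2)
      refine ⟨ModuleCat.of R (LinearMap.ker p), Cl.ext K _ _ l k ?_ cK cM',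
        I, (LinearMap.ker p).subtype, p, iI, ?_⟩
      · refine ⟨?_, ?_, ?_, ?_⟩
        · intro z hz
          exact s.inj _ (congrArg Subtype.val hz)
        · rintro ⟨n, hn⟩
          obtain ⟨x, rfl⟩ := s.surj n
          exact ⟨⟨x, hn⟩, rfl⟩
        · intro z
          exact Subtype.ext (s.zero z)
        · rintro ⟨x, hx⟩ hz
          obtain ⟨k, rfl⟩ := s.ex x (congrArg Subtype.val hz)
          exact ⟨k, rfl⟩
      · refine ⟨fun z hz => Subtype.ext hz, ?_, fun z => z.2, fun z hz => ⟨⟨z, hz⟩, rfl⟩⟩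
        intro m
        obtain ⟨x, hx⟩ := s.surj (i m)
        exact ⟨x, by show r (b x) = m; rw [hx, hir]⟩
    · let p : M →ₗ[R] J := c.comp i
      let W := LinearMap.range p
      have hW : ∀ z, W.mkQ z = 0 ↔ ∃ n, p n = z := by
        intro z
        rw [Submodule.mkQ_apply, Submodule.Quotient.mk_eq_zero]; rfl
      let k : LinearMap.ker r →ₗ[R] (J ⧸ W) := W.mkQ.comp (c.comp (LinearMap.ker r).subtype)
      obtain ⟨l, hl⟩ := factor_surj W.mkQ W.mkQ_surjective d (by
        intro z hz
        obtain ⟨n, rfl⟩ := (hW z).1 hz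
        exact t.zero _)
      refine ⟨ModuleCat.of R (J ⧸ W), Cl.ext _ _ C k l ?_ cM' cC, J, p, W.mkQ, iJ, ?_⟩
      · refine ⟨?_, ?_, ?_, ?_⟩
        · rintro ⟨n, hn⟩ hz
          obtain ⟨m, hm⟩ := (hW (c n)).1 hz
          have h1 : i m = n := t.injective hm
          have hn' : r n = 0 := hn
          apply Subtype.ext
          show n = 0
          rw [← h1, hir] at hn'
          rw [← h1, hn', map_zero]
        · intro z
          obtain ⟨y, rfl⟩ := t.surj z
          exact ⟨W.mkQ y, hl y⟩
        · rintro ⟨n, hn⟩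
          show l (W.mkQ (c n)) = 0
          rw [hl, t.zero]
        · intro z hz
          obtain ⟨y, rfl⟩ := W.mkQ_surjective z
          rw [hl] at hz
          obtain ⟨n, rfl⟩ := t.ex y hz
          refine ⟨q n, ?_⟩
          show W.mkQ (c (n - i (r n))) = W.mkQ (c n)
          rw [← sub_eq_zero, ← map_sub, hW]
          refine ⟨- r n, ?_⟩
          show c (i (- r n)) = _
          rw [map_neg, map_neg, map_sub]; abel
      · refine ⟨fun m hm => ?_, W.mkQ_surjective, fun z => (hW _).2 ⟨z, rfl⟩,
          fun z hz => (hW z).1 hz⟩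
        have : i m = 0 := t.inj _ hm
        rw [← hir m, this, map_zero]

theorem Cl.closed : Closed (Cl : ModuleCat.{u} R → Prop) :=
  ⟨fun N h => (Cl.good N h).1, fun N h => (Cl.good N h).2.1, fun N h => (Cl.good N h).2.2⟩

theorem GI.ext {N' N N'' : Type u} [AddCommGroup N'] [AddCommGroup N] [AddCommGroup N'']
    [Module R N'] [Module R N] [Module R N''] {f : N' →ₗ[R] N} {g : N →ₗ[R] N''} (h : SES f g)
    (h' : GI R N') (h'' : GI R N'') : GI R N :=
  ⟨Cl, Cl.closed, Cl.ext (ModuleCat.of R N') _ (ModuleCat.of R N'') f g h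
    (.base _ h') (.base _ h'')⟩

theorem GI.retr {M N : Type u} [AddCommGroup M] [AddCommGroup N]
    [Module R M] [Module R N] (i : M →ₗ[R] N) (r : N →ₗ[R] M) (hir : ∀ m, r (i m) = m)
    (h : GI R N) : GI R M :=
  ⟨Cl, Cl.closed, Cl.retr _ (ModuleCat.of R N) i r hir (.base _ h)⟩

theorem exists_chain (P : ModuleCat.{u} R → Prop) (h : Closed P) (M : ModuleCat.{u} R) (hM : P M) :
    ∃ Z : ℤ → ModuleCat.{u} R, Z (-1 + 1 + 1) = M ∧ (∀ i, P (Z i)) ∧ ∀ i, Rel R (Z (i + 1)) (Z i) := by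
  have hb : ∀ N : {N // P N}, ∃ K : {N // P N}, Rel R K.1 N.1 := fun N => by
    obtain ⟨K, hK, r⟩ := h.b N.1 N.2
    exact ⟨⟨K, hK⟩, r⟩
  have hc : ∀ N : {N // P N}, ∃ K : {N // P N}, Rel R N.1 K.1 := fun N => by
    obtain ⟨K, hK, r⟩ := h.c N.1 N.2
    exact ⟨⟨K, hK⟩, r⟩
  choose B hB using hb
  choose C hC using hc
  let Z : ℤ → {N // P N} := fun i => match i with
    | Int.ofNat n => B^[n] ⟨M, hM⟩
    | Int.negSucc n => C^[n+1] ⟨M, hM⟩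
  suffices hZ : ∀ i, Rel R (Z (i + 1)).1 (Z i).1 by
    refine ⟨fun i => (Z (i - 1)).1, rfl, fun i => (Z (i - 1)).2, fun i => ?_⟩
    have := hZ (i - 1)
    have e : i + 1 - 1 = i - 1 + 1 := by ring
    show Rel R (Z (i + 1 - 1)).1 (Z (i - 1)).1
    rw [e]; exact this
  intro i
  match i with
  | Int.ofNat n =>
    have : Z (Int.ofNat n + 1) = B (Z (Int.ofNat n)) := by
      show B^[n+1] _ = B (B^[n] _)
      rw [Function.iterate_succ_apply']
    rw [this]; exact hB _
  | Int.negSucc 0 =>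
    exact hC _
  | Int.negSucc (n+1) =>
    have : Z (Int.negSucc (n+1)) = C (Z (Int.negSucc n)) := by
      show C^[n+1+1] _ = C (C^[n+1] _)
      rw [Function.iterate_succ_apply']
    rw [this]; exact hC _

theorem gi_iff (M : ModuleCat.{u} R) : IsGorensteinInjective R M ↔ GI R M := by
  constructor
  · rintro ⟨I, f, hI, h0, hex, hl, ⟨e⟩⟩
    have key : ∀ (j : ℤ) (N C : ModuleCat.{u} R) (e : N ≃ₗ[R] LinearMap.ker (f (j+1)))
        (e' : C ≃ₗ[R] LinearMap.ker (f j)), ∃ (a : N →ₗ[R] I (j+1+1)) (b : I (j+1+1) →ₗ[R] C),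
        SES a b ∧ ∀ x, (e' (b x) : I (j+1)) = f (j+1) x := by
      intro j N C e e'
      let g : I (j+1+1) →ₗ[R] LinearMap.ker (f j) := (f (j+1)).codRestrict _ (fun x => by
        rw [← hex j]; exact ⟨x, rfl⟩)
      refine ⟨(LinearMap.ker (f (j+1))).subtype.comp e.toLinearMap,
        e'.symm.toLinearMap.comp g, ⟨?_, ?_, ?_, ?_⟩, ?_⟩
      · intro n hn
        apply e.injective
        rw [map_zero]
        exact Subtype.ext hn
      · intro c
        have : (e' c : I (j+1)) ∈ LinearMap.range (f (j+1)) := by rw [hex]; exact (e' c).2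
        obtain ⟨x, hx⟩ := this
        refine ⟨x, ?_⟩
        show e'.symm (g x) = c
        rw [LinearEquiv.symm_apply_eq]
        exact Subtype.ext hx
      · intro n
        show e'.symm (g (e n)) = 0
        rw [LinearEquiv.symm_apply_eq, map_zero]
        exact Subtype.ext (e n).2
      · intro x hx
        have hx' : e'.symm (g x) = 0 := hx
        rw [LinearEquiv.symm_apply_eq, map_zero] at hx'
        refine ⟨e.symm ⟨x, congrArg Subtype.val hx'⟩, ?_⟩
        show ((e (e.symm _)) : I (j+1+1)) = x
        rw [LinearEquiv.apply_symm_apply]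
      · intro x
        show (e' (e'.symm (g x)) : I (j+1)) = _
        rw [LinearEquiv.apply_symm_apply]; rfl
    refine ⟨fun N => ∃ i, Nonempty (N ≃ₗ[R] LinearMap.ker (f i)), ⟨?_, ?_, ?_⟩, -1, ⟨e⟩⟩
    · rintro N ⟨i, ⟨e⟩⟩
      obtain ⟨j, rfl⟩ : ∃ j, i = j + 1 := ⟨i - 1, by ring⟩
      obtain ⟨a, b, s, hb⟩ := key j N (ModuleCat.of R (LinearMap.ker (f j))) e (.refl _ _)
      refine E1_of_ses a b s (hI _) ?_
      intro Q _ _ hQ u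
      obtain ⟨v, hv⟩ := hl (ModuleCat.of R Q) hQ j ((LinearMap.ker (f j)).subtype.comp u) (by
        ext q
        exact (u q).2)
      refine ⟨v, fun q => Subtype.ext ?_⟩
      have := hb (v q)
      exact this.trans (congrArg (fun t => t q) hv)
    · rintro N ⟨i, ⟨e⟩⟩
      obtain ⟨a, b, s, hb⟩ := key i (ModuleCat.of R (LinearMap.ker (f (i+1)))) N (.refl _ _) e
      exact ⟨_, ⟨i+1, ⟨.refl _ _⟩⟩, _, a, b, hI _, s⟩
    · rintro N ⟨i, ⟨e⟩⟩
      obtain ⟨j, rfl⟩ : ∃ j, i = j + 1 := ⟨i - 1, by ring⟩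
      obtain ⟨a, b, s, hb⟩ := key j N (ModuleCat.of R (LinearMap.ker (f j))) e (.refl _ _)
      exact ⟨_, ⟨j, ⟨.refl _ _⟩⟩, _, a, b, hI _, s⟩
  · rintro ⟨P, hP, hM⟩
    -- the chain starts one step to the right
    obtain ⟨Z, hZ, hPZ, hr⟩ := exists_chain P hP _ hM
    choose J a b hJ s using hr
    refine ⟨J, fun i => (a i).comp (b (i+1)), hJ, ?_, ?_, ?_, ?_⟩
    · intro i
      ext x
      show a i (b (i+1) (a (i+1) _)) = 0
      rw [(s (i+1)).zero, map_zero]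
    · intro i
      ext x
      constructor
      · rintro ⟨y, rfl⟩
        show a i (b (i+1) (a (i+1) _)) = 0
        rw [(s (i+1)).zero, map_zero]
      · intro hx
        obtain ⟨z, rfl⟩ := (s (i+1)).ex x ((s i).inj _ hx)
        obtain ⟨y, rfl⟩ := (s (i+1+1)).surj z
        exact ⟨y, rfl⟩
    · intro Q hQ i g hg
      obtain ⟨k, hk⟩ := factor_inj (a (i+1)) (s (i+1)).injective g (fun q =>
        (s (i+1)).ex _ ((s i).inj _ (congrArg (fun t => t q) hg)))
      obtain ⟨v, hv⟩ := hP.a _ (hPZ (i+1+1+1)) _ _ Q _ _ (s (i+1+1)) hQ k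
      refine ⟨v, ?_⟩
      ext q
      show a (i+1) (b (i+1+1) (v q)) = g q
      rw [hv, hk]
    · let l : Z (-1 + 1 + 1) →ₗ[R] LinearMap.ker ((a (-1)).comp (b (-1 + 1))) :=
        (a (-1 + 1)).codRestrict _ (fun z => by
          show a (-1) (b (-1 + 1) (a (-1 + 1) z)) = 0
          rw [(s (-1 + 1)).zero, map_zero])
      have hZ' : Z (-1 + 1 + 1) = M := hZ
      rw [← hZ']
      refine ⟨LinearEquiv.ofBijective l ⟨?_, ?_⟩⟩
      · rw [injective_iff_map_eq_zero]
        intro z hz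
        exact (s (-1 + 1)).inj z (congrArg Subtype.val hz)
      · rintro ⟨x, hx⟩
        obtain ⟨z, rfl⟩ := (s (-1 + 1)).ex x ((s (-1)).inj _ hx)
        exact ⟨z, rfl⟩

end General

section Ext

variable {R A : Type u} [Ring R] [Ring A]

/-- Restriction of scalars as a type synonym. -/
def Res (_ι : R →+* A) (M : Type u) : Type u := M

instance (ι : R →+* A) (M : Type u) [h : AddCommGroup M] : AddCommGroup (Res ι M) := h

instance (ι : R →+* A) (M : Type u) [AddCommGroup M] [Module A M] : Module R (Res ι M) :=
  Module.compHom M ι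

/-- The identity map, to the restriction. -/
def toR (ι : R →+* A) {M : Type u} (m : M) : Res ι M := m

/-- The identity map, from the restriction. -/
def ofR {ι : R →+* A} {M : Type u} (m : Res ι M) : M := m

section
variable {ι : R →+* A} {M : Type u} [AddCommGroup M] [Module A M]
theorem ofR_toR (m : M) : ofR (toR ι m) = m := rfl
theorem toR_ofR (m : Res ι M) : toR ι (ofR m) = m := rfl
theorem ofR_inj {m n : Res ι M} (h : ofR m = ofR n) : m = n := h
theorem ofR_add (m n : Res ι M) : ofR (m + n) = ofR m + ofR n := rfl
theorem ofR_sub (m n : Res ι M) : ofR (m - n) = ofR m - ofR n := rfl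
theorem ofR_zero : ofR (0 : Res ι M) = 0 := rfl
theorem ofR_smul (r : R) (m : Res ι M) : ofR (r • m) = ι r • ofR m := rfl
theorem toR_add (m n : M) : toR ι (m + n) = toR ι m + toR ι n := rfl
theorem toR_smul (r : R) (m : M) : toR ι (ι r • m) = r • toR ι m := rfl
theorem ofR_sum {n : ℕ} (m : Fin n → Res ι M) : ofR (∑ i, m i) = ∑ i, ofR (m i) := rfl
end

theorem Rel.mk {K I C : Type u} [AddCommGroup K] [AddCommGroup I] [AddCommGroup C]
    [Module R K] [Module R I] [Module R C] (f : K →ₗ[R] I) (g : I →ₗ[R] C)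
    (hI : Module.Injective R I) (s : SES f g) : Rel R K C := ⟨ModuleCat.of R I, f, g, hI, s⟩

/-- Restriction of a linear map. -/
def rmap (ι : R →+* A) {M N : Type u} [AddCommGroup M] [Module A M] [AddCommGroup N] [Module A N]
    (f : M →ₗ[A] N) : Res ι M →ₗ[R] Res ι N where
  toFun := fun m => toR ι (f (ofR m))
  map_add' := fun a b => map_add f (ofR a) (ofR b)
  map_smul' := fun r m => map_smul f (ι r) (ofR m)

theorem ofR_rmap (ι : R →+* A) {M N : Type u} [AddCommGroup M] [Module A M] [AddCommGroup N]
    [Module A N] (f : M →ₗ[A] N) (m : Res ι M) : ofR (rmap ι f m) = f (ofR m) := rfl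

theorem SES.res (ι : R →+* A) {K N C : Type u} [AddCommGroup K] [AddCommGroup N] [AddCommGroup C]
    [Module A K] [Module A N] [Module A C] {f : K →ₗ[A] N} {g : N →ₗ[A] C} (h : SES f g) :
    SES (rmap ι f) (rmap ι g) := ⟨h.inj, h.surj, h.zero, h.ex⟩

section Coind

variable {ι : R →+* A} {N L : Type u} [AddCommGroup N] [Module R N] [AddCommGroup L] [Module R L]

/-- Evaluation. -/
def ev (φ : CoinducedModule ι N) (a : A) : N := φ a

theorem ev_add (φ : CoinducedModule ι N) (a b : A) : ev φ (a + b) = ev φ a + ev φ b :=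
  letI : Module R A := Module.compHom A ι
  map_add φ a b

theorem ev_smul (φ : CoinducedModule ι N) (r : R) (b : A) : ev φ (ι r * b) = r • ev φ b :=
  letI : Module R A := Module.compHom A ι
  map_smul φ r b

theorem ev_sum (φ : CoinducedModule ι N) {n : ℕ} (a : Fin n → A) :
    ev φ (∑ i, a i) = ∑ i, ev φ (a i) :=
  letI : Module R A := Module.compHom A ι
  map_sum φ a _

theorem co_ext {φ ψ : CoinducedModule ι N} (h : ∀ a, ev φ a = ev ψ a) : φ = ψ :=
  letI : Module R A := Module.compHom A ι
  LinearMap.ext h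

theorem smul_ev (φ : CoinducedModule ι N) (a b : A) : ev (a • φ) b = ev φ (b * a) := rfl
theorem add_ev (φ ψ : CoinducedModule ι N) (b : A) : ev (φ + ψ) b = ev φ b + ev ψ b := rfl
theorem zero_ev (b : A) : ev (0 : CoinducedModule ι N) b = 0 := rfl

theorem sum_ev {n : ℕ} (φ : Fin n → CoinducedModule ι N) (b : A) :
    ev (∑ i, φ i) b = ∑ i, ev (φ i) b :=
  map_sum (⟨⟨fun φ => ev φ b, zero_ev b⟩, fun x y => add_ev x y b⟩ :
    CoinducedModule ι N →+ N) φ _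

/-- Constructor. -/
def mkCo (f : A → N) (h1 : ∀ a b, f (a + b) = f a + f b) (h2 : ∀ r a, f (ι r * a) = r • f a) :
    CoinducedModule ι N :=
  letI : Module R A := Module.compHom A ι
  { toFun := f, map_add' := h1, map_smul' := h2 }

theorem mkCo_ev (f : A → N) (h1) (h2) (a : A) : ev (mkCo (ι := ι) f h1 h2) a = f a := rfl

variable (ι) in
/-- Coinduction of a map. -/
def cmap (f : N →ₗ[R] L) : CoinducedModule ι N →ₗ[A] CoinducedModule ι L where
  toFun := fun φ => mkCo (fun a => f (ev φ a)) (fun a b => by rw [ev_add, map_add])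
    (fun r a => by rw [ev_smul, map_smul])
  map_add' := fun φ ψ => co_ext fun a => map_add f (ev φ a) (ev ψ a)
  map_smul' := fun φ ψ => rfl

theorem cmap_ev (f : N →ₗ[R] L) (φ : CoinducedModule ι N) (a : A) :
    ev (cmap ι f φ) a = f (ev φ a) := rfl

/-- The adjunction: `R`-linear maps `M → N` give `A`-linear maps `M → Coind N`. -/
def adj {M : Type u} [AddCommGroup M] [Module A M] (f : Res ι M →ₗ[R] N) :
    M →ₗ[A] CoinducedModule ι N where
  toFun := fun m => mkCo (fun a => f (toR ι (a • m)))
    (fun a b => by rw [add_smul, toR_add, map_add])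
    (fun r a => by rw [mul_smul, toR_smul, map_smul])
  map_add' := fun m m' => co_ext fun a => by
    rw [add_ev, mkCo_ev, mkCo_ev, mkCo_ev, smul_add, toR_add, map_add]
  map_smul' := fun a m => co_ext fun b => by
    rw [RingHom.id_apply, smul_ev, mkCo_ev, mkCo_ev, mul_smul]

theorem adj_ev {M : Type u} [AddCommGroup M] [Module A M] (f : Res ι M →ₗ[R] N) (m : M) (a : A) :
    ev (adj f m) a = f (toR ι (a • m)) := rfl

variable (ι N) in
/-- Evaluation at one. -/
def ev1 : Res ι (CoinducedModule ι N) →ₗ[R] N where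
  toFun := fun φ => ev (ofR φ) 1
  map_add' := fun φ ψ => rfl
  map_smul' := fun r φ => by
    rw [ofR_smul, smul_ev, one_mul, ← mul_one (ι r), ev_smul, RingHom.id_apply]

theorem ev1_apply (φ : Res ι (CoinducedModule ι N)) : ev1 ι N φ = ev (ofR φ) 1 := rfl

end Coind

/-- Frobenius data. -/
structure FD (ι : R →+* A) where
  τ : A →+ R
  n : ℕ
  x : Fin n → A
  y : Fin n → A
  l : ∀ (r : R) (a : A), τ (ι r * a) = r * τ a
  r : ∀ (a : A) (r : R), τ (a * ι r) = τ a * r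
  h1 : ∀ a : A, ∑ i, x i * ι (τ (y i * a)) = a
  h2 : ∀ a : A, ∑ i, ι (τ (a * x i)) * y i = a

variable {ι : R →+* A} (F : FD ι)

namespace FD

section
variable {N L : Type u} [AddCommGroup N] [Module R N] [AddCommGroup L] [Module R L]

/-- The unit of the second adjunction. -/
def T (m : N) : CoinducedModule ι N :=
  mkCo (fun b => F.τ b • m) (fun a b => by rw [map_add, add_smul])
    (fun r a => by rw [F.l, mul_smul])

theorem T_ev (m : N) (a : A) : ev (F.T m) a = F.τ a • m := rfl

theorem T_add (m m' : N) : F.T (m + m') = F.T m + F.T m' :=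
  co_ext fun a => by rw [add_ev, T_ev, T_ev, T_ev, smul_add]

theorem T_smul (r : R) (m : N) : F.T (r • m) = ι r • F.T m :=
  co_ext fun a => by rw [smul_ev, T_ev, T_ev, F.r, mul_smul]

/-- The unit of the second adjunction as a linear map. -/
def t (N : Type u) [AddCommGroup N] [Module R N] : N →ₗ[R] Res ι (CoinducedModule ι N) where
  toFun := fun m => toR ι (F.T m)
  map_add' := fun m m' => by rw [T_add, toR_add]
  map_smul' := fun r m => by rw [T_smul, toR_smul, RingHom.id_apply]

theorem ofR_t (m : N) : ofR (F.t N m) = F.T m := rfl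

theorem sum_T (φ : CoinducedModule ι N) :
    ∑ i, F.x i • F.T (ev φ (F.y i)) = φ := by
  apply co_ext
  intro a
  rw [sum_ev]
  conv_rhs => rw [← F.h2 a, ev_sum]
  refine Finset.sum_congr rfl fun i _ => ?_
  rw [smul_ev, T_ev, ev_smul]

/-- The second adjunction. -/
def H {X : Type u} [AddCommGroup X] [Module A X] (h : N →ₗ[R] Res ι X) :
    CoinducedModule ι N →ₗ[A] X where
  toFun := fun φ => ∑ i, F.x i • ofR (h (ev φ (F.y i)))
  map_add' := fun φ ψ => by
    rw [← Finset.sum_add_distrib]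
    refine Finset.sum_congr rfl fun i _ => ?_
    rw [add_ev, ← smul_add, map_add, ofR_add]
  map_smul' := fun a φ => by
    have e1 : ∀ j, ofR (h (ev (a • φ) (F.y j)))
        = ∑ i, ι (F.τ (F.y j * (a * F.x i))) • ofR (h (ev φ (F.y i))) := by
      intro j
      rw [smul_ev]
      conv_lhs => rw [← F.h2 (F.y j * a), ev_sum, map_sum, ofR_sum]
      refine Finset.sum_congr rfl fun i _ => ?_
      rw [ev_smul, mul_assoc, map_smul, ofR_smul]
    simp only [e1, RingHom.id_apply, Finset.smul_sum]
    rw [Finset.sum_comm]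
    refine Finset.sum_congr rfl fun i _ => ?_
    conv_rhs => rw [smul_smul, ← F.h1 (a * F.x i), Finset.sum_smul]
    simp only [mul_smul]

theorem H_apply {X : Type u} [AddCommGroup X] [Module A X] (h : N →ₗ[R] Res ι X)
    (φ : CoinducedModule ι N) : F.H h φ = ∑ i, F.x i • ofR (h (ev φ (F.y i))) := rfl

theorem H_T {X : Type u} [AddCommGroup X] [Module A X] (h : N →ₗ[R] Res ι X) (n : N) :
    F.H h (F.T n) = ofR (h n) := by
  rw [H_apply]
  conv_rhs => rw [← one_smul A (ofR (h n)), ← F.h1 1, Finset.sum_smul]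
  refine Finset.sum_congr rfl fun i _ => ?_
  rw [T_ev, mul_smul, mul_one, map_smul, ofR_smul]

/-- `A`-linear maps from a coinduced module are determined by the composite with `t`. -/
theorem hom_ext {X : Type u} [AddCommGroup X] [Module A X] (f g : CoinducedModule ι N →ₗ[A] X)
    (h : ∀ n, f (F.T n) = g (F.T n)) (φ : CoinducedModule ι N) : f φ = g φ := by
  rw [← F.sum_T φ, map_sum, map_sum]
  refine Finset.sum_congr rfl fun i _ => ?_
  rw [map_smul, map_smul, h]

theorem cmap_T (f : N →ₗ[R] L) (n : N) : cmap ι f (F.T n) = F.T (f n) :=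
  co_ext fun a => by rw [cmap_ev, T_ev, T_ev, map_smul]

end

theorem SES_co (F : FD ι) {K N C : Type u} [AddCommGroup K] [AddCommGroup N] [AddCommGroup C]
    [Module R K] [Module R N] [Module R C] {f : K →ₗ[R] N} {g : N →ₗ[R] C} (h : SES f g) :
    SES (cmap ι f) (cmap ι g) := by
  refine ⟨?_, ?_, ?_, ?_⟩
  · intro φ hφ
    apply co_ext
    intro a
    have : f (ev φ a) = 0 := congrArg (fun ψ => ev ψ a) hφ
    exact h.inj _ this
  · intro φ
    choose c hc using fun i => h.surj (ev φ (F.y i))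
    refine ⟨∑ i, F.x i • F.T (c i), ?_⟩
    rw [map_sum]
    conv_rhs => rw [← F.sum_T φ]
    refine Finset.sum_congr rfl fun i _ => ?_
    rw [map_smul, cmap_T, hc]
  · intro φ
    exact co_ext fun a => h.zero _
  · intro φ hφ
    choose c hc using fun i => h.ex (ev φ (F.y i)) (congrArg (fun ψ => ev ψ (F.y i)) hφ)
    refine ⟨∑ i, F.x i • F.T (c i), ?_⟩
    rw [map_sum]
    conv_rhs => rw [← F.sum_T φ]
    refine Finset.sum_congr rfl fun i _ => ?_
    rw [map_smul, cmap_T, hc]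

theorem inj_co {I : Type u} [AddCommGroup I] [Module R I] (hI : Module.Injective R I) :
    Module.Injective A (CoinducedModule ι I) := by
  constructor
  intro X Y _ _ _ _ f hf g
  obtain ⟨h, hh⟩ := hI.out (rmap ι f) hf ((ev1 ι I).comp (rmap ι g))
  refine ⟨adj h, fun x => co_ext fun a => ?_⟩
  rw [adj_ev, ← map_smul]
  refine (hh (toR ι (a • x))).trans ?_
  rw [LinearMap.comp_apply, ev1_apply, ofR_rmap, ofR_toR, map_smul, smul_ev, one_mul]

theorem inj_res (F : FD ι) {I : Type u} [AddCommGroup I] [Module A I] (hI : Module.Injective A I) :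
    Module.Injective R (Res ι I) := by
  constructor
  intro X Y _ _ _ _ f hf g
  obtain ⟨h, hh⟩ := hI.out (cmap ι f) (by
    intro φ ψ e
    exact co_ext fun a => hf (congrArg (fun z => ev z a) e)) (F.H g)
  refine ⟨(rmap ι h).comp (F.t Y), fun x => ?_⟩
  apply ofR_inj
  rw [LinearMap.comp_apply, ofR_rmap, ofR_t, ← cmap_T, hh, H_T]

theorem Rel_res (F : FD ι) {K C : Type u} [AddCommGroup K] [AddCommGroup C]
    [Module A K] [Module A C] : Rel A K C → Rel R (Res ι K) (Res ι C) := by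
  rintro ⟨I, f, g, hI, s⟩
  exact Rel.mk (rmap ι f) (rmap ι g) (F.inj_res hI) (s.res ι)

theorem Rel_co (F : FD ι) {K C : Type u} [AddCommGroup K] [AddCommGroup C]
    [Module R K] [Module R C] : Rel R K C →
      Rel A (CoinducedModule ι K) (CoinducedModule ι C) := by
  rintro ⟨I, f, g, hI, s⟩
  exact Rel.mk (cmap ι f) (cmap ι g) (inj_co hI) (F.SES_co s)

theorem GI_res (F : FD ι) {M : Type u} [AddCommGroup M] [Module A M] (h : GI A M) : GI R (Res ι M) := by
  refine ⟨fun N => ∃ M : ModuleCat.{u} A, GI A M ∧ N = ModuleCat.of R (Res ι M), ⟨?_, ?_, ?_⟩,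
    ModuleCat.of A M, h, rfl⟩
  · rintro _ ⟨M, h, rfl⟩
    obtain ⟨C, hC, I, f, g, hI, s⟩ := GI.closed.c _ h
    refine E1_of_ses _ _ (s.res ι) (F.inj_res hI) ?_
    intro Q _ _ hQ u
    obtain ⟨v, hv⟩ := GI.closed.a _ h _ _ (CoinducedModule ι Q) f g s (inj_co hQ) (F.H u)
    refine ⟨(rmap ι v).comp (F.t Q), fun q => ?_⟩
    apply ofR_inj
    rw [ofR_rmap, LinearMap.comp_apply, ofR_rmap, ofR_t]
    exact (hv (F.T q)).trans (F.H_T u q)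
  · rintro _ ⟨M, h, rfl⟩
    obtain ⟨K, hK, r⟩ := GI.closed.b _ h
    have r' := F.Rel_res r
    exact ⟨_, ⟨K, hK, rfl⟩, r'⟩
  · rintro _ ⟨M, h, rfl⟩
    obtain ⟨K, hK, r⟩ := GI.closed.c _ h
    have r' := F.Rel_res r
    exact ⟨_, ⟨K, hK, rfl⟩, r'⟩

theorem GI_co (F : FD ι) {N : Type u} [AddCommGroup N] [Module R N] (h : GI R N) :
    GI A (CoinducedModule ι N) := by
  refine ⟨fun M => ∃ N : ModuleCat.{u} R, GI R N ∧ M = ModuleCat.of A (CoinducedModule ι N),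
    ⟨?_, ?_, ?_⟩, ModuleCat.of R N, h, rfl⟩
  · rintro _ ⟨M, h, rfl⟩
    obtain ⟨C, hC, I, f, g, hI, s⟩ := GI.closed.c _ h
    refine E1_of_ses _ _ (F.SES_co s) (inj_co hI) ?_
    intro Q _ _ hQ u
    obtain ⟨v, hv⟩ := GI.closed.a _ h _ _ (Res ι Q) f g s (F.inj_res hQ)
      ((ev1 ι C).comp (rmap ι u))
    refine ⟨adj v, fun q => co_ext fun a => ?_⟩
    rw [cmap_ev, adj_ev, hv, LinearMap.comp_apply, ev1_apply, ofR_rmap, ofR_toR,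
      map_smul, smul_ev, one_mul]
  · rintro _ ⟨M, h, rfl⟩
    obtain ⟨K, hK, r⟩ := GI.closed.b _ h
    have r' := F.Rel_co r
    exact ⟨_, ⟨K, hK, rfl⟩, r'⟩
  · rintro _ ⟨M, h, rfl⟩
    obtain ⟨K, hK, r⟩ := GI.closed.c _ h
    have r' := F.Rel_co r
    exact ⟨_, ⟨K, hK, rfl⟩, r'⟩

theorem adj_id_ev {M : Type u} [AddCommGroup M] [Module A M] (m : M) :
    ofR (ev (adj (ι := ι) (LinearMap.id : Res ι M →ₗ[R] Res ι M) m) 1) = m := one_smul A m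

/-- `M` is an `R`-retract of `Hom_R(A, M)`. -/
theorem GI_of_co {M : Type u} [AddCommGroup M] [Module A M]
    (h : GI R (Res ι (CoinducedModule ι (Res ι M)))) : GI R (Res ι M) :=
  GI.retr (rmap ι (adj (LinearMap.id : Res ι M →ₗ[R] Res ι M))) (ev1 ι (Res ι M))
    (fun m => ofR_inj (adj_id_ev (ofR m))) h

theorem GI_up (F : FD ι) {M : Type u} [AddCommGroup M] [Module A M] (h : GI R (Res ι M)) : GI A M := by
  refine ⟨fun M => GI R (Res ι M), ⟨?_, ?_, ?_⟩, h⟩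
  · intro M h X Y Q _ _ _ _ _ _ f g s hQ u
    -- `Q` is a retract of `Hom_R(A, Q)`
    have hadj : Function.Injective (adj (ι := ι) (LinearMap.id : Res ι Q →ₗ[R] Res ι Q)) := by
      intro a b e
      rw [← adj_id_ev (ι := ι) a, e, adj_id_ev]
    obtain ⟨ρ, hρ⟩ := hQ.out (adj (ι := ι) (LinearMap.id : Res ι Q →ₗ[R] Res ι Q)) hadj
      LinearMap.id
    obtain ⟨v, hv⟩ := GI.closed.a (ModuleCat.of R (Res ι M)) h _ _ (Res ι Q) _ _ (s.res ι)
      (F.inj_res hQ) ((rmap ι (u.comp ρ)).comp (F.t (Res ι Q)))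
    refine ⟨(F.H v).comp (adj LinearMap.id), fun q => ?_⟩
    have := F.hom_ext (g.comp (F.H v)) (u.comp ρ) (fun n => by
      rw [LinearMap.comp_apply, H_T]
      exact hv n) (adj LinearMap.id q)
    refine this.trans ?_
    rw [LinearMap.comp_apply, hρ]; rfl
  · intro M h
    obtain ⟨K, hK, I, f, g, hI, s⟩ := GI.closed.b (ModuleCat.of R (Res ι M)) h
    let c : CoinducedModule ι (Res ι M) →ₗ[A] M := F.H LinearMap.id
    have hc : ∀ m : Res ι M, c (F.T m) = ofR m := fun m => F.H_T LinearMap.id m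
    have s' := F.SES_co s
    let p : CoinducedModule ι I →ₗ[A] M := c.comp (cmap ι g)
    have hker : GI R (Res ι (LinearMap.ker c)) := by
      obtain ⟨q, hq⟩ := factor_inj (rmap ι (LinearMap.ker c).subtype)
        (fun a b e => Subtype.ext e)
        (LinearMap.id - (F.t (Res ι M)).comp (rmap ι c)) (by
          intro φ
          refine ⟨toR ι ⟨ofR φ - F.T (toR ι (c (ofR φ))), ?_⟩, rfl⟩
          rw [LinearMap.mem_ker, map_sub, hc, ofR_toR, sub_self])
      refine GI.retr (rmap ι (LinearMap.ker c).subtype) q ?_ (F.GI_res (F.GI_co h))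
      intro φ
      have hφ' : c (ofR φ).1 = 0 := (ofR φ).2
      have hi : Function.Injective (rmap ι (LinearMap.ker c).subtype) :=
        fun a b e => Subtype.ext e
      apply hi
      rw [hq, LinearMap.sub_apply, LinearMap.id_apply, LinearMap.comp_apply]
      have : rmap ι c (rmap ι (LinearMap.ker c).subtype φ) = 0 := hφ'
      rw [this, map_zero, sub_zero]
    let l : CoinducedModule ι K →ₗ[A] LinearMap.ker p := (cmap ι f).codRestrict _ (by
      intro k
      show c (cmap ι g (cmap ι f k)) = 0
      rw [s'.zero, map_zero])
    let k : LinearMap.ker p →ₗ[A] LinearMap.ker c :=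
      ((cmap ι g).comp (LinearMap.ker p).subtype).codRestrict _ (fun z => z.2)
    have hs : SES l k := by
      refine ⟨?_, ?_, ?_, ?_⟩
      · intro z hz
        exact s'.inj _ (congrArg Subtype.val hz)
      · rintro ⟨n, hn⟩
        obtain ⟨x, rfl⟩ := s'.surj n
        exact ⟨⟨x, hn⟩, rfl⟩
      · intro z
        exact Subtype.ext (s'.zero z)
      · rintro ⟨x, hx⟩ hz
        obtain ⟨k, rfl⟩ := s'.ex x (congrArg Subtype.val hz)
        exact ⟨k, rfl⟩
    refine ⟨ModuleCat.of A (LinearMap.ker p), GI.ext (hs.res ι) (F.GI_res (F.GI_co hK)) hker,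
      ModuleCat.of A (CoinducedModule ι I), (LinearMap.ker p).subtype, p, inj_co hI, ?_⟩
    refine ⟨fun z hz => Subtype.ext hz, ?_, fun z => z.2, fun z hz => ⟨⟨z, hz⟩, rfl⟩⟩
    intro m
    obtain ⟨x, hx⟩ := s'.surj (F.T (toR ι m))
    exact ⟨x, by rw [LinearMap.comp_apply, hx]; exact hc (toR ι m)⟩
  · intro M h
    obtain ⟨C, hC, J, c, d, hJ, s⟩ := GI.closed.c (ModuleCat.of R (Res ι M)) h
    have s' := F.SES_co s
    let i : M →ₗ[A] CoinducedModule ι (Res ι M) := adj LinearMap.id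
    have hi : ∀ m, ofR (ev (i m) 1) = m := fun m => adj_id_ev m
    let V := LinearMap.range i
    have hV : ∀ z, V.mkQ z = 0 ↔ ∃ n, i n = z := by
      intro z
      rw [Submodule.mkQ_apply, Submodule.Quotient.mk_eq_zero]; rfl
    let p : M →ₗ[A] CoinducedModule ι J := (cmap ι c).comp i
    let W := LinearMap.range p
    have hW : ∀ z, W.mkQ z = 0 ↔ ∃ n, p n = z := by
      intro z
      rw [Submodule.mkQ_apply, Submodule.Quotient.mk_eq_zero]; rfl
    have hcok : GI R (Res ι (CoinducedModule ι (Res ι M) ⧸ V)) := by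
      obtain ⟨q, hq⟩ := factor_surj (rmap ι V.mkQ) V.mkQ_surjective
        (LinearMap.id - (rmap ι i).comp (ev1 ι (Res ι M))) (by
          intro z hz
          obtain ⟨m, rfl⟩ := (hV z).1 hz
          show i m - i (ofR (ev (i m) 1)) = 0
          rw [hi, sub_self])
      refine GI.retr q (rmap ι V.mkQ) ?_ (F.GI_res (F.GI_co h))
      intro z
      obtain ⟨z, rfl⟩ := V.mkQ_surjective z
      refine (congrArg (rmap ι V.mkQ) (hq z)).trans ?_
      show V.mkQ (z - i (ofR (ev z 1))) = V.mkQ z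
      rw [map_sub, (hV (i (ofR (ev z 1)))).2 ⟨_, rfl⟩, sub_zero]
    obtain ⟨k, hk⟩ := factor_surj V.mkQ V.mkQ_surjective (W.mkQ.comp (cmap ι c)) (by
      intro z hz
      obtain ⟨m, rfl⟩ := (hV z).1 hz
      exact (hW _).2 ⟨m, rfl⟩)
    obtain ⟨l, hl⟩ := factor_surj W.mkQ W.mkQ_surjective (cmap ι d) (by
      intro z hz
      obtain ⟨n, rfl⟩ := (hW z).1 hz
      exact s'.zero _)
    have hs : SES k l := by
      refine ⟨?_, ?_, ?_, ?_⟩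
      · intro z hz
        obtain ⟨z, rfl⟩ := V.mkQ_surjective z
        rw [hk] at hz
        obtain ⟨m, hm⟩ := (hW _).1 hz
        exact (hV z).2 ⟨m, s'.injective hm⟩
      · intro z
        obtain ⟨y, rfl⟩ := s'.surj z
        exact ⟨W.mkQ y, hl y⟩
      · intro z
        obtain ⟨z, rfl⟩ := V.mkQ_surjective z
        rw [hk, LinearMap.comp_apply, hl, s'.zero]
      · intro z hz
        obtain ⟨y, rfl⟩ := W.mkQ_surjective z
        rw [hl] at hz
        obtain ⟨n, rfl⟩ := s'.ex y hz
        exact ⟨V.mkQ n, hk n⟩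
    refine ⟨ModuleCat.of A (CoinducedModule ι J ⧸ W),
      GI.ext (hs.res ι) hcok (F.GI_res (F.GI_co hC)),
      ModuleCat.of A (CoinducedModule ι J), p, W.mkQ, inj_co hJ, ?_⟩
    refine ⟨fun m hm => ?_, W.mkQ_surjective, fun z => (hW _).2 ⟨z, rfl⟩,
          fun z hz => (hW z).1 hz⟩
    have := s'.inj _ hm
    rw [← hi m, this]; rfl

/-- The isomorphism between induction and coinduction. -/
theorem iso (F : FD ι) (N : Type u) [AddCommGroup N] [Module R N] :
    Nonempty (ExtendedTensor ι N ≃ₗ[A] CoinducedModule ι N) := by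
  let S : Submodule A (N →₀ A) := Submodule.span A
    ({x : N →₀ A | ∃ n n' : N,
        x = Finsupp.single (n + n') 1 - Finsupp.single n 1 - Finsupp.single n' 1} ∪
     {x : N →₀ A | ∃ (r : R) (n : N),
        x = Finsupp.single (r • n) 1 - Finsupp.single n (ι r)})
  let g0 : (N →₀ A) →ₗ[A] CoinducedModule ι N :=
    Finsupp.linearCombination A (fun n => F.T n)
  have hg0 : ∀ n a, g0 (Finsupp.single n a) = a • F.T n := fun n a =>
    Finsupp.linearCombination_single A a n
  have hle : S ≤ LinearMap.ker g0 := by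
    refine Submodule.span_le.2 ?_
    rintro z (⟨n, n', rfl⟩ | ⟨r, n, rfl⟩)
    · rw [SetLike.mem_coe, LinearMap.mem_ker, map_sub, map_sub, hg0, hg0, hg0]
      simp only [one_smul]
      rw [sub_sub, sub_eq_zero]
      exact F.T_add n n'
    · rw [SetLike.mem_coe, LinearMap.mem_ker, map_sub, hg0, hg0, one_smul, sub_eq_zero]
      exact F.T_smul r n
  let g : ((N →₀ A) ⧸ S) →ₗ[A] CoinducedModule ι N := S.liftQ g0 hle
  let h : N →ₗ[R] Res ι ((N →₀ A) ⧸ S) :=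
    { toFun := fun n => toR ι (S.mkQ (Finsupp.single n 1))
      map_add' := fun n n' => by
        show S.mkQ _ = S.mkQ _ + S.mkQ _
        rw [← sub_eq_zero, ← sub_sub, ← map_sub, ← map_sub, Submodule.mkQ_apply,
          Submodule.Quotient.mk_eq_zero]
        exact Submodule.subset_span (Or.inl ⟨n, n', rfl⟩)
      map_smul' := fun r n => by
        show S.mkQ _ = ι r • S.mkQ _
        rw [← sub_eq_zero, ← map_smul, ← map_sub, Submodule.mkQ_apply,
          Submodule.Quotient.mk_eq_zero, Finsupp.smul_single, smul_eq_mul, mul_one]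
        exact Submodule.subset_span (Or.inr ⟨r, n, rfl⟩) }
  have hh : ∀ n, ofR (h n) = S.mkQ (Finsupp.single n 1) := fun n => rfl
  refine ⟨LinearEquiv.ofLinearMap g (F.H h) ?_ ?_⟩
  · apply LinearMap.ext
    intro φ
    refine F.hom_ext (g.comp (F.H h)) LinearMap.id (fun n => ?_) φ
    rw [LinearMap.comp_apply, H_T, hh]
    exact (hg0 n 1).trans (one_smul _ _)
  · apply Submodule.linearMap_qext
    apply Finsupp.lhom_ext
    intro n a
    show F.H h (g0 (Finsupp.single n a)) = S.mkQ (Finsupp.single n a)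
    rw [hg0, map_smul, H_T, hh]
    refine (map_smul S.mkQ a _).symm.trans ?_
    rw [Finsupp.smul_single, smul_eq_mul, mul_one]

end FD

end Ext

end FrobGI

section Statement

variable {R A : Type u} [Ring R] [Ring A]

theorem stmt4 (ι : R →+* A) (hF : IsFrobeniusExtension ι)
    (M : Type u) [AddCommGroup M] [Module A M] :
    (IsGorensteinInjective A (ModuleCat.of A M) ↔
      IsGorensteinInjective R (@ModuleCat.of R _ M _ (Module.compHom M ι))) ∧
    (IsGorensteinInjective R (@ModuleCat.of R _ M _ (Module.compHom M ι)) ↔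
      (IsGorensteinInjective A
          (ModuleCat.of A (@ExtendedTensor R A _ _ ι M _ (Module.compHom M ι))) ∧
        IsGorensteinInjective A
          (ModuleCat.of A (@CoinducedModule R A _ _ ι M _ (Module.compHom M ι))))) := by
  obtain ⟨_, τ, n, x, y, l, r, h1, h2⟩ := hF
  let F : FrobGI.FD ι := ⟨τ, n, x, y, l, r, h1, h2⟩
  change (IsGorensteinInjective A (ModuleCat.of A M) ↔
      IsGorensteinInjective R (ModuleCat.of R (FrobGI.Res ι M))) ∧
    (IsGorensteinInjective R (ModuleCat.of R (FrobGI.Res ι M)) ↔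
      (IsGorensteinInjective A (ModuleCat.of A (ExtendedTensor ι (FrobGI.Res ι M))) ∧
        IsGorensteinInjective A (ModuleCat.of A (CoinducedModule ι (FrobGI.Res ι M)))))
  simp only [FrobGI.gi_iff]
  refine ⟨⟨F.GI_res, F.GI_up⟩, fun h => ⟨?_, F.GI_co h⟩, fun h => ?_⟩
  · obtain ⟨e⟩ := F.iso (FrobGI.Res ι M)
    exact FrobGI.GI.retr e.toLinearMap e.symm.toLinearMap e.symm_apply_apply (F.GI_co h)
  · exact FrobGI.FD.GI_of_co (F.GI_res h.2)

end Statement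
end
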